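/- arXiv:2102.04994 — 2 statements merged into one kernel-verified Lean document; each statement's English description precedes it below -/
import Mathlib

section
/- For every graph H and every real ε > 0, there exists a real δ > 0 such that for every H-free graph G, there exists X ⊆ V(G) with |X| ≥ δ|G| such that one of G[X], Ḡ[X] has maximum degree at most εδ|G| (where Ḡ denotes the complement of G). -/
open SimpleGraph

/-- The independence (stable set) number of a graph: the clique number of the complement. -/
noncomputable def alphaNum {V : Type*} (G : SimpleGraph V) : ℕ := Gᶜ.cliqueNum

/-- The clique number of a graph. -/
noncomputable def omegaNum {V : Type*} (G : SimpleGraph V) : ℕ := G.cliqueNum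

/-- κ(G) = α(G)·ω(G). -/
noncomputable def kappaNum {V : Type*} (G : SimpleGraph V) : ℕ := alphaNum G * omegaNum G

open Classical in
/-- The number of neighbours of `v` in `Y`, as a real number. -/
noncomputable def degIn {V : Type*} (G : SimpleGraph V) (Y : Finset V) (v : V) : ℝ :=
  ∑ w ∈ Y, if G.Adj v w then 1 else 0

/-- The number of pairs `(u, v) ∈ X × Y` with `u` adjacent to `v`, as a real number. -/
noncomputable def edgeCount {V : Type*} (G : SimpleGraph V) (X Y : Finset V) : ℝ :=
  ∑ u ∈ X, degIn G Y u

section Counting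

variable {V : Type*} (G : SimpleGraph V)

lemma degIn_eq_card (Y : Finset V) (v : V) [DecidablePred (G.Adj v)] :
    degIn G Y v = ((Y.filter (G.Adj v)).card : ℝ) := by
  rw [degIn, Finset.natCast_card_filter]
  congr!

lemma degIn_nonneg (Y : Finset V) (v : V) : 0 ≤ degIn G Y v := by
  classical
  rw [degIn_eq_card]
  positivity

lemma degIn_mono {X Y : Finset V} (h : X ⊆ Y) (v : V) : degIn G X v ≤ degIn G Y v := by
  classical
  rw [degIn_eq_card, degIn_eq_card]
  exact_mod_cast Finset.card_le_card (Finset.filter_subset_filter _ h)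

lemma degIn_le_card (Y : Finset V) (v : V) : degIn G Y v ≤ Y.card := by
  classical
  rw [degIn_eq_card]
  exact_mod_cast Finset.card_filter_le _ _

lemma edgeCount_comm (X Y : Finset V) : edgeCount G X Y = edgeCount G Y X := by
  unfold edgeCount degIn
  rw [Finset.sum_comm]
  exact Finset.sum_congr rfl fun _ _ => Finset.sum_congr rfl fun _ _ => by
    congr 1
    exact propext (G.adj_comm _ _)

lemma edgeCount_le_of_degIn_le {X Y : Finset V} {d : ℝ} (h : ∀ v ∈ X, degIn G Y v ≤ d) :
    edgeCount G X Y ≤ X.card * d := by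
  simpa [edgeCount] using Finset.sum_le_card_nsmul X _ d h

lemma edgeCount_le_card_sq (X : Finset V) : edgeCount G X X ≤ (X.card : ℝ) ^ 2 := by
  rw [sq]
  exact edgeCount_le_of_degIn_le G fun v _ => degIn_le_card G X v

lemma edgeCount_union [DecidableEq V] {X Y : Finset V} (h : Disjoint X Y) :
    edgeCount G (X ∪ Y) (X ∪ Y) =
      edgeCount G X X + edgeCount G Y Y + 2 * edgeCount G X Y := by
  have key : edgeCount G (X ∪ Y) (X ∪ Y) =
      edgeCount G X X + edgeCount G X Y + (edgeCount G Y X + edgeCount G Y Y) := by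
    simp only [edgeCount, degIn, Finset.sum_union h, Finset.sum_add_distrib]
  rw [key, edgeCount_comm G Y X]
  ring

/-- At most half of the vertices of `B` have more than twice the average degree to `A`. -/
lemma card_filter_degIn_ge [DecidableEq V] {A B : Finset V} {d : ℝ} (hd : 0 < d)
    (h : edgeCount G B A ≤ B.card * d) :
    (B.card : ℝ) / 2 ≤ (B.filter fun v => degIn G A v ≤ 2 * d).card := by
  have hsplit : ((B.filter fun v => degIn G A v ≤ 2 * d).card : ℝ) +
      (B.filter fun v => ¬ degIn G A v ≤ 2 * d).card = B.card := by
    exact_mod_cast Finset.card_filter_add_card_filter_not _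
  have hbad : ((B.filter fun v => ¬ degIn G A v ≤ 2 * d).card : ℝ) * (2 * d) ≤
      edgeCount G B A := by
    calc _ ≤ ∑ v ∈ B.filter (fun v => ¬ degIn G A v ≤ 2 * d), degIn G A v := by
          rw [← nsmul_eq_mul]
          refine Finset.card_nsmul_le_sum _ _ _ fun v hv => ?_
          exact (not_le.mp (Finset.mem_filter.mp hv).2).le
      _ ≤ _ := Finset.sum_le_sum_of_subset_of_nonneg (Finset.filter_subset _ _)
          fun v _ _ => degIn_nonneg G A v
  have : ((B.filter fun v => ¬ degIn G A v ≤ 2 * d).card : ℝ) * 2 ≤ B.card := by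
    refine le_of_mul_le_mul_right ?_ hd
    linarith
  linarith

/-- Removing a vertex of maximum degree does not increase the edge density. -/
lemma exists_erase_edgeCount_le [DecidableEq V] {X : Finset V} (hX : X.Nonempty) {a : ℝ}
    (ha : 0 ≤ a) (h : edgeCount G X X ≤ a * (X.card : ℝ) ^ 2) :
    ∃ v ∈ X, edgeCount G (X.erase v) (X.erase v) ≤ a * ((X.card : ℝ) - 1) ^ 2 := by
  have hpos : (0 : ℝ) < X.card := by exact_mod_cast hX.card_pos
  obtain ⟨v, hv, hdeg⟩ : ∃ v ∈ X, edgeCount G X X / X.card ≤ degIn G X v := by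
    refine Finset.exists_le_of_sum_le hX ?_
    rw [Finset.sum_const, nsmul_eq_mul, mul_div_cancel₀ _ hpos.ne']
    exact le_rfl
  refine ⟨v, hv, ?_⟩
  have hself : edgeCount G {v} {v} = 0 := by simp [edgeCount, degIn]
  have hdis : Disjoint {v} (X.erase v) := by simp
  have hins : {v} ∪ X.erase v = X := by
    rw [← Finset.insert_eq, Finset.insert_erase hv]
  have hsplit := edgeCount_union G hdis
  have hcross : edgeCount G {v} (X.erase v) = degIn G X v := by
    conv_rhs => rw [← Finset.insert_erase hv]
    simp only [edgeCount, degIn, Finset.sum_singleton,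
      Finset.sum_insert (Finset.notMem_erase v X), G.irrefl, if_false, zero_add]
  rw [hins, hself, hcross] at hsplit
  rw [div_le_iff₀ hpos] at hdeg
  rcases le_or_gt (X.card : ℝ) 1 with hc | hc
  · have hle : X.card ≤ 1 := by exact_mod_cast hc
    have hempty : X.erase v = ∅ := by
      rw [← Finset.card_eq_zero, Finset.card_erase_of_mem hv]
      omega
    rw [hempty]
    simp only [edgeCount, Finset.sum_empty]
    positivity
  · have hc2 : (2 : ℝ) ≤ X.card := by
      have : 1 < X.card := by exact_mod_cast hc
      exact_mod_cast this
    have hmul : edgeCount G (X.erase v) (X.erase v) * X.card ≤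
        edgeCount G X X * (X.card - 2) := by nlinarith
    have hmul' : edgeCount G X X * ((X.card : ℝ) - 2) ≤
        a * (X.card : ℝ) ^ 2 * (X.card - 2) :=
      mul_le_mul_of_nonneg_right h (by linarith)
    refine le_of_mul_le_mul_right ?_ hpos
    nlinarith [mul_nonneg ha hpos.le]

lemma exists_subset_card_eq_edgeCount_le {a : ℝ} (ha : 0 ≤ a) {X : Finset V}
    (h : edgeCount G X X ≤ a * (X.card : ℝ) ^ 2) {k : ℕ} (hk : k ≤ X.card) :
    ∃ Y ⊆ X, Y.card = k ∧ edgeCount G Y Y ≤ a * (k : ℝ) ^ 2 := by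
  classical
  induction hn : X.card - k generalizing X with
  | zero =>
    obtain rfl : X.card = k := by omega
    exact ⟨X, subset_rfl, rfl, h⟩
  | succ n ih =>
    obtain ⟨v, hv, hev⟩ := exists_erase_edgeCount_le G
      (Finset.card_pos.mp (by omega : 0 < X.card)) ha h
    have hcard := Finset.card_erase_add_one hv
    have hcast : ((X.erase v).card : ℝ) = X.card - 1 := by
      rw [← hcard]
      push_cast
      ring
    rw [← hcast] at hev
    obtain ⟨Y, hYX, hY⟩ := ih hev (by omega) (by omega)
    exact ⟨Y, hYX.trans (Finset.erase_subset _ _), hY⟩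

/-- If every vertex of `A` has low degree to `B`, then moderately sparse sets found inside `A`
and inside `B` combine to a sparser set. -/
lemma exists_sparse_of_sparse_pair [DecidableEq V] {a η t : ℝ} (hη : 0 < η) (hηa : 4 * η ≤ a)
    {k : ℕ} (hk : 0 < k) (D : Finset V → Prop)
    {A B : Finset V} (hAB : Disjoint A B) (hdeg : ∀ v ∈ A, degIn G B v ≤ η * B.card)
    (hA : t ≤ A.card) (hB : 2 * t ≤ B.card)
    (hfind : ∀ T : Finset V, t ≤ T.card → ∃ X ⊆ T, X.card = k ∧
      (edgeCount G X X ≤ 3 / 2 * a * (k : ℝ) ^ 2 ∨ D X)) :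
    ∃ X ⊆ A ∪ B, X.card = k ∧ (edgeCount G X X ≤ a * (k : ℝ) ^ 2 ∨ D X) := by
  obtain ⟨A', hA'A, hA'k, hA' | hA'⟩ := hfind A hA
  swap
  · exact ⟨A', hA'A.trans Finset.subset_union_left, hA'k, Or.inr hA'⟩
  have hkpos : (0 : ℝ) < k := by exact_mod_cast hk
  have hcross : edgeCount G B A' ≤ B.card * (η * k) := by
    rw [edgeCount_comm]
    refine (edgeCount_le_of_degIn_le G fun v hv => hdeg v (hA'A hv)).trans_eq ?_
    rw [hA'k]
    ring
  have hhalf := card_filter_degIn_ge G (mul_pos hη hkpos) hcross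
  obtain ⟨B', hB'B, hB'k, hB' | hB'⟩ :=
    hfind (B.filter fun v => degIn G A' v ≤ 2 * (η * k)) (by linarith)
  swap
  · exact ⟨B', (hB'B.trans (Finset.filter_subset _ _)).trans Finset.subset_union_right,
      hB'k, Or.inr hB'⟩
  have hB'sub : B' ⊆ B := hB'B.trans (Finset.filter_subset _ _)
  have hdis : Disjoint A' B' := Finset.disjoint_of_subset_left hA'A
    (Finset.disjoint_of_subset_right hB'sub hAB)
  have hcard : (A' ∪ B').card = 2 * k := by
    rw [Finset.card_union_of_disjoint hdis]
    omega
  have hcross' : edgeCount G A' B' ≤ k * (2 * (η * k)) := by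
    rw [edgeCount_comm, ← hB'k]
    refine edgeCount_le_of_degIn_le G fun v hv => ?_
    rw [hB'k]
    exact (Finset.mem_filter.mp (hB'B hv)).2
  have hunion : edgeCount G (A' ∪ B') (A' ∪ B') ≤ a * ((A' ∪ B').card : ℝ) ^ 2 := by
    rw [edgeCount_union G hdis, hcard]
    push_cast
    nlinarith [mul_le_mul_of_nonneg_right hηa (sq_nonneg (k : ℝ))]
  obtain ⟨Y, hY, hYk, hYe⟩ := exists_subset_card_eq_edgeCount_le G (by linarith) hunion
    (by omega : k ≤ (A' ∪ B').card)
  exact ⟨Y, hY.trans (Finset.union_subset_union hA'A hB'sub), hYk, Or.inl hYe⟩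

/-- A sparse set contains at least half of its vertices as a set of small maximum degree. -/
lemma exists_subset_degIn_le {a : ℝ} (ha : 0 < a) {X : Finset V} (hX : X.Nonempty)
    (h : edgeCount G X X ≤ a * (X.card : ℝ) ^ 2) :
    ∃ Y ⊆ X, (X.card : ℝ) / 2 ≤ Y.card ∧ ∀ v ∈ Y, degIn G Y v ≤ 2 * (a * X.card) := by
  classical
  have hpos : (0 : ℝ) < X.card := by exact_mod_cast hX.card_pos
  refine ⟨X.filter fun v => degIn G X v ≤ 2 * (a * X.card), Finset.filter_subset _ _,
    card_filter_degIn_ge G (mul_pos ha hpos) (by linarith), fun v hv => ?_⟩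
  exact (degIn_mono G (Finset.filter_subset _ _) v).trans (Finset.mem_filter.mp hv).2

end Counting

section Embedding

open Classical in
/-- The graph `G` if `i` and `j` are adjacent in `H`, and its complement otherwise. -/
noncomputable def matchingGraph {W V : Type*} (H : SimpleGraph W) (G : SimpleGraph V)
    (i j : W) : SimpleGraph V :=
  if H.Adj i j then G else Gᶜ

lemma matchingGraph_comm {W V : Type*} (H : SimpleGraph W) (G : SimpleGraph V) (i j : W) :
    matchingGraph H G i j = matchingGraph H G j i := by
  unfold matchingGraph
  congr 1
  exact propext (H.adj_comm i j)

/-- Greedy embedding: if no two large disjoint sets form a sparse or a co-sparse pair, then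
any family of sufficiently large disjoint sets contains a transversal copy of `H`. -/
lemma exists_transversal_of_no_sparse_pair {W V : Type*} (H : SimpleGraph W)
    (G : SimpleGraph V) {η m : ℝ} (hη : 0 < η) (hη1 : η ≤ 1) (hm : 0 < m) {K : ℕ}
    (S : Finset V)
    (hpair : ∀ i j : W, ∀ A ⊆ S, ∀ B ⊆ S, Disjoint A B → m ≤ A.card → m ≤ B.card →
      ¬ ∀ v ∈ A, degIn (matchingGraph H G i j) B v ≤ η * B.card)
    (R : Finset W) (hR : R.card ≤ K) (U : W → Finset V)
    (hUS : ∀ i ∈ R, U i ⊆ S)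
    (hdis : ∀ i ∈ R, ∀ j ∈ R, i ≠ j → Disjoint (U i) (U j))
    (hU : ∀ i ∈ R, (K : ℝ) * m ≤ (U i).card * η ^ R.card) (f₀ : W → V) :
    ∃ f : W → V, (∀ i ∈ R, f i ∈ U i) ∧
      ∀ i ∈ R, ∀ j ∈ R, i ≠ j → (matchingGraph H G i j).Adj (f i) (f j) := by
  classical
  induction R using Finset.induction_on generalizing U with
  | empty => exact ⟨f₀, by simp, by simp⟩
  | insert i R hi ih =>
    rw [Finset.card_insert_of_notMem hi] at hR hU
    have hη' : η ^ (R.card + 1) ≤ 1 := pow_le_one₀ hη.le hη1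
    have hbig : ∀ j ∈ insert i R, (K : ℝ) * m ≤ (U j).card := fun j hj =>
      (hU j hj).trans (mul_le_of_le_one_right (by positivity) hη')
    have hRK : ((R.card : ℝ) + 1) * m ≤ K * m :=
      mul_le_mul_of_nonneg_right (by exact_mod_cast hR) hm.le
    have hmR : 0 ≤ (R.card : ℝ) * m := by positivity
    have hne : ∀ j ∈ R, i ≠ j := fun j hj h => hi (h ▸ hj)
    let bad : W → Finset V := fun j =>
      (U i).filter fun v => degIn (matchingGraph H G i j) (U j) v ≤ η * (U j).card
    have hbad : ∀ j ∈ R, ((bad j).card : ℝ) ≤ m := by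
      intro j hj
      by_contra! hlt
      have hjU := hbig j (Finset.mem_insert_of_mem hj)
      refine hpair i j (bad j)
        ((Finset.filter_subset _ _).trans (hUS i (Finset.mem_insert_self _ _)))
        (U j) (hUS j (Finset.mem_insert_of_mem hj)) ?_ hlt.le (by linarith) fun v hv =>
        (Finset.mem_filter.mp hv).2
      exact Finset.disjoint_of_subset_left (Finset.filter_subset _ _)
        (hdis i (Finset.mem_insert_self _ _) j (Finset.mem_insert_of_mem hj) (hne j hj))
    have hcard : ((R.biUnion bad).card : ℝ) < (U i).card := by
      calc ((R.biUnion bad).card : ℝ) ≤ ∑ j ∈ R, ((bad j).card : ℝ) := by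
            exact_mod_cast Finset.card_biUnion_le
        _ ≤ R.card * m := by simpa using Finset.sum_le_card_nsmul R _ m hbad
        _ < (U i).card := by
            have := hbig i (Finset.mem_insert_self _ _)
            linarith
    obtain ⟨v, hv, hvbad⟩ := Finset.exists_mem_notMem_of_card_lt_card
      (by exact_mod_cast hcard : (R.biUnion bad).card < (U i).card)
    have hgood : ∀ j ∈ R, η * (U j).card < degIn (matchingGraph H G i j) (U j) v := by
      intro j hj
      by_contra! hle
      exact hvbad (Finset.mem_biUnion.mpr ⟨j, hj, Finset.mem_filter.mpr ⟨hv, hle⟩⟩)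
    obtain ⟨f, hfU, hfadj⟩ := ih (by omega)
      (fun j => (U j).filter ((matchingGraph H G i j).Adj v))
      (fun j hj => (Finset.filter_subset _ _).trans (hUS j (Finset.mem_insert_of_mem hj)))
      (fun j hj l hl hjl => Finset.disjoint_of_subset_left (Finset.filter_subset _ _)
        (Finset.disjoint_of_subset_right (Finset.filter_subset _ _)
          (hdis j (Finset.mem_insert_of_mem hj) l (Finset.mem_insert_of_mem hl) hjl)))
      (fun j hj => by
        refine (hU j (Finset.mem_insert_of_mem hj)).trans ?_
        rw [← degIn_eq_card, pow_succ', ← mul_assoc, mul_comm _ η]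
        exact mul_le_mul_of_nonneg_right (hgood j hj).le (by positivity))
    have hadj : ∀ j ∈ R, (matchingGraph H G i j).Adj v (f j) := fun j hj =>
      (Finset.mem_filter.mp (hfU j hj)).2
    have hupd : ∀ j ∈ R, Function.update f i v j = f j := fun j hj =>
      Function.update_of_ne (hne j hj).symm _ _
    refine ⟨Function.update f i v, fun j hj => ?_, fun j hj l hl hjl => ?_⟩
    · rcases Finset.mem_insert.mp hj with rfl | hj
      · simpa using hv
      · rw [hupd j hj]
        exact (Finset.mem_filter.mp (hfU j hj)).1
    · rcases Finset.mem_insert.mp hj with rfl | hjR <;>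
        rcases Finset.mem_insert.mp hl with rfl | hlR
      · exact absurd rfl hjl
      · rw [hupd l hlR, Function.update_self]
        exact hadj l hlR
      · rw [hupd j hjR, Function.update_self, matchingGraph_comm]
        exact (hadj j hjR).symm
      · rw [hupd j hjR, hupd l hlR]
        exact hfadj j hjR l hlR hjl

lemma exists_disjoint_subsets {W V : Type*} [Fintype W] {S : Finset V} {q : ℕ}
    (h : Fintype.card W * q ≤ S.card) :
    ∃ U : W → Finset V, (∀ i, U i ⊆ S) ∧ (∀ i, (U i).card = q) ∧
      ∀ i j, i ≠ j → Disjoint (U i) (U j) := by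
  classical
  obtain ⟨g⟩ : Nonempty (W × Fin q ↪ S) :=
    Function.Embedding.nonempty_of_card_le (by simpa using h)
  refine ⟨fun i => Finset.univ.image fun x : Fin q => (g (i, x) : V), fun i => ?_,
    fun i => ?_, fun i j hij => ?_⟩
  · intro v hv
    obtain ⟨x, -, rfl⟩ := Finset.mem_image.mp hv
    exact (g (i, x)).2
  · rw [Finset.card_image_of_injective, Finset.card_univ, Fintype.card_fin]
    intro x y hxy
    simpa using g.injective (Subtype.ext hxy)
  · rw [Finset.disjoint_left]
    intro v hv hv'
    obtain ⟨x, -, rfl⟩ := Finset.mem_image.mp hv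
    obtain ⟨y, -, hy⟩ := Finset.mem_image.mp hv'
    have := g.injective (Subtype.ext hy)
    exact hij (Prod.ext_iff.mp this).1.symm

/-- Every large vertex set of an `H`-free graph contains a linear-sized pair of disjoint sets
that is sparse in the graph or in its complement. -/
lemma exists_sparse_pair_of_free {W V : Type*} [Fintype W] (H : SimpleGraph W)
    (G : SimpleGraph V) (hfree : ¬ Nonempty (H ↪g G)) {η : ℝ} (hη : 0 < η) (hη1 : η ≤ 1)
    (S : Finset V) (hS : Fintype.card W + 1 ≤ S.card) :
    ∃ A B : Finset V, A ⊆ S ∧ B ⊆ S ∧ Disjoint A B ∧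
      η ^ Fintype.card W / (2 * (Fintype.card W + 1) ^ 2) * S.card ≤ A.card ∧
      η ^ Fintype.card W / (2 * (Fintype.card W + 1) ^ 2) * S.card ≤ B.card ∧
      ((∀ v ∈ A, degIn G B v ≤ η * B.card) ∨ ∀ v ∈ A, degIn Gᶜ B v ≤ η * B.card) := by
  classical
  set K : ℕ := Fintype.card W + 1 with hK
  have hKr : ((Fintype.card W : ℝ) + 1) = K := by
    rw [hK]
    push_cast
    rfl
  have hKpos : (0 : ℝ) < K := by positivity
  rw [hKr]
  set m : ℝ := η ^ Fintype.card W / (2 * (K : ℝ) ^ 2) * S.card with hm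
  have hSpos : 0 < S.card := by omega
  have hmpos : 0 < m := by positivity
  have hq : (S.card : ℝ) ≤ 2 * K * (S.card / K : ℕ) := by
    have hdm := Nat.div_add_mod S.card K
    have hlt := Nat.mod_lt S.card (show 0 < K by omega)
    have h1 : 1 ≤ S.card / K := Nat.div_pos hS (by omega)
    have : S.card ≤ 2 * K * (S.card / K) := by nlinarith
    exact_mod_cast this
  obtain ⟨U, hUS, hUcard, hUdis⟩ := exists_disjoint_subsets (W := W) (S := S)
    (q := S.card / K) ((Nat.mul_le_mul_right _ (Nat.le_succ _)).trans (Nat.mul_div_le _ _))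
  by_contra hno
  obtain ⟨s, -⟩ := Finset.card_pos.mp hSpos
  obtain ⟨f, -, hf⟩ := exists_transversal_of_no_sparse_pair H G hη hη1 hmpos (K := K) S
    (fun i j A hA B hB hAB hmA hmB hdeg => hno ⟨A, B, hA, hB, hAB, hmA, hmB, by
      unfold matchingGraph at hdeg
      split_ifs at hdeg
      · exact Or.inl hdeg
      · exact Or.inr hdeg⟩)
    Finset.univ (Nat.le_succ _) U (fun i _ => hUS i) (fun i _ j _ => hUdis i j)
    (fun i _ => by
      rw [hUcard, Finset.card_univ]
      calc (K : ℝ) * m = η ^ Fintype.card W * (S.card / (2 * K)) := by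
            rw [hm]
            field_simp
        _ ≤ η ^ Fintype.card W * (S.card / K : ℕ) := by
            refine mul_le_mul_of_nonneg_left ?_ (by positivity)
            rw [div_le_iff₀ (by positivity)]
            linarith
        _ = _ := mul_comm _ _)
    (fun _ => s)
  have hadj : ∀ i j, i ≠ j → (matchingGraph H G i j).Adj (f i) (f j) := fun i j =>
    hf i (Finset.mem_univ i) j (Finset.mem_univ j)
  refine hfree ⟨⟨⟨f, fun i j hij => ?_⟩, fun {i j} => ?_⟩⟩
  · by_contra hne
    exact (hadj i j hne).ne hij
  · rcases eq_or_ne i j with rfl | hne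
    · simp
    · have := hadj i j hne
      unfold matchingGraph at this
      split_ifs at this with hH
      · exact iff_of_true this hH
      · exact iff_of_false ((G.compl_adj _ _).mp this).2 hH

end Embedding

/-- In every `H`-free graph, every vertex set `S` has subsets of all sizes up to a constant
fraction of `|S|` with edge density at most `a` or co-edge density at most `b`. -/
def HasSparseOrDenseSubsets {W : Type*} (H : SimpleGraph W) (a b : ℝ) : Prop :=
  ∃ c : ℝ, 0 < c ∧ ∀ (V : Type) (G : SimpleGraph V), ¬ Nonempty (H ↪g G) →
    ∀ (S : Finset V) (k : ℕ), (k : ℝ) ≤ c * S.card → ∃ X ⊆ S, X.card = k ∧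
      (edgeCount G X X ≤ a * (k : ℝ) ^ 2 ∨ edgeCount Gᶜ X X ≤ b * (k : ℝ) ^ 2)

lemma hasSparseOrDenseSubsets_of_one_le {W : Type*} (H : SimpleGraph W) {a b : ℝ}
    (h : 1 ≤ a ∨ 1 ≤ b) : HasSparseOrDenseSubsets H a b := by
  refine ⟨1, one_pos, fun V G _ S k hk => ?_⟩
  obtain ⟨X, hXS, rfl⟩ := Finset.exists_subset_card_eq
    (by exact_mod_cast (one_mul (S.card : ℝ)) ▸ hk : k ≤ S.card)
  refine ⟨X, hXS, rfl, ?_⟩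
  exact h.imp
    (fun h => (edgeCount_le_card_sq G X).trans (le_mul_of_one_le_left (by positivity) h))
    (fun h => (edgeCount_le_card_sq Gᶜ X).trans (le_mul_of_one_le_left (by positivity) h))

lemma hasSparseOrDenseSubsets_step {W : Type*} [Fintype W] (H : SimpleGraph W) {a b : ℝ}
    (ha : 0 < a) (hb : 0 < b) (h₁ : HasSparseOrDenseSubsets H (3 / 2 * a) b)
    (h₂ : HasSparseOrDenseSubsets H a (3 / 2 * b)) : HasSparseOrDenseSubsets H a b := by
  obtain ⟨c₁, hc₁, h₁⟩ := h₁
  obtain ⟨c₂, hc₂, h₂⟩ := h₂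
  obtain ⟨η, hη, hη1, hηa, hηb⟩ : ∃ η : ℝ, 0 < η ∧ η ≤ 1 ∧ 4 * η ≤ a ∧ 4 * η ≤ b := by
    refine ⟨min 1 (min (a / 4) (b / 4)), by positivity, min_le_left _ _, ?_, ?_⟩
    · linarith [(min_le_right 1 (min (a / 4) (b / 4))).trans (min_le_left _ _)]
    · linarith [(min_le_right 1 (min (a / 4) (b / 4))).trans (min_le_right _ _)]
  set d : ℝ := η ^ Fintype.card W / (2 * (Fintype.card W + 1) ^ 2) with hd
  have hdpos : 0 < d := by positivity
  let c : ℝ := min c₁ c₂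
  have hc : 0 < c := lt_min hc₁ hc₂
  let c' : ℝ := min (c * d / 2) (1 / (Fintype.card W + 1))
  refine ⟨c', by positivity, fun V G hfree S k hk => ?_⟩
  rcases Nat.eq_zero_or_pos k with rfl | hkpos
  · exact ⟨∅, Finset.empty_subset _, rfl, Or.inl (by simp [edgeCount])⟩
  have hk1 : (1 : ℝ) ≤ k := by exact_mod_cast hkpos
  have hkcd : (k : ℝ) ≤ c * d / 2 * S.card :=
    hk.trans (mul_le_mul_of_nonneg_right (min_le_left _ _) (by positivity))
  have hkW : (k : ℝ) ≤ 1 / (Fintype.card W + 1) * S.card :=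
    hk.trans (mul_le_mul_of_nonneg_right (min_le_right _ _) (by positivity))
  have hS : Fintype.card W + 1 ≤ S.card := by
    have : (1 : ℝ) ≤ S.card / (Fintype.card W + 1) := by
      rw [div_eq_mul_one_div, mul_comm]
      exact hk1.trans hkW
    rw [le_div_iff₀ (by positivity), one_mul] at this
    exact_mod_cast this
  obtain ⟨A, B, hAS, hBS, hAB, hA, hB, hpair⟩ :=
    exists_sparse_pair_of_free H G hfree hη hη1 S hS
  rw [← hd] at hA hB
  have hkt : ∀ T : Finset V, (k : ℝ) / c ≤ T.card → (k : ℝ) ≤ c * T.card := fun T hT => by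
    rwa [div_le_iff₀ hc, mul_comm] at hT
  have hsize : 2 * ((k : ℝ) / c) ≤ d * S.card := by
    rw [mul_div_assoc', div_le_iff₀ hc]
    linarith
  have hkc : 0 ≤ (k : ℝ) / c := by positivity
  classical
  rcases hpair with hpair | hpair
  · obtain ⟨X, hX, hXk⟩ := exists_sparse_of_sparse_pair G hη hηa hkpos
      (fun X => edgeCount Gᶜ X X ≤ b * (k : ℝ) ^ 2) hAB hpair
      (by linarith : (k : ℝ) / c ≤ A.card) (by linarith)
      (fun T hT => h₁ V G hfree T k ((hkt T hT).trans
        (mul_le_mul_of_nonneg_right (min_le_left _ _) (by positivity))))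
    exact ⟨X, hX.trans (Finset.union_subset hAS hBS), hXk⟩
  · obtain ⟨X, hX, hXk, hXe⟩ := exists_sparse_of_sparse_pair Gᶜ hη hηb hkpos
      (fun X => edgeCount G X X ≤ a * (k : ℝ) ^ 2) hAB hpair
      (by linarith : (k : ℝ) / c ≤ A.card) (by linarith)
      (fun T hT => by
        obtain ⟨X, hXT, hXk, hXe⟩ := h₂ V G hfree T k ((hkt T hT).trans
          (mul_le_mul_of_nonneg_right (min_le_right _ _) (by positivity)))
        exact ⟨X, hXT, hXk, hXe.symm⟩)
    exact ⟨X, hX.trans (Finset.union_subset hAS hBS), hXk, hXe.symm⟩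

lemma hasSparseOrDenseSubsets_of_pow {W : Type*} [Fintype W] (H : SimpleGraph W) (n : ℕ)
    {a b : ℝ} (ha : 0 < a) (hb : 0 < b) (h : 1 ≤ a * b * (3 / 2) ^ n) :
    HasSparseOrDenseSubsets H a b := by
  induction n generalizing a b with
  | zero =>
    refine hasSparseOrDenseSubsets_of_one_le H ?_
    by_contra! hlt
    nlinarith [hlt.1, hlt.2]
  | succ n ih =>
    rw [pow_succ] at h
    exact hasSparseOrDenseSubsets_step H ha hb
      (ih (by positivity) hb (by linarith)) (ih ha (by positivity) (by linarith))

lemma hasSparseOrDenseSubsets {W : Type*} [Fintype W] (H : SimpleGraph W) {a b : ℝ}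
    (ha : 0 < a) (hb : 0 < b) : HasSparseOrDenseSubsets H a b := by
  obtain ⟨n, hn⟩ := pow_unbounded_of_one_lt (1 / (a * b)) (by norm_num : (1 : ℝ) < 3 / 2)
  refine hasSparseOrDenseSubsets_of_pow H n ha hb ?_
  rw [div_lt_iff₀ (by positivity)] at hn
  linarith

/-- Rödl's theorem (degree form): for every graph `H` and every `ε > 0` there exists
`δ > 0` such that every `H`-free graph `G` has a subset `X` with `|X| ≥ δ|G|` such that one
of `G[X]`, `Ḡ[X]` has maximum degree at most `εδ|G|`. -/
theorem stmt_9 {W : Type*} [Fintype W] (H : SimpleGraph W) (ε : ℝ) (hε : 0 < ε) :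
    ∃ δ : ℝ, 0 < δ ∧
      ∀ (V : Type) [Fintype V] [DecidableEq V] (G : SimpleGraph V) [DecidableRel G.Adj],
        ¬ Nonempty (H ↪g G) →
        ∃ X : Finset V, δ * (Fintype.card V : ℝ) ≤ (X.card : ℝ) ∧
          ((∀ v ∈ X, ((X.filter (G.Adj v)).card : ℝ) ≤ ε * δ * (Fintype.card V : ℝ)) ∨
           (∀ v ∈ X, ((X.filter (Gᶜ.Adj v)).card : ℝ) ≤ ε * δ * (Fintype.card V : ℝ))) := by
  obtain ⟨c, hc, hsub⟩ := hasSparseOrDenseSubsets H (a := ε / 6) (b := ε / 6)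
    (by positivity) (by positivity)
  refine ⟨c / 3, by positivity, fun V _ _ G _ hfree => ?_⟩
  simp only [← degIn_eq_card]
  set N : ℝ := (Fintype.card V : ℝ) with hN
  have hN0 : 0 ≤ N := by positivity
  rcases le_or_gt (c / 3 * N) 1 with hsmall | hlarge
  · rcases isEmpty_or_nonempty V with hV | ⟨⟨v⟩⟩
    · exact ⟨∅, by simp [hN], by simp⟩
    · refine ⟨{v}, by simpa using hsmall, Or.inl fun w hw => ?_⟩
      obtain rfl := Finset.mem_singleton.mp hw
      have : degIn G {w} w = 0 := by simp [degIn]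
      rw [this]
      positivity
  · have hceil : (⌈2 * (c / 3 * N)⌉₊ : ℝ) < 2 * (c / 3 * N) + 1 :=
      Nat.ceil_lt_add_one (by positivity)
    have hle : 2 * (c / 3 * N) ≤ (⌈2 * (c / 3 * N)⌉₊ : ℝ) := Nat.le_ceil _
    obtain ⟨X, -, hXk, hX⟩ := hsub V G hfree Finset.univ ⌈2 * (c / 3 * N)⌉₊ (by
      rw [Finset.card_univ, ← hN]
      linarith)
    rw [← hXk] at hX hle hceil
    have hXne : X.Nonempty := by
      rw [← Finset.card_pos]
      exact_mod_cast (by linarith : (0 : ℝ) < X.card)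
    have hbound : 2 * (ε / 6 * X.card) ≤ ε * (c / 3) * N := by nlinarith
    rcases hX with hX | hX
    · obtain ⟨Y, -, hYc, hY⟩ := exists_subset_degIn_le G (by positivity) hXne hX
      exact ⟨Y, by linarith, Or.inl fun v hv => (hY v hv).trans hbound⟩
    · obtain ⟨Y, -, hYc, hY⟩ := exists_subset_degIn_le Gᶜ (by positivity) hXne hX
      exact ⟨Y, by linarith, Or.inr fun v hv => (hY v hv).trans hbound⟩
end

section
/- Let H be a forest, let H₁ be the star-expansion of H, and let H₂ be the star-expansion of the complement H̄ of H. Then there exists a real number τ > 0 such that every graph G that is H₁-free, H₂-free, H̄₁-free and H̄₂-free satisfies max(α(G), ω(G)) ≥ |G|^τ; that is, {H₁, H₂, H̄₁, H̄₂} has the Erdős–Hajnal property. -/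
open SimpleGraph

/-- The star-expansion of `H`: for each vertex `b` of `H`, add a new vertex `a_b` adjacent
to `b` only, and add one further vertex `v` adjacent to all of the `a_b` and nothing else. -/
def starExpansion {W : Type*} (H : SimpleGraph W) : SimpleGraph (W ⊕ W ⊕ Unit) :=
  SimpleGraph.fromRel (fun x y =>
    match x, y with
    | Sum.inl b, Sum.inl b' => H.Adj b b'
    | Sum.inl b, Sum.inr (Sum.inl a) => b = a
    | Sum.inr (Sum.inl _), Sum.inr (Sum.inr _) => True
    | _, _ => False)

section ErdosHajnal

open scoped Classical

variable {V : Type*}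

/-- The largest cardinality of a stable subset of `X`. -/
noncomputable def stab (G : SimpleGraph V) (X : Finset V) : ℕ :=
  (X.powerset.filter (fun I : Finset V => G.IsIndepSet (I : Set V))).sup Finset.card

/-- The product of the stability and clique numbers of the subgraph induced on `X`. -/
noncomputable def mu (G : SimpleGraph V) (X : Finset V) : ℕ := stab G X * stab Gᶜ X

/-- The neighbours of `v` in `X`. -/
noncomputable def nb (G : SimpleGraph V) (X : Finset V) (v : V) : Finset V := X.filter (G.Adj v)

/-- `X` is critical if no subset has a smaller value of `mu` relative to its cardinality
to the power `σ`. -/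
def Crit (G : SimpleGraph V) (σ : ℝ) (X : Finset V) : Prop :=
  X.Nonempty ∧ ∀ Z ⊆ X, (Z.card : ℝ) ^ σ * mu G X ≤ (X.card : ℝ) ^ σ * mu G Z

lemma mem_nb {G : SimpleGraph V} {X : Finset V} {v w : V} : w ∈ nb G X v ↔ w ∈ X ∧ G.Adj v w := by
  simp [nb]

lemma nb_subset (G : SimpleGraph V) (X : Finset V) (v : V) : nb G X v ⊆ X :=
  Finset.filter_subset _ _

lemma nb_mono (G : SimpleGraph V) {X Y : Finset V} (h : X ⊆ Y) (v : V) : nb G X v ⊆ nb G Y v :=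
  Finset.filter_subset_filter _ h

lemma le_stab {G : SimpleGraph V} {X I : Finset V} (h : I ⊆ X) (hI : G.IsIndepSet (I : Set V)) :
    I.card ≤ stab G X :=
  Finset.le_sup (f := Finset.card) (Finset.mem_filter.2 ⟨Finset.mem_powerset.2 h, hI⟩)

lemma exists_stab (G : SimpleGraph V) (X : Finset V) :
    ∃ I ⊆ X, G.IsIndepSet (I : Set V) ∧ I.card = stab G X := by
  obtain ⟨I, hI, h⟩ := Finset.exists_mem_eq_sup
    (X.powerset.filter (fun I : Finset V => G.IsIndepSet (I : Set V)))
    ⟨∅, by simp [IsIndepSet]⟩ Finset.card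
  simp only [Finset.mem_filter, Finset.mem_powerset] at hI
  exact ⟨I, hI.1, hI.2, h.symm⟩

lemma stab_mono (G : SimpleGraph V) {X Y : Finset V} (h : X ⊆ Y) : stab G X ≤ stab G Y := by
  obtain ⟨I, hI, hs, hc⟩ := exists_stab G X
  exact hc ▸ le_stab (hI.trans h) hs

lemma stab_pos (G : SimpleGraph V) {X : Finset V} (h : X.Nonempty) : 0 < stab G X := by
  obtain ⟨x, hx⟩ := h
  have := le_stab (G := G) (X := X) (I := {x}) (by simpa using hx) (by simp [IsIndepSet])
  rwa [Finset.card_singleton] at this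

lemma mu_pos (G : SimpleGraph V) {X : Finset V} (h : X.Nonempty) : 0 < mu G X :=
  Nat.mul_pos (stab_pos G h) (stab_pos _ h)

lemma mu_mono (G : SimpleGraph V) {X Y : Finset V} (h : X ⊆ Y) : mu G X ≤ mu G Y :=
  Nat.mul_le_mul (stab_mono G h) (stab_mono _ h)

lemma mu_compl (G : SimpleGraph V) (X : Finset V) : mu Gᶜ X = mu G X := by
  simp [mu, mul_comm]

lemma Crit.compl {G : SimpleGraph V} {σ : ℝ} {X : Finset V} (h : Crit G σ X) : Crit Gᶜ σ X :=
  ⟨h.1, fun Z hZ => by simpa [mu_compl] using h.2 Z hZ⟩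

lemma Crit.stab_le {G : SimpleGraph V} {σ : ℝ} {X : Finset V} (h : Crit G σ X) {Z : Finset V}
    (hZ : Z ⊆ X) : (Z.card : ℝ) ^ σ * stab G X ≤ (X.card : ℝ) ^ σ * stab G Z := by
  have h1 := h.2 Z hZ
  have h2 : (0 : ℝ) < stab Gᶜ X := by exact_mod_cast stab_pos _ h.1
  have h3 : (stab Gᶜ Z : ℝ) ≤ stab Gᶜ X := by exact_mod_cast stab_mono _ hZ
  have h4 : 0 ≤ (X.card : ℝ) ^ σ * stab G Z := by positivity
  simp only [mu, Nat.cast_mul] at h1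
  refine le_of_mul_le_mul_right ?_ h2
  nlinarith

/-- Inside any nonempty set `U` there is a critical set. -/
lemma exists_crit (G : SimpleGraph V) {σ : ℝ} (hσ : 0 < σ) {U : Finset V}
    (hU : U.Nonempty) :
    ∃ X ⊆ U, Crit G σ X ∧ (U.card : ℝ) ^ σ * mu G X ≤ (X.card : ℝ) ^ σ * mu G U := by
  obtain ⟨X, hX, hmin⟩ := Finset.exists_min_image (U.powerset.filter Finset.Nonempty)
    (fun Z => (mu G Z : ℝ) / (Z.card : ℝ) ^ σ) ⟨U, by simp [hU]⟩
  simp only [Finset.mem_filter, Finset.mem_powerset, and_imp] at hX hmin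
  have key : ∀ Z ⊆ U, Z.Nonempty → (Z.card : ℝ) ^ σ * mu G X ≤ (X.card : ℝ) ^ σ * mu G Z := by
    intro Z hZ hZ0
    have h := hmin Z hZ hZ0
    have h1 : (0 : ℝ) < (X.card : ℝ) ^ σ :=
      Real.rpow_pos_of_pos (by exact_mod_cast hX.2.card_pos) _
    have h2 : (0 : ℝ) < (Z.card : ℝ) ^ σ :=
      Real.rpow_pos_of_pos (by exact_mod_cast hZ0.card_pos) _
    rw [div_le_div_iff₀ h1 h2] at h
    linarith
  refine ⟨X, hX.1, ⟨hX.2, fun Z hZ => ?_⟩, key U subset_rfl hU⟩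
  rcases Z.eq_empty_or_nonempty with rfl | hZ0
  · rw [Finset.card_empty, Nat.cast_zero, Real.zero_rpow hσ.ne', zero_mul]
    positivity
  · exact key Z (hZ.trans hX.1) hZ0

lemma Crit.exists_crit {G : SimpleGraph V} {σ σ' r : ℝ} {X U : Finset V} (h : Crit G σ X)
    (hU : U ⊆ X) (hU0 : U.Nonempty) (hσ : 0 < σ) (hσ' : σ < σ') (hr : σ ≤ r * (σ' - σ)) :
    ∃ X' ⊆ U, Crit G σ' X' ∧ (U.card : ℝ) * ((U.card : ℝ) / X.card) ^ r ≤ X'.card := by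
  obtain ⟨X', hX', hc, hle⟩ := _root_.exists_crit G (hσ.trans hσ') hU0
  refine ⟨X', hX', hc, ?_⟩
  have hu : (0 : ℝ) < U.card := by exact_mod_cast hU0.card_pos
  have hx : (0 : ℝ) < X.card := by exact_mod_cast h.1.card_pos
  have hy : (0 : ℝ) < X'.card := by exact_mod_cast hc.1.card_pos
  have hm : (0 : ℝ) < mu G X := by exact_mod_cast mu_pos G h.1
  have h1 := h.2 X' (hX'.trans hU)
  have h2 : (mu G U : ℝ) ≤ mu G X := by exact_mod_cast mu_mono G hU
  have h3 : (X'.card : ℝ) ^ σ * (U.card : ℝ) ^ σ' ≤ (X.card : ℝ) ^ σ * (X'.card : ℝ) ^ σ' := by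
    refine le_of_mul_le_mul_right ?_ hm
    calc (X'.card : ℝ) ^ σ * (U.card : ℝ) ^ σ' * mu G X
        = (U.card : ℝ) ^ σ' * ((X'.card : ℝ) ^ σ * mu G X) := by ring
      _ ≤ (U.card : ℝ) ^ σ' * ((X.card : ℝ) ^ σ * mu G X') := by gcongr
      _ = (X.card : ℝ) ^ σ * ((U.card : ℝ) ^ σ' * mu G X') := by ring
      _ ≤ (X.card : ℝ) ^ σ * ((X'.card : ℝ) ^ σ' * mu G U) := by gcongr
      _ ≤ (X.card : ℝ) ^ σ * ((X'.card : ℝ) ^ σ' * mu G X) := by gcongr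
      _ = _ := by ring
  have hux : (U.card : ℝ) / X.card ≤ 1 := by
    rw [div_le_one hx]
    exact_mod_cast Finset.card_le_card hU
  have h4 : ((U.card : ℝ) / X.card) ^ σ ≤ ((X'.card : ℝ) / U.card) ^ (σ' - σ) := by
    rw [Real.div_rpow hu.le hx.le, Real.div_rpow hy.le hu.le, Real.rpow_sub hy, Real.rpow_sub hu,
      div_div_div_eq, div_le_div_iff₀ (by positivity) (by positivity)]
    nlinarith [Real.rpow_pos_of_pos hu σ]
  have h5 : (((U.card : ℝ) / X.card) ^ r) ^ (σ' - σ) ≤ ((X'.card : ℝ) / U.card) ^ (σ' - σ) := by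
    rw [← Real.rpow_mul (by positivity)]
    exact (Real.rpow_le_rpow_of_exponent_ge (by positivity) hux hr).trans h4
  have h6 := (Real.rpow_le_rpow_iff (by positivity) (by positivity) (sub_pos.2 hσ')).1 h5
  rw [le_div_iff₀ hu] at h6
  linarith

/-- Greedy colouring with few monochromatic pairs. -/
lemma exists_colouring (w : V → V → ℕ) (q : ℕ) (hq : 0 < q) (J : Finset V) :
    ∃ χ : V → Fin q, q * ∑ a ∈ J, ∑ b ∈ J.filter (fun b => b ≠ a ∧ χ b = χ a), w a b
      ≤ ∑ a ∈ J, ∑ b ∈ J.filter (fun b => b ≠ a), w a b := by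
  induction J using Finset.induction_on with
  | empty => exact ⟨fun _ => ⟨0, hq⟩, by simp⟩
  | insert x J hx ih =>
    obtain ⟨χ, hχ⟩ := ih
    have : Nonempty (Fin q) := ⟨⟨0, hq⟩⟩
    obtain ⟨i, -, hi⟩ := Finset.exists_min_image (Finset.univ : Finset (Fin q))
      (fun i => ∑ b ∈ J.filter (fun b => χ b = i), (w x b + w b x)) Finset.univ_nonempty
    have hi' : q * ∑ b ∈ J.filter (fun b => χ b = i), (w x b + w b x)
        ≤ ∑ b ∈ J, (w x b + w b x) := by
      calc q * ∑ b ∈ J.filter (fun b => χ b = i), (w x b + w b x)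
          = ∑ _i : Fin q, ∑ b ∈ J.filter (fun b => χ b = i), (w x b + w b x) := by simp
        _ ≤ ∑ j : Fin q, ∑ b ∈ J.filter (fun b => χ b = j), (w x b + w b x) :=
          Finset.sum_le_sum fun j hj => hi j hj
        _ = _ := Finset.sum_fiberwise _ _ _
    refine ⟨Function.update χ x i, ?_⟩
    have hne : ∀ b ∈ J, b ≠ x := fun b hb h => hx (h ▸ hb)
    have e1 : ∀ f : V → ℕ, ∑ b ∈ (insert x J).filter
        (fun b => b ≠ x ∧ Function.update χ x i b = Function.update χ x i x), f b
        = ∑ b ∈ J.filter (fun b => χ b = i), f b := by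
      intro f
      congr 1
      ext b
      simp only [Finset.mem_filter, Finset.mem_insert, Function.update_self]
      constructor
      · rintro ⟨h | h, h1, h2⟩
        · exact absurd h h1
        · exact ⟨h, by simpa [h1] using h2⟩
      · rintro ⟨h1, h2⟩
        exact ⟨Or.inr h1, hne b h1, by simpa [hne b h1] using h2⟩
    have e2 : ∀ f : V → ℕ, ∑ b ∈ (insert x J).filter (fun b => b ≠ x), f b = ∑ b ∈ J, f b := by
      intro f
      congr 1
      ext b
      simp only [Finset.mem_filter, Finset.mem_insert]
      constructor
      · rintro ⟨h | h, h1⟩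
        · exact absurd h h1
        · exact h
      · exact fun h => ⟨Or.inr h, hne b h⟩
    have e3 : ∀ a ∈ J, ∑ b ∈ (insert x J).filter
        (fun b => b ≠ a ∧ Function.update χ x i b = Function.update χ x i a), w a b
        = ∑ b ∈ J.filter (fun b => b ≠ a ∧ χ b = χ a), w a b + if χ a = i then w a x else 0 := by
      intro a ha
      have hax := hne a ha
      have h0 : J.filter (fun b => b ≠ a ∧ Function.update χ x i b = Function.update χ x i a)
          = J.filter (fun b => b ≠ a ∧ χ b = χ a) :=
        Finset.filter_congr fun b hb => by simp [hne b hb, hax]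
      rw [Finset.filter_insert, h0]
      by_cases h : χ a = i
      · rw [if_pos h, if_pos (by simp [hax, hax.symm, h]),
          Finset.sum_insert (by simp [hx]), add_comm]
      · rw [if_neg h, if_neg (by simp [hax, Ne.symm h]), add_zero]
    have e4 : ∀ a ∈ J, ∑ b ∈ (insert x J).filter (fun b => b ≠ a), w a b
        = ∑ b ∈ J.filter (fun b => b ≠ a), w a b + w a x := by
      intro a ha
      rw [Finset.filter_insert, if_pos (hne a ha).symm, Finset.sum_insert (by simp [hx]), add_comm]
    rw [Finset.sum_insert hx, Finset.sum_insert hx, e1, e2, Finset.sum_congr rfl e3,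
      Finset.sum_congr rfl e4, Finset.sum_add_distrib, Finset.sum_add_distrib, ← Finset.sum_filter]
    rw [Finset.sum_add_distrib, Finset.sum_add_distrib] at hi'
    linarith

/-- Many disjoint blocks of bounded overlap contain a comb. -/
lemma exists_level_comb (G : SimpleGraph V) (B J : Finset V) (P : V → Finset V) (k : ℕ)
    (hP : ∀ a ∈ J, P a ⊆ B) (hk : ∀ a ∈ J, (P a).card = k)
    (hdisj : ∀ a ∈ J, ∀ b ∈ J, a ≠ b → Disjoint (P a) (P b))
    (hdeg : ∀ a ∈ J, (nb G B a).card ≤ 2 * k) (hk0 : 0 < k) :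
    ∃ T ⊆ J, J.card ≤ 16 * T.card ∧
      ∀ a ∈ T, k ≤ 2 * ((P a).filter (fun b => ∀ a' ∈ T, a' ≠ a → ¬ G.Adj a' b)).card := by
  obtain ⟨χ, hχ⟩ := exists_colouring (fun a b => (nb G (P a) b).card) 8 (by norm_num) J
  have htot : ∑ a ∈ J, ∑ b ∈ J.filter (fun b => b ≠ a), (nb G (P a) b).card ≤ J.card * (2 * k) := by
    calc ∑ a ∈ J, ∑ b ∈ J.filter (fun b => b ≠ a), (nb G (P a) b).card
        ≤ ∑ a ∈ J, ∑ b ∈ J, (nb G (P a) b).card :=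
          Finset.sum_le_sum fun a _ => Finset.sum_le_sum_of_subset (Finset.filter_subset _ _)
      _ = ∑ b ∈ J, ∑ a ∈ J, (nb G (P a) b).card := Finset.sum_comm
      _ ≤ ∑ b ∈ J, 2 * k := by
          refine Finset.sum_le_sum fun b hb => ?_
          rw [← Finset.card_biUnion]
          · refine (Finset.card_le_card ?_).trans (hdeg b hb)
            exact Finset.biUnion_subset.2 fun a ha => nb_mono G (hP a ha) b
          · intro a ha a' ha' h
            exact (hdisj a ha a' ha' h).mono (nb_subset _ _ _) (nb_subset _ _ _)
      _ = _ := by simp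
  set load : V → ℕ := fun a => ∑ b ∈ J.filter (fun b => b ≠ a ∧ χ b = χ a), (nb G (P a) b).card
    with hload
  set good := J.filter (fun a => 2 * load a ≤ k) with hgood
  have hbad : (J.filter (fun a => ¬ 2 * load a ≤ k)).card * k
      ≤ ∑ a ∈ J, 2 * load a := by
    calc _ = ∑ a ∈ J.filter (fun a => ¬ 2 * load a ≤ k), k := by simp
      _ ≤ ∑ a ∈ J.filter (fun a => ¬ 2 * load a ≤ k), 2 * load a :=
        Finset.sum_le_sum fun a ha => (not_le.1 (Finset.mem_filter.1 ha).2).le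
      _ ≤ _ := Finset.sum_le_sum_of_subset (Finset.filter_subset _ _)
  rw [← Finset.mul_sum] at hbad
  have hsplit := Finset.card_filter_add_card_filter_not (s := J) (fun a => 2 * load a ≤ k)
  rw [← hgood] at hsplit
  have hg2 : J.card ≤ 2 * good.card := by
    have h1 : (J.filter (fun a => ¬ 2 * load a ≤ k)).card * k * 2 ≤ J.card * k := by
      have hbad' : _ ≤ 2 * J.sum load := hbad
      linarith
    have h2 : (J.filter (fun a => ¬ 2 * load a ≤ k)).card * 2 ≤ J.card := by
      refine Nat.le_of_mul_le_mul_right ?_ hk0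
      linarith
    omega
  obtain ⟨i, -, hi⟩ := Finset.exists_max_image (Finset.univ : Finset (Fin 8))
      (fun i => (good.filter (fun b => χ b = i)).card) Finset.univ_nonempty
  have hi' : good.card ≤ 8 * (good.filter (fun b => χ b = i)).card := by
    calc good.card = ∑ j : Fin 8, (good.filter (fun b => χ b = j)).card :=
          (Finset.card_eq_sum_card_fiberwise (t := Finset.univ) (by simp))
      _ ≤ ∑ _j : Fin 8, (good.filter (fun b => χ b = i)).card :=
        Finset.sum_le_sum fun j hj => hi j hj
      _ = _ := by simp
  refine ⟨good.filter (fun b => χ b = i),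
    (Finset.filter_subset _ _).trans (Finset.filter_subset _ _), by omega, ?_⟩
  intro a ha
  simp only [hgood, Finset.mem_filter] at ha
  have hsub : P a ⊆ (P a).filter (fun b => ∀ a' ∈ good.filter (fun b => χ b = i), a' ≠ a →
      ¬ G.Adj a' b) ∪ (J.filter (fun b => b ≠ a ∧ χ b = χ a)).biUnion (fun b => nb G (P a) b) := by
    intro b hb
    rw [Finset.mem_union, or_iff_not_imp_left]
    intro h
    simp only [Finset.mem_filter, hb, true_and, not_forall, hgood] at h
    push Not at h
    obtain ⟨a', h1, h2, h3⟩ := h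
    simp only [Finset.mem_biUnion, Finset.mem_filter]
    exact ⟨a', ⟨h1.1.1, h2, h1.2.trans ha.2.symm⟩, mem_nb.2 ⟨hb, h3⟩⟩
  have h1 := (Finset.card_le_card hsub).trans (Finset.card_union_le _ _)
  have h2 : ((J.filter (fun b => b ≠ a ∧ χ b = χ a)).biUnion (fun b => nb G (P a) b)).card
      ≤ load a := Finset.card_biUnion_le
  have h3 := hk a ha.1.1
  have h4 := ha.1.2
  omega

/-- The residual set after removing maximal families of blocks of dyadic sizes is bounded. -/
lemma card_le_sum_of_no_comb (G : SimpleGraph V) (I B' : Finset V) (f : ℕ → ℝ)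
    (hf : ∀ l : ℕ, ∀ J ⊆ I, ∀ T ⊆ J, ∀ P : V → Finset V, J.card ≤ 16 * T.card →
      (∀ a ∈ T, P a ⊆ B' ∧ 2 ^ l ≤ 2 * (P a).card ∧
        ∀ b ∈ P a, G.Adj a b ∧ ∀ a' ∈ T, a' ≠ a → ¬ G.Adj a' b) →
      (J.card : ℝ) * 2 ^ l ≤ f l)
    (l : ℕ) : ∀ B ⊆ B', (∀ b ∈ B, ∃ a ∈ I, G.Adj a b) → (∀ a ∈ I, (nb G B a).card < 2 ^ l) →
      (B.card : ℝ) ≤ ∑ i ∈ Finset.range l, f i := by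
  induction l with
  | zero =>
    intro B _ h1 h2
    have : B = ∅ := by
      refine Finset.eq_empty_of_forall_notMem fun b hb => ?_
      obtain ⟨a, ha, hab⟩ := h1 b hb
      have h3 := h2 a ha
      rw [pow_zero, Nat.lt_one_iff, Finset.card_eq_zero] at h3
      exact Finset.notMem_empty b (h3 ▸ mem_nb.2 ⟨hb, hab⟩)
    simp [this]
  | succ l ih =>
    intro B hB h1 h2
    obtain ⟨J, hJ, hmax⟩ := Finset.exists_max_image (I.powerset.filter (fun J => ∃ P : V → Finset V,
      (∀ a ∈ J, P a ⊆ nb G B a) ∧ (∀ a ∈ J, (P a).card = 2 ^ l) ∧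
      (∀ a ∈ J, ∀ b ∈ J, a ≠ b → Disjoint (P a) (P b)))) Finset.card ⟨∅, by simp⟩
    simp only [Finset.mem_filter, Finset.mem_powerset, and_imp, forall_exists_index] at hJ hmax
    obtain ⟨hJI, P, hP, hPc, hPd⟩ := hJ
    have hPB : ∀ a ∈ J, P a ⊆ B := fun a ha => (hP a ha).trans (nb_subset _ _ _)
    have hres : ((B \ J.biUnion P).card : ℝ) ≤ ∑ i ∈ Finset.range l, f i := by
      refine ih _ (Finset.sdiff_subset.trans hB) (fun b hb => h1 b (Finset.mem_sdiff.1 hb).1) ?_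
      intro a ha
      by_contra hcon
      push Not at hcon
      by_cases haJ : a ∈ J
      · have hd : Disjoint (nb G (B \ J.biUnion P) a) (P a) := by
          rw [Finset.disjoint_left]
          intro b hb hb'
          exact (Finset.mem_sdiff.1 (mem_nb.1 hb).1).2 (Finset.mem_biUnion.2 ⟨a, haJ, hb'⟩)
        have h3 : (nb G (B \ J.biUnion P) a ∪ P a).card ≤ (nb G B a).card :=
          Finset.card_le_card (Finset.union_subset (nb_mono G Finset.sdiff_subset a) (hP a haJ))
        rw [Finset.card_union_of_disjoint hd, hPc a haJ] at h3
        have h4 := h2 a ha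
        rw [pow_succ] at h4
        omega
      · obtain ⟨Q, hQ, hQc⟩ := Finset.exists_subset_card_eq hcon
        have hQd : ∀ b ∈ J, Disjoint Q (P b) := by
          intro b hb
          rw [Finset.disjoint_left]
          intro x hx hx'
          exact (Finset.mem_sdiff.1 (mem_nb.1 (hQ hx)).1).2 (Finset.mem_biUnion.2 ⟨b, hb, hx'⟩)
        have hne : ∀ b ∈ J, b ≠ a := fun b hb h => haJ (h ▸ hb)
        have := hmax (insert a J) (Finset.insert_subset ha hJI) (Function.update P a Q) ?_ ?_ ?_
        · rw [Finset.card_insert_of_notMem haJ] at this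
          omega
        · intro b hb
          rcases Finset.mem_insert.1 hb with rfl | hb
          · simpa using hQ.trans (nb_mono G Finset.sdiff_subset _)
          · simpa [hne b hb] using hP b hb
        · intro b hb
          rcases Finset.mem_insert.1 hb with rfl | hb
          · simpa using hQc
          · simpa [hne b hb] using hPc b hb
        · intro b hb b' hb' hbb
          rcases Finset.mem_insert.1 hb with hb | hb <;>
            rcases Finset.mem_insert.1 hb' with hb' | hb'
          · exact absurd (hb.trans hb'.symm) hbb
          · simpa [hb, hne b' hb'] using hQd b' hb'
          · simpa [hb', hne b hb] using (hQd b hb).symm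
          · simpa [hne b hb, hne b' hb'] using hPd b hb b' hb' hbb
    obtain ⟨T, hT, hTc, hTk⟩ := exists_level_comb G B J P (2 ^ l) hPB hPc hPd
      (fun a ha => by have := h2 a (hJI ha); rw [pow_succ] at this; omega) (by positivity)
    have h5 := hf l J hJI T hT
      (fun a => (P a).filter (fun b => ∀ a' ∈ T, a' ≠ a → ¬ G.Adj a' b)) hTc
      (by
        intro a ha
        refine ⟨(Finset.filter_subset _ _).trans ((hPB a (hT ha)).trans hB), hTk a ha, ?_⟩
        intro b hb
        rw [Finset.mem_filter] at hb
        exact ⟨(mem_nb.1 (hP a (hT ha) hb.1)).2, hb.2⟩)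
    have h6 : (J.biUnion P).card = J.card * 2 ^ l := by
      rw [Finset.card_biUnion (fun a ha b hb h => hPd a ha b hb h), Finset.sum_congr rfl hPc]
      simp
    have h7 : B.card ≤ (B \ J.biUnion P).card + (J.biUnion P).card := by
      rw [Finset.card_sdiff_add_card_eq_card (Finset.biUnion_subset.2 hPB)]
    rw [h6] at h7
    have h8 : (B.card : ℝ) ≤ (B \ J.biUnion P).card + J.card * 2 ^ l := by exact_mod_cast h7
    rw [Finset.sum_range_succ]
    linarith

/-- If every vertex of `B'` has a neighbour in `I`, there is a large comb between `I` and `B'`. -/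
lemma exists_comb {c : ℝ} (hc : 0 < c) : ∃ κ : ℝ, 0 < κ ∧ ∀ {V : Type*} (G : SimpleGraph V)
    (I B' : Finset V), B'.Nonempty → (∀ b ∈ B', ∃ a ∈ I, G.Adj a b) →
    ∃ T ⊆ I, ∃ P : V → Finset V, ∃ k : ℕ, T.Nonempty ∧ 0 < k ∧
      (∀ a ∈ T, P a ⊆ B' ∧ (P a).card = k ∧
        ∀ b ∈ P a, G.Adj a b ∧ ∀ a' ∈ T, a' ≠ a → ¬ G.Adj a' b) ∧
      κ * B'.card ≤ k * (T.card : ℝ) ^ (1 + c) := by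
  have hc1 : 0 < 1 + c := by linarith
  have hr1 : 1 < (2 : ℝ) ^ (c / (1 + c)) := Real.one_lt_rpow (by norm_num) (by positivity)
  set r : ℝ := (2 : ℝ) ^ (c / (1 + c)) with hr
  refine ⟨(r - 1) / 64, by linarith, ?_⟩
  intro V G I B' hB' hnb
  by_contra hcon
  push Not at hcon
  have hM : (0 : ℝ) < B'.card := by exact_mod_cast hB'.card_pos
  set K : ℝ := (r - 1) / 64 * B'.card with hK
  have hK0 : 0 < K := mul_pos (by linarith) hM
  have hrl : ∀ l : ℕ, r ^ l = ((2 : ℝ) ^ l) ^ (c / (1 + c)) := by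
    intro l
    rw [hr, ← Real.rpow_natCast, ← Real.rpow_natCast, ← Real.rpow_mul (by norm_num),
      ← Real.rpow_mul (by norm_num), mul_comm]
  have hsum1 : 1 / (1 + c) + c / (1 + c) = 1 := by field_simp
  have key := card_le_sum_of_no_comb G I B' (fun l => 16 * (2 * K) ^ (1 / (1 + c)) * r ^ l) (by
    intro l J hJ T hT P hJT hP
    rcases T.eq_empty_or_nonempty with rfl | hT0
    · have : J.card = 0 := by simpa using hJT
      rw [this]
      simp only [Nat.cast_zero, zero_mul]
      positivity
    have hex : ∀ a ∈ T, ∃ Q ⊆ P a, Q.card = (2 ^ l + 1) / 2 := fun a ha =>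
      Finset.exists_subset_card_eq (by have := (hP a ha).2.1; omega)
    choose! Q hQ hQc using hex
    have hk : 0 < (2 ^ l + 1) / 2 := by have : 0 < 2 ^ l := by positivity
                                        omega
    have h1 := hcon T (hT.trans hJ) Q ((2 ^ l + 1) / 2) hT0 hk (fun a ha =>
      ⟨(hQ a ha).trans (hP a ha).1, hQc a ha, fun b hb => (hP a ha).2.2 b (hQ a ha hb)⟩)
    have h2 : (2 : ℝ) ^ l ≤ 2 * ((2 ^ l + 1) / 2 : ℕ) := by
      have : 2 ^ l ≤ 2 * ((2 ^ l + 1) / 2) := by omega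
      exact_mod_cast this
    have h3 : (T.card : ℝ) ^ (1 + c) * 2 ^ l ≤ 2 * K := by
      have : (0 : ℝ) ≤ (T.card : ℝ) ^ (1 + c) := by positivity
      nlinarith
    have h4 : (T.card : ℝ) * ((2 : ℝ) ^ l) ^ (1 / (1 + c)) ≤ (2 * K) ^ (1 / (1 + c)) := by
      have := Real.rpow_le_rpow (by positivity) h3 (by positivity : 0 ≤ 1 / (1 + c))
      rwa [Real.mul_rpow (by positivity) (by positivity), ← Real.rpow_mul (by positivity),
        mul_one_div_cancel hc1.ne', Real.rpow_one] at this
    have h5 : (2 : ℝ) ^ l = ((2 : ℝ) ^ l) ^ (1 / (1 + c)) * r ^ l := by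
      rw [hrl, ← Real.rpow_add (by positivity), hsum1, Real.rpow_one]
    have h6 : (J.card : ℝ) ≤ 16 * T.card := by exact_mod_cast hJT
    calc (J.card : ℝ) * 2 ^ l ≤ 16 * T.card * 2 ^ l := by gcongr
      _ = 16 * (T.card * ((2 : ℝ) ^ l) ^ (1 / (1 + c))) * r ^ l := by
        conv_lhs => rw [h5]
        ring
      _ ≤ _ := by gcongr)
  have hexl : ∃ l : ℕ, ∀ a ∈ I, (nb G B' a).card < 2 ^ l :=
    ⟨B'.card, fun a _ => (Finset.card_le_card (nb_subset _ _ _)).trans_lt Nat.lt_two_pow_self⟩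
  have hl := Nat.find_spec hexl
  have hlmin := fun m (hm : m < Nat.find hexl) => Nat.find_min hexl hm
  set l := Nat.find hexl
  have h1 := key l B' subset_rfl hnb hl
  obtain ⟨b, hb⟩ := hB'
  obtain ⟨a, ha, hab⟩ := hnb b hb
  have h2l : (2 : ℝ) ^ l ≤ 2 * K := by
    rcases Nat.eq_zero_or_pos l with h0 | h0
    · have := hl a ha
      rw [h0, pow_zero, Nat.lt_one_iff, Finset.card_eq_zero] at this
      exact absurd (mem_nb.2 ⟨hb, hab⟩) (by simp [this])
    · have h2 := hlmin (l - 1) (by omega)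
      push Not at h2
      obtain ⟨a, ha, hd⟩ := h2
      have h3 := hcon {a} (by simpa using ha) (fun _ => nb G B' a) (nb G B' a).card
        (Finset.singleton_nonempty a) (lt_of_lt_of_le (by positivity) hd) (by
          intro x hx
          rw [Finset.mem_singleton] at hx
          subst hx
          refine ⟨nb_subset _ _ _, rfl, fun b hb => ⟨(mem_nb.1 hb).2, ?_⟩⟩
          intro a' ha' hne
          exact absurd (Finset.mem_singleton.1 ha') hne)
      simp only [Finset.card_singleton, Nat.cast_one, Real.one_rpow, mul_one] at h3
      have h4 : (2 : ℝ) ^ (l - 1) ≤ (nb G B' a).card := by exact_mod_cast hd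
      have h5 : (2 : ℝ) ^ l = 2 * 2 ^ (l - 1) := by
        rw [← pow_succ']
        congr 1
        omega
      linarith
  rw [← Finset.mul_sum, geom_sum_eq hr1.ne'] at h1
  have h3 : r ^ l ≤ (2 * K) ^ (c / (1 + c)) := by
    rw [hrl]
    exact Real.rpow_le_rpow (by positivity) h2l (by positivity)
  have h4 : (2 * K) ^ (1 / (1 + c)) * (2 * K) ^ (c / (1 + c)) = 2 * K := by
    rw [← Real.rpow_add (by positivity), hsum1, Real.rpow_one]
  have hr0 : 0 < r - 1 := by linarith
  have h5 : 16 * (2 * K) ^ (1 / (1 + c)) * ((r ^ l - 1) / (r - 1)) ≤ 32 * K / (r - 1) := by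
    rw [← mul_div_assoc]
    refine div_le_div_of_nonneg_right ?_ hr0.le
    have : (0 : ℝ) < (2 * K) ^ (1 / (1 + c)) := by positivity
    nlinarith
  have h6 : 32 * K / (r - 1) = B'.card / 2 := by
    rw [hK]
    field_simp
    norm_num
  linarith

lemma exists_disjoint_family {U : Type*} (X : Finset V) (q : ℕ) (S : Finset U)
    (h : S.card * q ≤ X.card) : ∃ A : U → Finset V, (∀ u ∈ S, A u ⊆ X ∧ (A u).card = q) ∧
      ∀ u ∈ S, ∀ w ∈ S, u ≠ w → Disjoint (A u) (A w) := by
  induction S using Finset.induction_on with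
  | empty => exact ⟨fun _ => ∅, by simp⟩
  | insert u S hu ih =>
    rw [Finset.card_insert_of_notMem hu, add_mul, one_mul] at h
    obtain ⟨A, hA, hd⟩ := ih (by omega)
    have h1 : (S.biUnion A).card ≤ S.card * q :=
      Finset.card_biUnion_le_card_mul _ _ _ fun u hu => (hA u hu).2.le
    have h2 := Finset.le_card_sdiff (S.biUnion A) X
    obtain ⟨Q, hQ, hQc⟩ := Finset.exists_subset_card_eq (show q ≤ (X \ S.biUnion A).card by omega)
    have hQd : ∀ w ∈ S, Disjoint Q (A w) := by
      intro w hw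
      rw [Finset.disjoint_left]
      intro x hx hx'
      exact (Finset.mem_sdiff.1 (hQ hx)).2 (Finset.mem_biUnion.2 ⟨w, hw, hx'⟩)
    have hne : ∀ b ∈ S, b ≠ u := fun b hb h => hu (h ▸ hb)
    refine ⟨Function.update A u Q, fun w hw => ?_, fun w hw t ht hwt => ?_⟩
    · rcases Finset.mem_insert.1 hw with rfl | hw
      · simpa using ⟨hQ.trans Finset.sdiff_subset, hQc⟩
      · simpa [hne w hw] using hA w hw
    · rcases Finset.mem_insert.1 hw with hw | hw <;> rcases Finset.mem_insert.1 ht with ht | ht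
      · exact absurd (hw.trans ht.symm) hwt
      · simpa [hw, hne t ht] using hQd t ht
      · simpa [ht, hne w hw] using (hQd w hw).symm
      · simpa [hne w hw, hne t ht] using hd w hw t ht hwt

/-- Greedy embedding into disjoint parts: it succeeds or produces a very sparse or dense pair. -/
lemma embed_or_pair [Nonempty V] {U : Type*} (F : SimpleGraph U) (G : SimpleGraph V)
    (X : Finset V) {d h : ℕ}
    (hd : 0 < d) (n : ℕ) : ∀ (S : Finset U) (A : U → Finset V) (s : ℕ), S.card = n → n ≤ h →
    d ^ n ≤ s → (∀ u ∈ S, A u ⊆ X ∧ (A u).card = s) →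
    (∀ u ∈ S, ∀ w ∈ S, u ≠ w → Disjoint (A u) (A w)) →
    (∃ φ : U → V, (∀ u ∈ S, φ u ∈ A u) ∧
      ∀ u ∈ S, ∀ w ∈ S, u ≠ w → (G.Adj (φ u) (φ w) ↔ F.Adj u w)) ∨
    ∃ A₀ ⊆ X, ∃ B₀ ⊆ X, s ≤ (2 * d) ^ n * B₀.card ∧ B₀.card ≤ h * A₀.card ∧ Disjoint A₀ B₀ ∧
      ∃ O, (O = G ∨ O = Gᶜ) ∧ ∀ a ∈ A₀, (nb O B₀ a).card * d ≤ B₀.card := by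
  induction n with
  | zero =>
    intro S A s hS _ hs hA hdis
    left
    rw [Finset.card_eq_zero] at hS
    subst hS
    exact ⟨fun _ => Classical.arbitrary V, by simp, by simp⟩
  | succ n ih =>
    intro S A s hS hn hs hA hdis
    have hSne : S.Nonempty := Finset.card_pos.1 (by omega)
    obtain ⟨u₀, hu₀⟩ := hSne
    have hs0 : 0 < s := lt_of_lt_of_le (by positivity) hs
    have hS' : (S.erase u₀).card = n := by rw [Finset.card_erase_of_mem hu₀, hS]; simp
    set R : V → U → Finset V := fun a w =>
      if F.Adj u₀ w then nb G (A w) a else nb Gᶜ (A w) a with hR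
    have hRA : ∀ a w, R a w ⊆ A w := by
      intro a w
      simp only [hR]
      split_ifs <;> exact nb_subset _ _ _
    by_cases hgood : ∃ a ∈ A u₀, ∀ w ∈ S.erase u₀, s / d ≤ (R a w).card
    · obtain ⟨a, ha, hgood⟩ := hgood
      have hex : ∀ w ∈ S.erase u₀, ∃ Q ⊆ R a w, Q.card = s / d := fun w hw =>
        Finset.exists_subset_card_eq (hgood w hw)
      choose! Q hQ hQc using hex
      have hsd : d ^ n ≤ s / d := by
        rw [Nat.le_div_iff_mul_le hd, ← pow_succ]
        exact hs
      have hmem : ∀ u ∈ S.erase u₀, u ∈ S := fun u hu => Finset.mem_of_mem_erase hu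
      rcases ih (S.erase u₀) Q (s / d) hS' (by omega) hsd
        (fun u hu => ⟨((hQ u hu).trans (hRA a u)).trans (hA u (hmem u hu)).1, hQc u hu⟩)
        (fun u hu w hw h => (hdis u (hmem u hu) w (hmem w hw) h).mono
          ((hQ u hu).trans (hRA a u)) ((hQ w hw).trans (hRA a w))) with hφ | hp
      · left
        obtain ⟨φ, hφ, hφa⟩ := hφ
        have hadj : ∀ w ∈ S, w ≠ u₀ → (G.Adj a (φ w) ↔ F.Adj u₀ w) := by
          intro w hw hne
          have h1 := hQ w (Finset.mem_erase.2 ⟨hne, hw⟩) (hφ w (Finset.mem_erase.2 ⟨hne, hw⟩))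
          simp only [hR] at h1
          split_ifs at h1 with h2
          · simpa [h2] using (mem_nb.1 h1).2
          · simpa [h2] using ((compl_adj _ _ _).1 (mem_nb.1 h1).2).2
        refine ⟨Function.update φ u₀ a, fun u hu => ?_, fun u hu w hw hne => ?_⟩
        · by_cases h : u = u₀
          · subst h; simpa using ha
          · have h1 := Finset.mem_erase.2 ⟨h, hu⟩
            simpa [h] using hRA a u (hQ u h1 (hφ u h1))
        · by_cases h : u = u₀
          · subst h
            simpa [hne.symm] using hadj w hw hne.symm
          · by_cases h' : w = u₀
            · subst h'
              simpa [h, G.adj_comm, F.adj_comm] using hadj u hu h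
            · simpa [h, h'] using hφa u (Finset.mem_erase.2 ⟨h, hu⟩) w
                (Finset.mem_erase.2 ⟨h', hw⟩) hne
      · right
        obtain ⟨A₀, hA₀, B₀, hB₀, h1, h2⟩ := hp
        refine ⟨A₀, hA₀, B₀, hB₀, ?_, h2⟩
        have h3 : 0 < s / d := lt_of_lt_of_le (by positivity) hsd
        have h4 : s ≤ 2 * d * (s / d) := by
          have := Nat.lt_div_mul_add (a := s) hd
          nlinarith
        calc s ≤ 2 * d * (s / d) := h4
          _ ≤ 2 * d * ((2 * d) ^ n * B₀.card) := by gcongr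
          _ = _ := by ring
    · right
      push Not at hgood
      have : Nonempty U := ⟨u₀⟩
      choose! g hg hgc using hgood
      obtain ⟨w, hw, hwc⟩ : ∃ w ∈ S.erase u₀, s ≤ h * ((A u₀).filter (fun a => g a = w)).card := by
        by_contra hcon
        push Not at hcon
        have h1 := Finset.card_eq_sum_card_fiberwise (s := A u₀) (t := S.erase u₀) (f := g) hg
        obtain ⟨x, hx⟩ := Finset.card_pos.1 (by rw [(hA u₀ hu₀).2]; exact hs0)
        have h2 := Finset.sum_lt_sum_of_nonempty ⟨g x, hg x hx⟩ hcon
        rw [← Finset.mul_sum, ← h1, (hA u₀ hu₀).2, Finset.sum_const, hS', smul_eq_mul] at h2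
        have : n * s ≤ h * s := Nat.mul_le_mul_right _ (by omega)
        omega
      have hwS := Finset.mem_of_mem_erase hw
      refine ⟨(A u₀).filter (fun a => g a = w), (Finset.filter_subset _ _).trans (hA u₀ hu₀).1,
        A w, (hA w hwS).1, ?_, ?_, ?_, ?_⟩
      · rw [(hA w hwS).2]
        exact Nat.le_mul_of_pos_left _ (by positivity)
      · rwa [(hA w hwS).2]
      · exact (hdis u₀ hu₀ w hwS (Finset.ne_of_mem_erase hw).symm).mono_left
          (Finset.filter_subset _ _)
      · have h1 : ∀ a ∈ (A u₀).filter (fun a => g a = w), (R a w).card * d ≤ (A w).card := by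
          intro a ha
          rw [Finset.mem_filter] at ha
          have h2 := hgc a ha.1
          rw [ha.2] at h2
          rw [(hA w hwS).2]
          exact (Nat.mul_le_mul_right d h2.le).trans (Nat.div_mul_le_self s d)
        by_cases h2 : F.Adj u₀ w
        · exact ⟨G, Or.inl rfl, by simpa [hR, h2] using h1⟩
        · exact ⟨Gᶜ, Or.inr rfl, by simpa [hR, h2] using h1⟩

lemma sum_card_nb_comm (G : SimpleGraph V) (A B : Finset V) :
    ∑ a ∈ A, (nb G B a).card = ∑ b ∈ B, (nb G A b).card := by
  have := Finset.sum_card_bipartiteAbove_eq_sum_card_bipartiteBelow (s := A) (t := B) G.Adj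
  simp only [Finset.bipartiteAbove, Finset.bipartiteBelow] at this
  simp only [nb]
  rw [this]
  refine Finset.sum_congr rfl fun b _ => ?_
  simp only [G.adj_comm b]

lemma card_nb_union (G : SimpleGraph V) {A B : Finset V} (h : Disjoint A B) (v : V) :
    (nb G (A ∪ B) v).card = (nb G A v).card + (nb G B v).card := by
  rw [nb, Finset.filter_union, Finset.card_union_of_disjoint]
  · rfl
  · exact h.mono (Finset.filter_subset _ _) (Finset.filter_subset _ _)

/-- Adding a block that is sparse to the rest. -/
lemma sum_card_nb_union_le (G : SimpleGraph V) {A Y : Finset V} {m p : ℕ} (h : Disjoint A Y)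
    (hA : A.card = m) (hsp : ∀ a ∈ A, 2 * (nb G Y a).card ≤ m)
    (hY : ∑ v ∈ Y, (nb G Y v).card ≤ 2 * p * m ^ 2) :
    ∑ v ∈ A ∪ Y, (nb G (A ∪ Y) v).card ≤ 2 * (p + 1) * m ^ 2 := by
  simp only [card_nb_union G h]
  rw [Finset.sum_union h, Finset.sum_add_distrib, Finset.sum_add_distrib, sum_card_nb_comm G Y A]
  have h1 : ∑ a ∈ A, (nb G A a).card ≤ m * m := by
    calc _ ≤ ∑ a ∈ A, m := Finset.sum_le_sum fun a _ => by
          rw [← hA]; exact Finset.card_le_card (nb_subset _ _ _)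
      _ = _ := by simp [hA]
  have h2 : 2 * ∑ a ∈ A, (nb G Y a).card ≤ m * m := by
    rw [Finset.mul_sum]
    calc _ ≤ ∑ a ∈ A, m := Finset.sum_le_sum hsp
      _ = _ := by simp [hA]
  nlinarith

lemma exists_sparse_pair {U : Type*} [Fintype U] (F : SimpleGraph U) (h D' : ℕ)
    (hh : h = Fintype.card U + 1) (hD' : 0 < D') : ∃ D > 0, ∀ {V : Type*} (G : SimpleGraph V),
    ¬ Nonempty (F ↪g G) → ∀ X : Finset V, D ≤ X.card → ∃ A ⊆ X, ∃ B ⊆ X, Disjoint A B ∧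
      B.card ≤ A.card ∧ D' ≤ B.card ∧ D' * X.card ≤ D * B.card ∧
      ∃ O, (O = G ∨ O = Gᶜ) ∧ ∀ a ∈ A, (nb O B a).card * (2 * D') ≤ B.card := by
  set n := Fintype.card U with hn
  set d := 4 * h * D' with hd
  have hh0 : 0 < h := by omega
  have hd0 : 0 < d := by positivity
  have hpos : 0 < (2 * d) ^ n := by positivity
  refine ⟨4 * h ^ 2 * (2 * d) ^ n * D', by positivity, ?_⟩
  intro V G hF X hX
  set s := X.card / h with hs
  have hs1 : 4 * h * (2 * d) ^ n * D' ≤ s := by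
    rw [hs, Nat.le_div_iff_mul_le hh0]
    calc _ = 4 * h ^ 2 * (2 * d) ^ n * D' := by ring
      _ ≤ _ := hX
  have hs2 : d ^ n ≤ s := by
    calc d ^ n ≤ (2 * d) ^ n := Nat.pow_le_pow_left (by omega) _
      _ ≤ 4 * h * D' * (2 * d) ^ n := Nat.le_mul_of_pos_left _ (by positivity)
      _ = 4 * h * (2 * d) ^ n * D' := by ring
      _ ≤ s := hs1
  have hX0 : 0 < X.card := lt_of_lt_of_le (by positivity) hX
  obtain ⟨x, -⟩ := Finset.card_pos.1 hX0
  have : Nonempty V := ⟨x⟩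
  obtain ⟨A, hA, hdis⟩ := exists_disjoint_family X s (Finset.univ : Finset U) (by
    rw [Finset.card_univ, ← hn]
    calc n * s ≤ h * s := Nat.mul_le_mul_right _ (by omega)
      _ ≤ X.card := Nat.mul_div_le _ _)
  rcases embed_or_pair F G X hd0 n Finset.univ A s (by simp [hn]) (show n ≤ h by omega) hs2
    hA hdis with ⟨φ, hφ, hφa⟩ | ⟨A₀, hA₀, B₀, hB₀, h1, h2, h3, O, hO, h4⟩
  · exfalso
    have hinj : Function.Injective φ := by
      intro u w huw
      by_contra hne
      have := Finset.disjoint_left.1 (hdis u (by simp) w (by simp) hne) (hφ u (by simp))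
      exact this (huw ▸ hφ w (by simp))
    refine hF ⟨⟨⟨φ, hinj⟩, ?_⟩⟩
    intro u w
    by_cases hne : u = w
    · subst hne; simp
    · exact hφa u (by simp) w (by simp) hne
  · have hB1 : 4 * h * D' ≤ B₀.card := by
      refine Nat.le_of_mul_le_mul_left (c := (2 * d) ^ n) ?_ hpos
      calc _ = 4 * h * (2 * d) ^ n * D' := by ring
        _ ≤ _ := hs1.trans h1
    obtain ⟨B, hB, hBc⟩ := Finset.exists_subset_card_eq (Nat.div_le_self B₀.card h)
    have hB2 : 4 * D' ≤ B.card := by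
      rw [hBc, Nat.le_div_iff_mul_le hh0]
      calc _ = 4 * h * D' := by ring
        _ ≤ _ := hB1
    have hB3 : B₀.card ≤ 2 * h * B.card := by
      have := Nat.lt_div_mul_add (a := B₀.card) hh0
      rw [← hBc] at this
      nlinarith
    refine ⟨A₀, hA₀, B, hB.trans hB₀, h3.mono_right hB, ?_, by omega, ?_, O, hO, ?_⟩
    · rw [hBc]
      exact Nat.div_le_of_le_mul h2
    · have h5 : X.card ≤ 2 * h * s := by
        have := Nat.lt_div_mul_add (a := X.card) hh0
        rw [← hs] at this
        have : 0 < s := lt_of_lt_of_le (by positivity) hs2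
        nlinarith
      calc D' * X.card ≤ D' * (2 * h * ((2 * d) ^ n * (2 * h * B.card))) := by
            gcongr
            exact h5.trans (by gcongr; exact h1.trans (by gcongr))
        _ = _ := by ring
    · intro a ha
      have h5 := h4 a ha
      have h6 : (nb O B a).card ≤ (nb O B₀ a).card := Finset.card_le_card (nb_mono O hB a)
      refine Nat.le_of_mul_le_mul_left (c := 2 * h) ?_ (by positivity)
      calc _ = (nb O B a).card * d := by rw [hd]; ring
        _ ≤ (nb O B₀ a).card * d := by gcongr
        _ ≤ B₀.card := h5
        _ ≤ _ := hB3

lemma exists_sparse_blocks {U : Type*} [Fintype U] (F : SimpleGraph U) (N : ℕ) :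
    ∀ p q : ℕ, p + q = N → ∃ D > 0, ∀ {V : Type*} (G : SimpleGraph V), ¬ Nonempty (F ↪g G) →
      ∀ X : Finset V, D ≤ X.card → ∃ m : ℕ, 0 < m ∧ m ≤ X.card ∧ X.card ≤ D * m ∧ ∃ Y ⊆ X,
        (Y.card = p * m ∧ ∑ v ∈ Y, (nb G Y v).card ≤ 2 * p * m ^ 2) ∨
        (Y.card = q * m ∧ ∑ v ∈ Y, (nb Gᶜ Y v).card ≤ 2 * q * m ^ 2) := by
  induction N with
  | zero =>
    intro p q hpq
    obtain rfl : p = 0 := by omega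
    exact ⟨1, one_pos, fun G _ X hX => ⟨X.card, hX, le_rfl, by simp, ∅, by simp, by simp⟩⟩
  | succ N ih =>
    intro p q hpq
    rcases Nat.eq_zero_or_pos p with rfl | hp
    · exact ⟨1, one_pos, fun G _ X hX => ⟨X.card, hX, le_rfl, by simp, ∅, by simp, by simp⟩⟩
    rcases Nat.eq_zero_or_pos q with rfl | hq
    · exact ⟨1, one_pos, fun G _ X hX => ⟨X.card, hX, le_rfl, by simp, ∅, by simp, by simp⟩⟩
    obtain ⟨p, rfl⟩ := Nat.exists_eq_succ_of_ne_zero hp.ne'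
    obtain ⟨q, rfl⟩ := Nat.exists_eq_succ_of_ne_zero hq.ne'
    obtain ⟨D₁, hD₁, ih₁⟩ := ih p (q + 1) (by omega)
    obtain ⟨D₂, hD₂, ih₂⟩ := ih (p + 1) q (by omega)
    set D' := max D₁ D₂ with hD'
    obtain ⟨D, hD, hpair⟩ := exists_sparse_pair F _ D' rfl (lt_max_of_lt_left hD₁)
    refine ⟨D, hD, ?_⟩
    intro V G hF X hX
    obtain ⟨A, hA, B, hB, hAB, hBA, hDB, hXB, O, hO, hsp⟩ := hpair G hF X hX
    have hmX : ∀ m, B.card ≤ D' * m → X.card ≤ D * m := by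
      intro m hm
      refine Nat.le_of_mul_le_mul_left (c := D') ?_ (lt_max_of_lt_left hD₁)
      calc _ ≤ D * B.card := hXB
        _ ≤ D * (D' * m) := by gcongr
        _ = _ := by ring
    have hsp' : ∀ m, B.card ≤ D' * m → ∀ Y ⊆ B, ∀ a ∈ A, 2 * (nb O Y a).card ≤ m := by
      intro m hm Y hY a ha
      refine Nat.le_of_mul_le_mul_left (c := D') ?_ (lt_max_of_lt_left hD₁)
      have h1 : (nb O Y a).card ≤ (nb O B a).card := Finset.card_le_card (nb_mono O hY a)
      calc _ = (nb O Y a).card * (2 * D') := by ring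
        _ ≤ (nb O B a).card * (2 * D') := by gcongr
        _ ≤ _ := (hsp a ha).trans hm
    have hBX := Finset.card_le_card hB
    rcases hO with rfl | rfl
    · obtain ⟨m, hm, hmB, hBm, Y, hY, h⟩ := ih₁ O hF B ((le_max_left _ _).trans hDB)
      have hBm' : B.card ≤ D' * m := hBm.trans (Nat.mul_le_mul_right _ (le_max_left _ _))
      refine ⟨m, hm, hmB.trans hBX, hmX m hBm', ?_⟩
      rcases h with ⟨h1, h2⟩ | h
      · obtain ⟨A', hA', hA'c⟩ := Finset.exists_subset_card_eq (hmB.trans hBA)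
        have hd : Disjoint A' Y := hAB.mono hA' hY
        refine ⟨A' ∪ Y, Finset.union_subset (hA'.trans hA) (hY.trans hB), Or.inl ⟨?_, ?_⟩⟩
        · rw [Finset.card_union_of_disjoint hd, hA'c, h1, Nat.succ_eq_add_one]
          ring
        · exact sum_card_nb_union_le O hd hA'c (fun a ha => hsp' m hBm' Y hY a (hA' ha)) h2
      · exact ⟨Y, hY.trans hB, Or.inr h⟩
    · obtain ⟨m, hm, hmB, hBm, Y, hY, h⟩ := ih₂ G hF B ((le_max_right _ _).trans hDB)
      have hBm' : B.card ≤ D' * m := hBm.trans (Nat.mul_le_mul_right _ (le_max_right _ _))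
      refine ⟨m, hm, hmB.trans hBX, hmX m hBm', ?_⟩
      rcases h with h | ⟨h1, h2⟩
      · exact ⟨Y, hY.trans hB, Or.inl h⟩
      · obtain ⟨A', hA', hA'c⟩ := Finset.exists_subset_card_eq (hmB.trans hBA)
        have hd : Disjoint A' Y := hAB.mono hA' hY
        refine ⟨A' ∪ Y, Finset.union_subset (hA'.trans hA) (hY.trans hB), Or.inr ⟨?_, ?_⟩⟩
        · rw [Finset.card_union_of_disjoint hd, hA'c, h1, Nat.succ_eq_add_one]
          ring
        · exact sum_card_nb_union_le Gᶜ hd hA'c (fun a ha => hsp' m hBm' Y hY a (hA' ha)) h2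

/-- Dropping the vertices of large degree. -/
lemma exists_small_degree (G : SimpleGraph V) {Y : Finset V} {m p : ℕ} (hY : Y.card = p * m)
    (hm : 0 < m) (hsum : ∑ v ∈ Y, (nb G Y v).card ≤ 2 * p * m ^ 2) :
    ∃ Z ⊆ Y, p * m ≤ 2 * Z.card ∧ ∀ v ∈ Z, (nb G Z v).card ≤ 4 * m := by
  refine ⟨Y.filter (fun v => (nb G Y v).card ≤ 4 * m), Finset.filter_subset _ _, ?_, ?_⟩
  · have h1 := Finset.card_filter_add_card_filter_not (s := Y) (fun v => (nb G Y v).card ≤ 4 * m)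
    have h2 : (Y.filter (fun v => ¬ (nb G Y v).card ≤ 4 * m)).card * (4 * m) ≤ 2 * p * m ^ 2 := by
      calc _ = ∑ v ∈ Y.filter (fun v => ¬ (nb G Y v).card ≤ 4 * m), 4 * m := by simp
        _ ≤ ∑ v ∈ Y.filter (fun v => ¬ (nb G Y v).card ≤ 4 * m), (nb G Y v).card :=
          Finset.sum_le_sum fun a ha => (not_le.1 (Finset.mem_filter.1 ha).2).le
        _ ≤ ∑ v ∈ Y, (nb G Y v).card := Finset.sum_le_sum_of_subset (Finset.filter_subset _ _)
        _ ≤ _ := hsum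
    have h3 : (Y.filter (fun v => ¬ (nb G Y v).card ≤ 4 * m)).card * 2 ≤ p * m := by
      refine Nat.le_of_mul_le_mul_left (c := 2 * m) ?_ (by positivity)
      nlinarith
    omega
  · intro v hv
    exact (Finset.card_le_card (nb_mono G (Finset.filter_subset _ _) v)).trans
      (Finset.mem_filter.1 hv).2

/-- Rödl's theorem: graphs with a forbidden induced subgraph have linear sized sets that are very
sparse in the graph or in its complement. -/
lemma exists_sparse_subset {U : Type*} [Fintype U] (F : SimpleGraph U) {ε : ℝ} (hε : 0 < ε) :
    ∃ δ : ℝ, 0 < δ ∧ ∀ {V : Type*} (G : SimpleGraph V), ¬ Nonempty (F ↪g G) →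
      ∀ X : Finset V, X.Nonempty → ∃ Y ⊆ X, Y.Nonempty ∧ δ * X.card ≤ Y.card ∧
        ∃ O, (O = G ∨ O = Gᶜ) ∧ ∀ v ∈ Y, ((nb O Y v).card : ℝ) ≤ ε * Y.card := by
  obtain ⟨p, hp⟩ := exists_nat_gt (8 / ε)
  have hp0 : (0 : ℝ) < p := lt_trans (by positivity) hp
  have hp0' : 0 < p := by exact_mod_cast hp0
  have hpε : 8 ≤ p * ε := by rw [div_lt_iff₀ hε] at hp; exact hp.le
  obtain ⟨D, hD, h⟩ := exists_sparse_blocks F (p + p) p p rfl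
  have hD' : (0 : ℝ) < D := by exact_mod_cast hD
  have hD1 : (1 : ℝ) ≤ D := by exact_mod_cast hD
  refine ⟨1 / (2 * D), by positivity, ?_⟩
  intro V G hF X hX
  by_cases hXD : D ≤ X.card
  · obtain ⟨m, hm, -, hXm, Y, hY, h⟩ := h G hF X hXD
    have key : ∃ O, (O = G ∨ O = Gᶜ) ∧ ∃ Z ⊆ Y, p * m ≤ 2 * Z.card ∧
        ∀ v ∈ Z, (nb O Z v).card ≤ 4 * m := by
      rcases h with ⟨h1, h2⟩ | ⟨h1, h2⟩
      · exact ⟨G, Or.inl rfl, exists_small_degree G h1 hm h2⟩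
      · exact ⟨Gᶜ, Or.inr rfl, exists_small_degree Gᶜ h1 hm h2⟩
    obtain ⟨O, hO, Z, hZ, h1, h2⟩ := key
    have h1' : (p : ℝ) * m ≤ 2 * Z.card := by exact_mod_cast h1
    have hm' : (0 : ℝ) < m := by exact_mod_cast hm
    have hXm' : (X.card : ℝ) ≤ D * m := by exact_mod_cast hXm
    have hp1 : (1 : ℝ) ≤ p := by exact_mod_cast hp0'
    refine ⟨Z, hZ.trans hY, Finset.card_pos.1 ?_, ?_, O, hO, fun v hv => ?_⟩
    · have : 0 < p * m := by positivity
      omega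
    · rw [one_div, inv_mul_le_iff₀ (by positivity)]
      nlinarith
    · have h3 : ((nb O Z v).card : ℝ) ≤ 4 * m := by exact_mod_cast h2 v hv
      nlinarith
  · obtain ⟨x, hx⟩ := hX
    have hXD' : (X.card : ℝ) ≤ D := by exact_mod_cast (not_le.1 hXD).le
    refine ⟨{x}, by simpa using hx, by simp, ?_, G, Or.inl rfl, fun v hv => ?_⟩
    · rw [one_div, inv_mul_le_iff₀ (by positivity)]
      simp
      linarith
    · rw [Finset.mem_singleton] at hv
      subst hv
      have : nb G {v} v = ∅ := by
        ext w
        rw [mem_nb]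
        simp only [Finset.mem_singleton, Finset.notMem_empty, iff_false, not_and]
        rintro rfl
        exact G.loopless.irrefl _
      rw [this]
      simp
      positivity

/-- A vertex `v` with a stable set `T` of neighbours, each member `a` of `T` having a private block
`P a` of neighbours of size `k`, where `v` has no neighbours in the blocks, and no member of `T`
shares its colour with a vertex in a block, for any colouring in `C`. -/
structure StarComb (G : SimpleGraph V) (C : Finset (V → V)) (X T : Finset V) (P : V → Finset V)
    (v : V) (k : ℕ) : Prop where
  subset : T ⊆ X
  adj_center : ∀ a ∈ T, G.Adj v a
  stable : G.IsIndepSet (T : Set V)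
  block_subset : ∀ a ∈ T, P a ⊆ X
  block_card : ∀ a ∈ T, (P a).card = k
  adj_block : ∀ a ∈ T, ∀ b ∈ P a, G.Adj a b
  not_adj_block : ∀ a ∈ T, ∀ b ∈ P a, ∀ a' ∈ T, a' ≠ a → ¬ G.Adj a' b
  center_block : ∀ a ∈ T, ∀ b ∈ P a, v ≠ b ∧ ¬ G.Adj v b
  colour : ∀ c ∈ C, ∀ a ∈ T, ∀ a' ∈ T, ∀ b ∈ P a', c a ≠ c b

lemma exists_colour_group (c : V → V) {A Y : Finset V} {z l : ℝ} (hA : A ⊆ Y) (hY : Y.Nonempty)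
    (hz : ∀ x, ((Y.filter (fun y => c y = x)).card : ℝ) ≤ z * Y.card) (hz0 : 0 ≤ z)
    (hzl : 2 * z ≤ l) (hl : l ≤ 1) : ∃ A₁ ⊆ A, ∃ S ⊆ Y, (∀ a ∈ A₁, ∀ y ∈ Y, c a = c y → y ∈ S) ∧
      (S.card : ℝ) ≤ l * Y.card ∧ z * A.card ≤ A₁.card := by
  have hY0 : (0 : ℝ) < Y.card := by exact_mod_cast hY.card_pos
  set yc : V → ℝ := fun x => (Y.filter (fun y => c y = x)).card with hyc
  set ac : V → ℝ := fun x => (A.filter (fun y => c y = x)).card with hac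
  have hsum : ∀ (B Q : Finset V), ((B.filter (fun y => c y ∈ Q)).card : ℝ)
      = ∑ x ∈ Q, ((B.filter (fun y => c y = x)).card : ℝ) := by
    intro B Q
    have h := Finset.card_eq_sum_card_fiberwise (s := B.filter (fun y => c y ∈ Q)) (t := Q) (f := c)
      (fun y hy => (Finset.mem_filter.1 hy).2)
    rw [h]
    push_cast
    refine Finset.sum_congr rfl fun x hx => ?_
    congr 2
    ext y
    simp only [Finset.mem_filter]
    constructor
    · rintro ⟨⟨h1, -⟩, h2⟩
      exact ⟨h1, h2⟩
    · rintro ⟨h1, h2⟩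
      exact ⟨⟨h1, h2 ▸ hx⟩, h2⟩
  have hfull : ∀ B ⊆ Y, B.filter (fun y => c y ∈ Y.image c) = B := by
    intro B hB
    exact Finset.filter_true_of_mem fun y hy => Finset.mem_image_of_mem c (hB hy)
  obtain ⟨Q, hQ, hmin⟩ := Finset.exists_min_image ((Y.image c).powerset.filter (fun Q =>
      (∑ x ∈ Q, yc x) * A.card ≤ (∑ x ∈ Q, ac x) * Y.card ∧ (l - z) * Y.card ≤ ∑ x ∈ Q, yc x))
      Finset.card ⟨Y.image c, by
        simp only [Finset.mem_filter, Finset.mem_powerset, subset_rfl, true_and]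
        rw [← hsum, ← hsum, hfull Y subset_rfl, hfull A hA]
        refine ⟨by rw [mul_comm], ?_⟩
        nlinarith⟩
  simp only [Finset.mem_filter, Finset.mem_powerset, and_imp] at hQ hmin
  obtain ⟨hQs, hQ1, hQ2⟩ := hQ
  have hQl : ∑ x ∈ Q, yc x ≤ l * Y.card := by
    by_contra hcon
    push Not at hcon
    obtain ⟨x, hx, hxg⟩ : ∃ x ∈ Q, ac x * Y.card - yc x * A.card
        ≤ (∑ x ∈ Q, ac x) * Y.card - (∑ x ∈ Q, yc x) * A.card := by
      by_contra h
      push Not at h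
      rcases Q.eq_empty_or_nonempty with rfl | ⟨x, hx⟩
      · simp only [Finset.sum_empty] at hcon
        nlinarith
      · have h1 := h x hx
        have h2 : ac x * Y.card - yc x * A.card ≤ ∑ x ∈ Q, (ac x * Y.card - yc x * A.card) :=
          Finset.single_le_sum (f := fun x => ac x * Y.card - yc x * A.card)
            (fun y hy => by have := h y hy; linarith) hx
        rw [Finset.sum_sub_distrib, ← Finset.sum_mul, ← Finset.sum_mul] at h2
        linarith
    have e1 := Finset.add_sum_erase Q yc hx
    have e2 := Finset.add_sum_erase Q ac hx
    have h3 := hmin (Q.erase x) ((Finset.erase_subset _ _).trans hQs) (by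
      rw [← e1, ← e2] at hxg
      linarith) (by
      have : yc x ≤ z * Y.card := hz x
      linarith)
    rw [Finset.card_erase_of_mem hx] at h3
    have := Finset.card_pos.2 ⟨x, hx⟩
    omega
  refine ⟨A.filter (fun y => c y ∈ Q), Finset.filter_subset _ _,
    Y.filter (fun y => c y ∈ Q), Finset.filter_subset _ _, ?_, ?_, ?_⟩
  · intro a ha y hy hay
    rw [Finset.mem_filter] at ha ⊢
    exact ⟨hy, hay ▸ ha.2⟩
  · rw [hsum]
    exact hQl
  · rw [hsum]
    refine le_of_mul_le_mul_right ?_ hY0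
    refine le_trans ?_ hQ1
    have : z * Y.card ≤ ∑ x ∈ Q, yc x := by nlinarith
    have hA0 : (0 : ℝ) ≤ A.card := by positivity
    nlinarith

lemma exists_colours_group (C : Finset (V → V)) {A Y : Finset V} {z l : ℝ} (hA : A ⊆ Y)
    (hY : Y.Nonempty)
    (hz : ∀ c ∈ C, ∀ x, ((Y.filter (fun y => c y = x)).card : ℝ) ≤ z * Y.card) (hz0 : 0 ≤ z)
    (hzl : 2 * z ≤ l) (hl : l ≤ 1) : ∃ A₁ ⊆ A, ∃ S ⊆ Y,
      (∀ c ∈ C, ∀ a ∈ A₁, ∀ y ∈ Y, c a = c y → y ∈ S) ∧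
      (S.card : ℝ) ≤ C.card * (l * Y.card) ∧ z ^ C.card * A.card ≤ A₁.card := by
  induction C using Finset.induction_on with
  | empty => exact ⟨A, subset_rfl, ∅, by simp, by simp, by simp, by simp⟩
  | insert c C hc ih =>
    obtain ⟨A₁, hA₁, S, hS, h1, h2, h3⟩ := ih fun c hc => hz c (Finset.mem_insert_of_mem hc)
    obtain ⟨A₂, hA₂, S', hS', h1', h2', hcard⟩ := exists_colour_group c (hA₁.trans hA) hY
      (hz c (Finset.mem_insert_self _ _)) hz0 hzl hl
    refine ⟨A₂, hA₂.trans hA₁, S ∪ S', Finset.union_subset hS hS', ?_, ?_, ?_⟩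
    · intro d hd a ha y hy hay
      rcases Finset.mem_insert.1 hd with rfl | hd
      · exact Finset.mem_union_right _ (h1' a ha y hy hay)
      · exact Finset.mem_union_left _ (h1 d hd a (hA₂ ha) y hy hay)
    · have : ((S ∪ S').card : ℝ) ≤ S.card + S'.card := by exact_mod_cast Finset.card_union_le _ _
      rw [Finset.card_insert_of_notMem hc]
      push_cast
      linarith
    · rw [Finset.card_insert_of_notMem hc, pow_succ]
      calc z ^ C.card * z * A.card = z * (z ^ C.card * A.card) := by ring
        _ ≤ z * A₁.card := by gcongr
        _ ≤ _ := hcard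

/-- One step of the greedy construction of a large stable set: either there is a star-comb or the
stable set can be enlarged. -/
lemma comb_or_extend (G : SimpleGraph V) (C : Finset (V → V)) (Y : Finset V) (hY : Y.Nonempty)
    {c κ z θ d s : ℝ} (hz0 : 0 < z) (hθ : θ ≤ 1) (hd : 0 < d)
    (hκ : ∀ I B' : Finset V, B'.Nonempty → (∀ b ∈ B', ∃ a ∈ I, G.Adj a b) →
      ∃ T ⊆ I, ∃ P : V → Finset V, ∃ k : ℕ, T.Nonempty ∧ 0 < k ∧
        (∀ a ∈ T, P a ⊆ B' ∧ (P a).card = k ∧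
          ∀ b ∈ P a, G.Adj a b ∧ ∀ a' ∈ T, a' ≠ a → ¬ G.Adj a' b) ∧
        κ * B'.card ≤ k * (T.card : ℝ) ^ (1 + c))
    (hκ0 : 0 < κ)
    (hzθ : 8 * (C.card + 1) * z ≤ θ)
    (hdeg : ∀ v ∈ Y, ((nb G Y v).card : ℝ) ≤ z * Y.card)
    (hcol : ∀ c ∈ C, ∀ x, ((Y.filter (fun y => c y = x)).card : ℝ) ≤ z * Y.card)
    (hhalf : ∀ Z ⊆ Y, (Y.card : ℝ) ≤ 2 * Z.card → ∃ v ∈ Z, d * Y.card ≤ (nb G Z v).card)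
    (hst : ∀ A ⊆ Y, z ^ C.card * d * Y.card ≤ A.card → s ≤ stab G A)
    (J W : Finset V) (hJ : J ⊆ Y) (hJs : G.IsIndepSet (J : Set V)) (hW : W ⊆ Y) (hJW : J ⊆ W)
    (hnW : ∀ a ∈ J, nb G Y a ⊆ W) (hWc : (Y.card : ℝ) ≤ 2 * (Y \ W).card) :
    (∃ T P v k, StarComb G C Y T P v k ∧ κ * (θ * Y.card) ≤ k * (T.card : ℝ) ^ (1 + c)) ∨
    ∃ J' W', J' ⊆ Y ∧ G.IsIndepSet (J' : Set V) ∧ W' ⊆ Y ∧ J' ⊆ W' ∧ (∀ a ∈ J', nb G Y a ⊆ W') ∧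
      (W'.card : ℝ) ≤ W.card + 2 * θ * Y.card ∧ J.card + s ≤ J'.card := by
  have hY0 : (0 : ℝ) < Y.card := by exact_mod_cast hY.card_pos
  have hC0 : (0 : ℝ) < C.card + 1 := by positivity
  have hθ0 : 0 < θ := lt_of_lt_of_le (by positivity) hzθ
  obtain ⟨v, hv, hvd⟩ := hhalf (Y \ W) Finset.sdiff_subset hWc
  rw [Finset.mem_sdiff] at hv
  have hA : nb G (Y \ W) v ⊆ Y := (nb_subset _ _ _).trans Finset.sdiff_subset
  have hl1 : 2 * z ≤ θ / (4 * (C.card + 1)) := by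
    rw [le_div_iff₀ (by positivity)]
    linarith
  have hl2 : θ / (4 * (C.card + 1)) ≤ 1 := by
    rw [div_le_one (by positivity)]
    have : (0 : ℝ) ≤ C.card := by positivity
    linarith
  obtain ⟨A₁, hA₁, S, hS, hcS, hSc, hA₁c⟩ := exists_colours_group C hA hY hcol hz0.le hl1 hl2
  have hs : s ≤ stab G A₁ := hst A₁ (hA₁.trans hA) (by
    refine le_trans ?_ hA₁c
    rw [mul_assoc]
    gcongr)
  obtain ⟨I, hI, hIs, hIc⟩ := exists_stab G A₁
  have hIv : ∀ a ∈ I, a ∈ Y ∧ a ∉ W ∧ G.Adj v a := by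
    intro a ha
    have := mem_nb.1 (hA₁ (hI ha))
    rw [Finset.mem_sdiff] at this
    exact ⟨this.1.1, this.1.2, this.2⟩
  set E := S ∪ nb G Y v ∪ {v} with hE
  set B' := (Y.filter (fun b => ∃ a ∈ I, G.Adj a b)) \ E with hB'
  have hB'Y : B' ⊆ Y := Finset.sdiff_subset.trans (Finset.filter_subset _ _)
  have hB'm : ∀ b ∈ B', b ∉ S ∧ ¬ G.Adj v b ∧ v ≠ b := by
    intro b hb
    have hbY := hB'Y hb
    rw [hB', Finset.mem_sdiff, hE] at hb
    have := hb.2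
    simp only [Finset.mem_union, Finset.mem_singleton, mem_nb, hbY, true_and, not_or] at this
    exact ⟨this.1.1, this.1.2, fun h => this.2 h.symm⟩
  by_cases hbig : θ * Y.card ≤ B'.card
  · left
    have hB'0 : B'.Nonempty := by
      rw [← Finset.card_pos]
      have : (0 : ℝ) < B'.card := lt_of_lt_of_le (by positivity) hbig
      exact_mod_cast this
    obtain ⟨T, hT, P, k, hT0, hk0, hP, hle⟩ := hκ I B' hB'0 (fun b hb =>
      (Finset.mem_filter.1 (Finset.mem_sdiff.1 hb).1).2)
    refine ⟨T, P, v, k, ⟨fun a ha => (hIv a (hT ha)).1, fun a ha => (hIv a (hT ha)).2.2,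
      hIs.mono (by exact_mod_cast hT), fun a ha => (hP a ha).1.trans hB'Y,
      fun a ha => (hP a ha).2.1, fun a ha b hb => ((hP a ha).2.2 b hb).1,
      fun a ha b hb => ((hP a ha).2.2 b hb).2, fun a ha b hb => ?_, ?_⟩, ?_⟩
    · have := hB'm b ((hP a ha).1 hb)
      exact ⟨this.2.2, this.2.1⟩
    · intro c hc a ha a' ha' b hb h
      have h1 := (hP a' ha').1 hb
      exact (hB'm b h1).1 (hcS c hc a (hI (hT ha)) b (hB'Y h1) h)
    · exact le_trans (by gcongr) hle
  · right
    push Not at hbig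
    have hIW : ∀ a ∈ I, nb G Y a ⊆ W ∪ (B' ∪ E) := by
      intro a ha b hb
      rw [mem_nb] at hb
      by_cases hbE : b ∈ E
      · exact Finset.mem_union_right _ (Finset.mem_union_right _ hbE)
      · refine Finset.mem_union_right _ (Finset.mem_union_left _ ?_)
        exact Finset.mem_sdiff.2 ⟨Finset.mem_filter.2 ⟨hb.1, a, ha, hb.2⟩, hbE⟩
    have hEY : E ⊆ Y := Finset.union_subset (Finset.union_subset hS (nb_subset _ _ _))
      (by simpa using hv.1)
    refine ⟨J ∪ I, W ∪ (B' ∪ E), Finset.union_subset hJ fun a ha => (hIv a ha).1, ?_,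
      Finset.union_subset hW (Finset.union_subset hB'Y hEY), ?_, ?_, ?_, ?_⟩
    · intro a ha b hb hne hab
      simp only [Finset.coe_union, Set.mem_union, Finset.mem_coe] at ha hb
      rcases ha with ha | ha <;> rcases hb with hb | hb
      · exact hJs ha hb hne hab
      · exact (hIv b hb).2.1 (hnW a ha (mem_nb.2 ⟨(hIv b hb).1, hab⟩))
      · exact (hIv a ha).2.1 (hnW b hb (mem_nb.2 ⟨(hIv a ha).1, hab.symm⟩))
      · exact hIs ha hb hne hab
    · refine Finset.union_subset (hJW.trans Finset.subset_union_left) fun a ha => ?_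
      refine Finset.mem_union_right _ (Finset.mem_union_right _ ?_)
      simp only [hE, Finset.mem_union, mem_nb]
      exact Or.inl (Or.inr ⟨(hIv a ha).1, (hIv a ha).2.2⟩)
    · intro a ha
      rcases Finset.mem_union.1 ha with ha | ha
      · exact (hnW a ha).trans Finset.subset_union_left
      · exact hIW a ha
    · have h1 : ((W ∪ (B' ∪ E)).card : ℝ)
          ≤ W.card + (B'.card + (S.card + (nb G Y v).card + 1)) := by
        have e1 := Finset.card_union_le W (B' ∪ E)
        have e2 := Finset.card_union_le B' E
        have e3 := Finset.card_union_le (S ∪ nb G Y v) {v}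
        have e4 := Finset.card_union_le S (nb G Y v)
        rw [Finset.card_singleton] at e3
        have : (W ∪ (B' ∪ E)).card ≤ W.card + (B'.card + (S.card + (nb G Y v).card + 1)) := by
          rw [← hE] at e3
          omega
        exact_mod_cast this
      have h2 : (1 : ℝ) ≤ z * Y.card := by
        have h3 : 0 < (nb G Y v).card := by
          have h4 : (0 : ℝ) < (nb G (Y \ W) v).card := lt_of_lt_of_le (by positivity) hvd
          have h5 : 0 < (nb G (Y \ W) v).card := by exact_mod_cast h4
          exact h5.trans_le (Finset.card_le_card (nb_mono G Finset.sdiff_subset v))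
        have h4 : (1 : ℝ) ≤ (nb G Y v).card := by exact_mod_cast h3
        exact h4.trans (hdeg v hv.1)
      have h3 := hdeg v hv.1
      have h4 : (C.card : ℝ) * (θ / (4 * (C.card + 1)) * Y.card) ≤ θ / 4 * Y.card := by
        rw [← mul_assoc]
        refine mul_le_mul_of_nonneg_right ?_ hY0.le
        rw [mul_div_assoc', div_le_iff₀ (by positivity)]
        nlinarith
      have h5 : z * Y.card ≤ θ / 8 * Y.card := by
        refine mul_le_mul_of_nonneg_right ?_ hY0.le
        have : (0 : ℝ) ≤ C.card * z := by positivity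
        linarith
      have h6 : 0 < θ * Y.card := by positivity
      linarith
    · have hd : Disjoint J I := by
        rw [Finset.disjoint_left]
        intro a ha ha'
        exact (hIv a ha').2.1 (hJW ha)
      rw [Finset.card_union_of_disjoint hd, hIc]
      push_cast
      linarith

/-- A set with regular degrees in which the stability number is robust contains a star-comb. -/
lemma exists_starComb_of_regular (G : SimpleGraph V) (C : Finset (V → V)) (Y : Finset V)
    (hY : Y.Nonempty) {c κ z θ d M : ℝ} (hz0 : 0 < z) (hθ : θ < 1 / 64) (hd : 0 < d)
    (hκ : ∀ I B' : Finset V, B'.Nonempty → (∀ b ∈ B', ∃ a ∈ I, G.Adj a b) →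
      ∃ T ⊆ I, ∃ P : V → Finset V, ∃ k : ℕ, T.Nonempty ∧ 0 < k ∧
        (∀ a ∈ T, P a ⊆ B' ∧ (P a).card = k ∧
          ∀ b ∈ P a, G.Adj a b ∧ ∀ a' ∈ T, a' ≠ a → ¬ G.Adj a' b) ∧
        κ * B'.card ≤ k * (T.card : ℝ) ^ (1 + c))
    (hκ0 : 0 < κ)
    (hzθ : 8 * (C.card + 1) * z ≤ θ)
    (hdeg : ∀ v ∈ Y, ((nb G Y v).card : ℝ) ≤ z * Y.card)
    (hcol : ∀ c ∈ C, ∀ x, ((Y.filter (fun y => c y = x)).card : ℝ) ≤ z * Y.card)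
    (hhalf : ∀ Z ⊆ Y, (Y.card : ℝ) ≤ 2 * Z.card → ∃ v ∈ Z, d * Y.card ≤ (nb G Z v).card)
    (hst : ∀ A ⊆ Y, z ^ C.card * d * Y.card ≤ A.card → √θ * M ≤ stab G A)
    (hM : stab G Y ≤ M) :
    ∃ T P v k, StarComb G C Y T P v k ∧ κ * (θ * Y.card) ≤ k * (T.card : ℝ) ^ (1 + c) := by
  by_contra hcon
  have hY0 : (0 : ℝ) < Y.card := by exact_mod_cast hY.card_pos
  have hC0 : (0 : ℝ) < C.card + 1 := by positivity
  have hθ0 : 0 < θ := lt_of_lt_of_le (by positivity) hzθ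
  have hM0 : 0 < M := by
    have : (0 : ℝ) < stab G Y := by exact_mod_cast stab_pos G hY
    linarith
  have key : ∀ r : ℕ, 4 * θ * r ≤ 1 + 4 * θ → ∃ J W, J ⊆ Y ∧ G.IsIndepSet (J : Set V) ∧ W ⊆ Y ∧
      J ⊆ W ∧ (∀ a ∈ J, nb G Y a ⊆ W) ∧ (W.card : ℝ) ≤ 2 * θ * r * Y.card ∧
      r * (√θ * M) ≤ J.card := by
    intro r
    induction r with
    | zero => exact fun _ => ⟨∅, ∅, by simp [IsIndepSet]⟩
    | succ r ih =>
      intro hr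
      push_cast at hr
      obtain ⟨J, W, h1, h2, h3, h4, h5, h6, h7⟩ := ih (by linarith)
      have hWc : (Y.card : ℝ) ≤ 2 * (Y \ W).card := by
        have e1 : (Y \ W).card + W.card = Y.card := Finset.card_sdiff_add_card_eq_card h3
        have e2 : ((Y \ W).card : ℝ) + W.card = Y.card := by exact_mod_cast e1
        have e3 : 4 * θ * r * Y.card ≤ 1 * Y.card := by
          refine mul_le_mul_of_nonneg_right ?_ hY0.le
          linarith
        linarith
      rcases comb_or_extend G C Y hY hz0 (by linarith) hd hκ hκ0 hzθ hdeg hcol hhalf hst J W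
        h1 h2 h3 h4 h5 hWc with h | ⟨J', W', g1, g2, g3, g4, g5, g6, g7⟩
      · exact absurd h hcon
      · refine ⟨J', W', g1, g2, g3, g4, g5, ?_, ?_⟩
        · push_cast
          linarith
        · push_cast
          linarith
  have hfl := Nat.lt_floor_add_one (1 / (4 * θ))
  have hfl2 := Nat.floor_le (show 0 ≤ 1 / (4 * θ) by positivity)
  set r := ⌊1 / (4 * θ)⌋₊
  have hr1 : 4 * θ * r ≤ 1 := by
    rw [le_div_iff₀ (by positivity)] at hfl2
    linarith
  have hr2 : 1 ≤ 8 * θ * r := by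
    rw [div_lt_iff₀ (by positivity)] at hfl
    nlinarith
  obtain ⟨J, W, h1, h2, -, -, -, -, h7⟩ := key r (by linarith)
  have h8 : (J.card : ℝ) ≤ M := le_trans (by exact_mod_cast le_stab h1 h2) hM
  have h9 : √θ < 1 / 8 := by
    rw [Real.sqrt_lt' (by norm_num)]
    norm_num
    linarith
  have h10 : √θ * √θ = θ := Real.mul_self_sqrt hθ0.le
  have h11 : 0 < √θ := Real.sqrt_pos.2 hθ0
  have h12 : (r : ℝ) * √θ ≤ 1 := by
    refine le_of_mul_le_mul_right ?_ hM0
    linarith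
  have h13 : 1 ≤ 8 * √θ := by
    calc (1 : ℝ) ≤ 8 * (√θ * √θ) * r := by rw [h10]; exact hr2
      _ = 8 * √θ * (r * √θ) := by ring
      _ ≤ 8 * √θ * 1 := by gcongr
      _ = _ := by ring
  linarith

/-- A sparse set contains a subset whose maximum degree is robust under passing to halves. -/
lemma exists_regular_subset (G : SimpleGraph V) {Y : Finset V} (hY : Y.Nonempty) {c η ε K : ℝ}
    (hc : 0 < c) (hc4 : c ≤ 4) (hη : 0 < η) (hηε : η ≤ ε) (hK : 1 ≤ K)
    (hε : ε * 2 ^ (1 + 4 / c) ≤ 1) (hdeg : ∀ v ∈ Y, ((nb G Y v).card : ℝ) ≤ ε * Y.card)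
    (hhalf : ∀ Z ⊆ Y, η * Y.card ≤ 2 * Z.card → ∃ v ∈ Z, η ^ K * Y.card ≤ (nb G Z v).card) :
    ∃ Y' ⊆ Y, Y'.Nonempty ∧ ∃ z, η ≤ z ∧ z ≤ ε ∧ z ^ (c / 4) * Y.card ≤ Y'.card ∧
      (∀ v ∈ Y', ((nb G Y' v).card : ℝ) ≤ z * Y'.card) ∧ η * Y.card ≤ z * Y'.card ∧
      ∀ Z ⊆ Y', (Y'.card : ℝ) ≤ 2 * Z.card →
        ∃ v ∈ Z, z ^ (3 * K) * Y'.card ≤ (nb G Z v).card := by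
  have hY0 : (0 : ℝ) < Y.card := by exact_mod_cast hY.card_pos
  set p : ℝ := 1 + 4 / c with hp
  have hp0 : 0 < p := by positivity
  set D : Finset V → ℝ := fun Z => max ((Z.sup fun v => (nb G Z v).card : ℕ) : ℝ) (η * Y.card)
    with hD
  have hDdeg : ∀ Z, ∀ v ∈ Z, ((nb G Z v).card : ℝ) ≤ D Z := by
    intro Z v hv
    refine le_max_of_le_left ?_
    exact_mod_cast Finset.le_sup (f := fun v => (nb G Z v).card) hv
  obtain ⟨Y', hY', hmin⟩ := Finset.exists_min_image (Y.powerset.filter Finset.Nonempty)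
    (fun Z => D Z / (Z.card : ℝ) ^ p) ⟨Y, by simp [hY]⟩
  simp only [Finset.mem_filter, Finset.mem_powerset, and_imp] at hY' hmin
  obtain ⟨hY'Y, hY'n⟩ := hY'
  have hY'0 : (0 : ℝ) < Y'.card := by exact_mod_cast hY'n.card_pos
  have hD0 : ∀ Z, η * Y.card ≤ D Z := fun Z => le_max_right _ _
  have hDp : ∀ Z, 0 < D Z := fun Z => lt_of_lt_of_le (by positivity) (hD0 Z)
  have hmin' : ∀ Z ⊆ Y, Z.Nonempty → D Y' * ((Z.card : ℝ) / Y'.card) ^ p ≤ D Z := by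
    intro Z hZ hZn
    have hZ0 : (0 : ℝ) < Z.card := by exact_mod_cast hZn.card_pos
    have h := hmin Z hZ hZn
    rw [div_le_div_iff₀ (by positivity) (by positivity)] at h
    rw [Real.div_rpow hZ0.le hY'0.le, mul_div_assoc', div_le_iff₀ (by positivity)]
    exact h
  set z : ℝ := D Y' / Y'.card with hz
  have hzD : z * Y'.card = D Y' := by rw [hz]; field_simp
  have hz0 : 0 < z := div_pos (hDp _) hY'0
  have hle : (Y'.card : ℝ) ≤ Y.card := by exact_mod_cast Finset.card_le_card hY'Y
  have hDY : D Y ≤ ε * Y.card := by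
    refine max_le ?_ (by gcongr)
    obtain ⟨v, hv, h⟩ := Finset.exists_mem_eq_sup Y hY (fun v => (nb G Y v).card)
    rw [h]
    exact hdeg v hv
  have h2p : (1 : ℝ) ≤ 2 ^ p := Real.one_le_rpow (by norm_num) hp0.le
  have hε0 : 0 < ε := hη.trans_le hηε
  have hε1 : ε ≤ 1 := by nlinarith
  have hratio : z ≤ ε * ((Y'.card : ℝ) / Y.card) ^ (4 / c) := by
    have h := (hmin' Y subset_rfl hY).trans hDY
    rw [← hzD, hp, Real.rpow_add (by positivity), Real.rpow_one] at h
    have e : z * Y'.card * ((Y.card : ℝ) / Y'.card * ((Y.card : ℝ) / Y'.card) ^ (4 / c))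
        = z * ((Y.card : ℝ) / Y'.card) ^ (4 / c) * Y.card := by
      field_simp
    rw [e] at h
    have h' := le_of_mul_le_mul_right h hY0
    rw [← inv_div, Real.inv_rpow (by positivity)] at h'
    rwa [← div_eq_mul_inv, div_le_iff₀ (by positivity)] at h'
  have hzε : z ≤ ε := by
    refine hratio.trans ?_
    have : ((Y'.card : ℝ) / Y.card) ^ (4 / c) ≤ 1 :=
      Real.rpow_le_one (by positivity) ((div_le_one hY0).2 hle) (by positivity)
    nlinarith
  have hηz : η ≤ z := by
    rw [hz, le_div_iff₀ hY'0]
    exact le_trans (by gcongr) (hD0 Y')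
  have hz1 : z ≤ 1 := hzε.trans hε1
  have hsize : z ^ (c / 4) * Y.card ≤ Y'.card := by
    have h1 : z ≤ ((Y'.card : ℝ) / Y.card) ^ (4 / c) := by
      refine hratio.trans ?_
      have : 0 ≤ ((Y'.card : ℝ) / Y.card) ^ (4 / c) := by positivity
      nlinarith
    have h2 := Real.rpow_le_rpow hz0.le h1 (by positivity : 0 ≤ c / 4)
    rw [← Real.rpow_mul (by positivity), div_mul_div_comm, mul_comm 4 c, div_self (by positivity),
      Real.rpow_one, le_div_iff₀ hY0] at h2
    exact h2
  refine ⟨Y', hY'Y, hY'n, z, hηz, hzε, hsize, fun v hv => hzD ▸ hDdeg Y' v hv, hzD ▸ hD0 Y', ?_⟩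
  intro Z hZ hZc
  have hZ0 : (0 : ℝ) < Z.card := by linarith
  have hZn : Z.Nonempty := Finset.card_pos.1 (by exact_mod_cast hZ0)
  have h1 := hmin' Z (hZ.trans hY'Y) hZn
  have h2 : z ≤ ((Z.card : ℝ) / Y'.card) ^ p := by
    have h3 : (1 / 2 : ℝ) ≤ (Z.card : ℝ) / Y'.card := by
      rw [div_le_div_iff₀ (by norm_num) hY'0]
      linarith
    have h4 := Real.rpow_le_rpow (by norm_num) h3 hp0.le
    refine le_trans ?_ h4
    rw [Real.div_rpow (by norm_num) (by norm_num), Real.one_rpow, le_div_iff₀ (by positivity)]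
    exact le_trans (by gcongr) hε
  have h3 : z ^ 2 * Y'.card ≤ D Z := by
    refine le_trans ?_ h1
    rw [← hzD]
    calc z ^ 2 * Y'.card = z * Y'.card * z := by ring
      _ ≤ _ := by gcongr
  have hzK : z ^ (3 * K) ≤ z ^ 2 := by
    rw [← Real.rpow_natCast]
    exact Real.rpow_le_rpow_of_exponent_ge hz0 hz1 (by push_cast; linarith)
  rcases le_total (η * Y.card) ((Z.sup fun v => (nb G Z v).card : ℕ) : ℝ) with hcase | hcase
  · have h4 : D Z = ((Z.sup fun v => (nb G Z v).card : ℕ) : ℝ) := max_eq_left hcase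
    obtain ⟨v, hv, h⟩ := Finset.exists_mem_eq_sup Z hZn (fun v => (nb G Z v).card)
    refine ⟨v, hv, ?_⟩
    rw [h4, h] at h3
    exact le_trans (by gcongr) h3
  · have h4 : D Z = η * Y.card := max_eq_right hcase
    rw [h4] at h3
    have h5 : z ^ 3 ≤ η := by
      refine le_of_mul_le_mul_right (le_trans ?_ h3) hY0
      have h6 : z ≤ z ^ (c / 4) := by
        conv_lhs => rw [← Real.rpow_one z]
        exact Real.rpow_le_rpow_of_exponent_ge hz0 hz1 (by linarith)
      calc z ^ 3 * Y.card = z ^ 2 * (z * Y.card) := by ring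
        _ ≤ z ^ 2 * (z ^ (c / 4) * Y.card) := by gcongr
        _ ≤ _ := by gcongr
    obtain ⟨v, hv, hvd⟩ := hhalf Z (hZ.trans hY'Y) (by
      have h7 : η * Y.card ≤ z * Y'.card := hzD ▸ hD0 Y'
      nlinarith)
    refine ⟨v, hv, le_trans ?_ hvd⟩
    have h8 : z ^ (3 * K) ≤ η ^ K := by
      rw [Real.rpow_mul hz0.le]
      refine Real.rpow_le_rpow (by positivity) ?_ (by linarith)
      exact_mod_cast h5
    gcongr

lemma StarComb.mono {G : SimpleGraph V} {C C' : Finset (V → V)} {X X' T : Finset V}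
    {P : V → Finset V} {v : V} {k : ℕ} (h : StarComb G C X T P v k) (hX : X ⊆ X') (hC : C' ⊆ C) :
    StarComb G C' X' T P v k where
  subset := h.subset.trans hX
  adj_center := h.adj_center
  stable := h.stable
  block_subset a ha := (h.block_subset a ha).trans hX
  block_card := h.block_card
  adj_block := h.adj_block
  not_adj_block := h.not_adj_block
  center_block := h.center_block
  colour c hc := h.colour c (hC hc)

lemma exists_rpow_le {a b : ℝ} (ha : 0 < a) (hb : 0 < b) :
    ∃ ε > 0, ∀ z : ℝ, 0 < z → z ≤ ε → z ^ a ≤ b := by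
  refine ⟨b ^ (1 / a), by positivity, fun z hz h => ?_⟩
  have := Real.rpow_le_rpow hz.le h ha.le
  rwa [← Real.rpow_mul hb.le, one_div_mul_cancel ha.ne', Real.rpow_one] at this

lemma width_bounds {c z t k y y' : ℝ} (hc : 0 < c) (hc1 : c ≤ 1) (hz0 : 0 < z) (hz1 : z < 1)
    (ht1 : 1 ≤ t) (hk : 0 ≤ k) (hy : 0 ≤ y) (hy' : 0 < y')
    (hw : z ^ (c / 8) * y' ≤ k * t ^ (1 + c / 8)) (hkz : k ≤ z * y')
    (hsize : z ^ (c / 2 / 4) * y ≤ y') : 1 ≤ z * t ^ 2 ∧ y ≤ k * t ^ (1 + c) := by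
  have ht0 : 0 < t := by linarith
  have hpow : ∀ {a b : ℝ}, a ≤ b → z ^ b ≤ z ^ a := fun h =>
    Real.rpow_le_rpow_of_exponent_ge hz0 hz1.le h
  have htpow : ∀ {a b : ℝ}, a ≤ b → t ^ a ≤ t ^ b := fun h =>
    Real.rpow_le_rpow_of_exponent_le ht1 h
  have hsq : ∀ a : ℝ, (z * t ^ 2) ^ a = z ^ a * t ^ (2 * a) := by
    intro a
    rw [Real.mul_rpow hz0.le (by positivity), Real.rpow_mul ht0.le, Real.rpow_two]
  have hzt : 1 ≤ z * t ^ 2 := by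
    by_contra hlt
    push Not at hlt
    have h1 : z ^ (1 / 8 : ℝ) ≤ z * t ^ (9 / 8 : ℝ) := by
      refine le_of_mul_le_mul_right ?_ hy'
      calc z ^ (1 / 8 : ℝ) * y' ≤ z ^ (c / 8) * y' :=
            mul_le_mul_of_nonneg_right (hpow (by linarith)) hy'.le
        _ ≤ k * t ^ (1 + c / 8) := hw
        _ ≤ z * y' * t ^ (9 / 8 : ℝ) :=
            mul_le_mul hkz (htpow (by linarith)) (by positivity) (by positivity)
        _ = _ := by ring
    have h2 : z = z ^ (7 / 8 : ℝ) * z ^ (1 / 8 : ℝ) := by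
      rw [← Real.rpow_add hz0]
      norm_num
    have h4 : 0 < z ^ (1 / 8 : ℝ) := by positivity
    have h3 : 1 ≤ z ^ (7 / 8 : ℝ) * t ^ (9 / 8 : ℝ) := by
      refine le_of_mul_le_mul_right ?_ h4
      calc 1 * z ^ (1 / 8 : ℝ) ≤ z * t ^ (9 / 8 : ℝ) := by rw [one_mul]; exact h1
        _ = z ^ (7 / 8 : ℝ) * z ^ (1 / 8 : ℝ) * t ^ (9 / 8 : ℝ) := by rw [← h2]
        _ = _ := by ring
    have h5 : (z * t ^ 2) ^ (9 / 16 : ℝ) < 1 :=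
      Real.rpow_lt_one (by positivity) hlt (by norm_num)
    rw [hsq, show (2 * (9 / 16) : ℝ) = 9 / 8 by norm_num] at h5
    have h6 : z ^ (7 / 8 : ℝ) ≤ z ^ (9 / 16 : ℝ) := hpow (by norm_num)
    have h7 : 0 < t ^ (9 / 8 : ℝ) := by positivity
    nlinarith
  refine ⟨hzt, ?_⟩
  have h1 : 1 ≤ z ^ (c / 4) * t ^ (c / 2) := by
    have := Real.one_le_rpow hzt (show 0 ≤ c / 4 by positivity)
    rwa [hsq, show 2 * (c / 4) = c / 2 by ring] at this
  calc y ≤ z ^ (c / 4) * t ^ (c / 2) * y := le_mul_of_one_le_left hy h1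
    _ = t ^ (c / 2) * (z ^ (c / 8) * (z ^ (c / 2 / 4) * y)) := by
      have : z ^ (c / 4) = z ^ (c / 8) * z ^ (c / 2 / 4) := by
        rw [← Real.rpow_add hz0]
        ring_nf
      rw [this]
      ring
    _ ≤ t ^ (c / 2) * (z ^ (c / 8) * y') := by gcongr
    _ ≤ t ^ (c / 2) * (k * t ^ (1 + c / 8)) := by gcongr
    _ = k * t ^ (c / 2 + (1 + c / 8)) := by
      rw [Real.rpow_add ht0 (c / 2)]
      ring
    _ ≤ k * t ^ (1 + c) := mul_le_mul_of_nonneg_left (htpow (by linarith)) hk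

/-- A sparse subset of a set with robust stability number contains a large star-comb. -/
lemma exists_starComb_of_sparse {c K : ℝ} (hc : 0 < c) (hc1 : c ≤ 1) (hK : 1 ≤ K) (j : ℕ) :
    ∃ ε₀ > 0, ∃ σ₀ > 0, ∀ {V : Type*} (G : SimpleGraph V) (C : Finset (V → V)) (X Y : Finset V)
      (σ η ε : ℝ), C.card ≤ j → Y ⊆ X → Y.Nonempty → 0 < σ → σ ≤ σ₀ →
      (∀ Z ⊆ X, (Z.card : ℝ) ^ σ * stab G X ≤ (X.card : ℝ) ^ σ * stab G Z) →
      0 < η → η ≤ ε → ε ≤ ε₀ → ε * X.card ≤ Y.card →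
      (∀ v ∈ Y, ((nb G Y v).card : ℝ) ≤ ε * Y.card) →
      (∀ c ∈ C, ∀ x, ((Y.filter (fun y => c y = x)).card : ℝ) ≤ η * Y.card) →
      (∀ Z ⊆ Y, η * Y.card ≤ 2 * Z.card → ∃ v ∈ Z, η ^ K * Y.card ≤ (nb G Z v).card) →
      ∃ T P v k, StarComb G C Y T P v k ∧ 1 ≤ ε * (T.card : ℝ) ^ 2 ∧
        (Y.card : ℝ) ≤ k * (T.card : ℝ) ^ (1 + c) := by
  obtain ⟨κ, hκ0, hκ⟩ := exists_comb (c := c / 8) (by positivity)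
  obtain ⟨ε₁, hε₁, h₁⟩ := exists_rpow_le one_pos
    (show (0 : ℝ) < 1 / 2 ^ (1 + 4 / (c / 2)) by positivity)
  obtain ⟨ε₂, hε₂, h₂⟩ := exists_rpow_le (show (0 : ℝ) < 1 / 2 by norm_num)
    (show (0 : ℝ) < 1 / (8 * (j + 1)) by positivity)
  obtain ⟨ε₃, hε₃, h₃⟩ := exists_rpow_le (show (0 : ℝ) < c / 16 by positivity)
    (show (0 : ℝ) < min (1 / 65) κ by positivity)
  refine ⟨min ε₁ (min ε₂ ε₃), by positivity, c / 16 / (2 * (j + 3 * K + 2)), by positivity, ?_⟩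
  intro V G C X Y σ η ε hCj hYX hY hσ0 hσ hcrit hη hηε hε hεX hdeg hcol hhalf
  have hε0 : 0 < ε := hη.trans_le hηε
  have hε1' := h₁ ε hε0 (hε.trans (min_le_left _ _))
  rw [Real.rpow_one, le_div_iff₀ (by positivity)] at hε1'
  obtain ⟨Y', hY'Y, hY'n, z, hηz, hzε, hsize, hdeg', hηY, hhalf'⟩ :=
    exists_regular_subset G hY (c := c / 2) (by positivity) (by linarith) hη hηε hK hε1' hdeg hhalf
  have hz0 : 0 < z := hη.trans_le hηz
  have hz2 := h₂ z hz0 (hzε.trans (hε.trans ((min_le_right _ _).trans (min_le_left _ _))))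
  have hz3 := h₃ z hz0 (hzε.trans (hε.trans ((min_le_right _ _).trans (min_le_right _ _))))
  have hzκ : z ^ (c / 16) ≤ κ := hz3.trans (min_le_right _ _)
  have hz65 : z ^ (c / 16) ≤ 1 / 65 := hz3.trans (min_le_left _ _)
  have hz1 : z < 1 := by
    by_contra h
    push Not at h
    have := Real.one_le_rpow h (show 0 ≤ c / 16 by positivity)
    linarith
  have hY0 : (0 : ℝ) < Y.card := by exact_mod_cast hY.card_pos
  have hY'0 : (0 : ℝ) < Y'.card := by exact_mod_cast hY'n.card_pos
  have hX0 : (0 : ℝ) < X.card := by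
    have : (Y.card : ℝ) ≤ X.card := by exact_mod_cast Finset.card_le_card hYX
    linarith
  have hpow : ∀ {a b : ℝ}, a ≤ b → z ^ b ≤ z ^ a := fun h =>
    Real.rpow_le_rpow_of_exponent_ge hz0 hz1.le h
  have hCj' : (C.card : ℝ) ≤ j := by exact_mod_cast hCj
  obtain ⟨T, P, v, k, hcomb, hw⟩ := exists_starComb_of_regular G C Y' hY'n (c := c / 8) (κ := κ)
    (θ := z ^ (c / 16)) (d := z ^ (3 * K)) (M := stab G X) hz0 (by linarith) (by positivity)
    (hκ G) hκ0 (by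
      have h1 : z ≤ z ^ (1 / 2 : ℝ) * z ^ (c / 16) := by
        rw [← Real.rpow_add hz0]
        conv_lhs => rw [← Real.rpow_one z]
        exact hpow (by linarith)
      have h2 : (8 * (C.card + 1) : ℝ) * z ^ (1 / 2 : ℝ) ≤ 1 := by
        rw [le_div_iff₀ (by positivity)] at hz2
        refine le_trans ?_ hz2
        rw [mul_comm]
        gcongr
      calc (8 * (C.card + 1) : ℝ) * z ≤ 8 * (C.card + 1) * (z ^ (1 / 2 : ℝ) * z ^ (c / 16)) := by
            gcongr
        _ = (8 * (C.card + 1) : ℝ) * z ^ (1 / 2 : ℝ) * z ^ (c / 16) := by ring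
        _ ≤ 1 * z ^ (c / 16) := by gcongr
        _ = _ := one_mul _)
    hdeg' (by
      intro c hc x
      refine le_trans ?_ ((hcol c hc x).trans hηY)
      exact_mod_cast Finset.card_le_card (Finset.filter_subset_filter _ hY'Y)) hhalf' (by
      intro A hA hAc
      have h1 : z ^ (j + 3 * K + 2 : ℝ) * X.card ≤ A.card := by
        refine le_trans ?_ hAc
        have h2 : z * X.card ≤ Y.card := le_trans (by gcongr) hεX
        have h3 : z ≤ z ^ (c / 2 / 4) := by
          conv_lhs => rw [← Real.rpow_one z]
          exact hpow (by linarith)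
        have h4 : z * (z * X.card) ≤ Y'.card := by
          refine le_trans ?_ hsize
          gcongr
        have h5 : z ^ (j : ℝ) ≤ z ^ C.card := by
          rw [← Real.rpow_natCast]
          exact hpow hCj'
        calc z ^ (j + 3 * K + 2 : ℝ) * X.card = z ^ (j : ℝ) * z ^ (3 * K) * (z * (z * X.card)) := by
              rw [Real.rpow_add hz0, Real.rpow_add hz0, Real.rpow_two]
              ring
          _ ≤ z ^ C.card * z ^ (3 * K) * Y'.card := by gcongr
      have h2 : z ^ ((j + 3 * K + 2) * σ) * (X.card : ℝ) ^ σ ≤ (A.card : ℝ) ^ σ := by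
        rw [Real.rpow_mul hz0.le, ← Real.mul_rpow (by positivity) (by positivity)]
        exact Real.rpow_le_rpow (by positivity) h1 hσ0.le
      have h3 : √(z ^ (c / 16)) ≤ z ^ ((j + 3 * K + 2) * σ) := by
        rw [Real.sqrt_eq_rpow, ← Real.rpow_mul hz0.le]
        refine hpow ?_
        rw [le_div_iff₀ (by positivity)] at hσ
        linarith
      have h4 := hcrit A (hA.trans (hY'Y.trans hYX))
      have hXσ : 0 < (X.card : ℝ) ^ σ := by positivity
      refine le_of_mul_le_mul_left (le_trans ?_ h4) hXσ
      calc (X.card : ℝ) ^ σ * (√(z ^ (c / 16)) * stab G X)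
          ≤ (X.card : ℝ) ^ σ * (z ^ ((j + 3 * K + 2) * σ) * stab G X) := by gcongr
        _ = z ^ ((j + 3 * K + 2) * σ) * (X.card : ℝ) ^ σ * stab G X := by ring
        _ ≤ _ := by gcongr)
    (by exact_mod_cast stab_mono G (hY'Y.trans hYX))
  refine ⟨T, P, v, k, hcomb.mono hY'Y subset_rfl, ?_⟩
  have hw' : z ^ (c / 8) * Y'.card ≤ k * (T.card : ℝ) ^ (1 + c / 8) := by
    refine le_trans ?_ hw
    calc z ^ (c / 8) * Y'.card = z ^ (c / 16) * (z ^ (c / 16) * Y'.card) := by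
          rw [← mul_assoc, ← Real.rpow_add hz0]
          ring_nf
      _ ≤ _ := by gcongr
  have hTn : T.Nonempty := by
    by_contra h
    rw [Finset.not_nonempty_iff_eq_empty] at h
    rw [h, Finset.card_empty, Nat.cast_zero, Real.zero_rpow (by positivity), mul_zero] at hw'
    have : 0 < z ^ (c / 8) * Y'.card := by positivity
    linarith
  have ht1 : (1 : ℝ) ≤ T.card := by exact_mod_cast hTn.card_pos
  have hkz : (k : ℝ) ≤ z * Y'.card := by
    obtain ⟨a, ha⟩ := hTn
    refine le_trans ?_ (hdeg' a (hcomb.subset ha))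
    rw [← hcomb.block_card a ha]
    have : P a ⊆ nb G Y' a := fun b hb =>
      mem_nb.2 ⟨hcomb.block_subset a ha hb, hcomb.adj_block a ha b hb⟩
    exact_mod_cast Finset.card_le_card this
  obtain ⟨h1, h2⟩ := width_bounds hc hc1 hz0 hz1 ht1 (Nat.cast_nonneg k) hY0.le hY'0 hw' hkz hsize
  exact ⟨h1.trans (by gcongr), h2⟩

/-- The set `X` contains a star-comb with `t` teeth, in the graph or its complement, whose blocks
have almost the largest conceivable size. -/
def HasComb (G : SimpleGraph V) (C : Finset (V → V)) (c : ℝ) (X : Finset V) (t : ℕ) : Prop :=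
  ∃ O, (O = G ∨ O = Gᶜ) ∧ ∃ T P v k, StarComb O C X T P v k ∧ T.card = t ∧
    (X.card : ℝ) ≤ k * (t : ℝ) ^ (1 + c)

/-- A critical set with small colour classes, no very sparse or very dense large subsets, and no
wide star-combs with many teeth. -/
structure Tame (G : SimpleGraph V) (C : Finset (V → V)) (X : Finset V) (N σ c K : ℝ) : Prop where
  crit : Crit G σ X
  colour : ∀ f ∈ C, ∀ x, N * (X.filter (fun y => f y = x)).card ≤ X.card
  degree : ∀ O, (O = G ∨ O = Gᶜ) → ∀ Y ⊆ X, (X.card : ℝ) ≤ N * Y.card →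
    ∃ v ∈ Y, (X.card : ℝ) ≤ N ^ K * (nb O Y v).card
  comb : ∀ t, HasComb G C c X t → (t : ℝ) ≤ N ^ K

lemma Crit.of_eq_or {G O : SimpleGraph V} {σ : ℝ} {X : Finset V} (h : Crit G σ X)
    (hO : O = G ∨ O = Gᶜ) : Crit O σ X := by
  rcases hO with rfl | rfl
  · exact h
  · exact h.compl

lemma Tame.exists_starComb {c K : ℝ} (hc : 0 < c) (hc1 : c ≤ 1) (hK : 1 ≤ K) (j : ℕ) :
    ∃ ε₀ > 0, ∃ σ₀ > 0, ∀ {V : Type*} (G O : SimpleGraph V) (C : Finset (V → V))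
      (X X₁ Y : Finset V) (σ σ₁ c₀ n D s ε : ℝ), C.card ≤ j → Tame G C X (n ^ 4) σ c₀ K →
      (O = G ∨ O = Gᶜ) → X₁ ⊆ X → Crit G σ₁ X₁ → 0 < σ₁ → σ₁ ≤ σ₀ → 1 ≤ s → s ≤ n →
      1 ≤ D → 2 * D ≤ n → (X.card : ℝ) ≤ D * X₁.card → Y ⊆ X₁ → Y.Nonempty →
      (X₁.card : ℝ) ≤ s * Y.card → 1 ≤ n * ε → ε ≤ ε₀ → ε * s ≤ 1 →
      (∀ v ∈ Y, ((nb O Y v).card : ℝ) ≤ ε * Y.card) →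
      ∃ T P v k, StarComb O C Y T P v k ∧ 1 ≤ ε * (T.card : ℝ) ^ 2 ∧
        (Y.card : ℝ) ≤ k * (T.card : ℝ) ^ (1 + c) := by
  obtain ⟨ε₀, hε₀, σ₀, hσ₀, H⟩ := exists_starComb_of_sparse hc hc1
    (show 1 ≤ 4 * K by linarith) j
  refine ⟨ε₀, hε₀, σ₀, hσ₀, ?_⟩
  intro V G O C X X₁ Y σ σ₁ c₀ n D s ε hCj hX hO hX₁ hcrit hσ₁ hσ₁' hs hsn hD hDn hXD hY hYn hYs
    hnε hε hεs hdeg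
  have hn : 0 < n := by linarith
  have hε0 : 0 < ε := by
    by_contra h
    nlinarith
  have hY0 : (0 : ℝ) < Y.card := by exact_mod_cast hYn.card_pos
  have hXY : 2 * (X.card : ℝ) ≤ n * n * Y.card := by
    calc 2 * (X.card : ℝ) ≤ 2 * (D * (s * Y.card)) := by
          have : D * (X₁.card : ℝ) ≤ D * (s * Y.card) := by gcongr
          linarith
      _ = (2 * D) * s * Y.card := by ring
      _ ≤ n * n * Y.card := by gcongr
  have hcardY : (Y.card : ℝ) ≤ X.card := by exact_mod_cast Finset.card_le_card (hY.trans hX₁)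
  have hn1 : 1 ≤ n := by linarith
  refine H O C X₁ Y σ₁ n⁻¹ ε hCj hY hYn hσ₁ hσ₁'
    (fun Z hZ => (hcrit.of_eq_or hO).stab_le hZ) (by positivity) ?_ hε ?_ hdeg ?_ ?_
  · rw [inv_le_iff_one_le_mul₀ hn, mul_comm]
    exact hnε
  · calc ε * X₁.card ≤ ε * (s * Y.card) := by gcongr
      _ = ε * s * Y.card := by ring
      _ ≤ 1 * Y.card := by gcongr
      _ = _ := one_mul _
  · intro f hf x
    have h1 := hX.colour f hf x
    have h2 : ((Y.filter (fun y => f y = x)).card : ℝ) ≤ (X.filter (fun y => f y = x)).card := by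
      exact_mod_cast Finset.card_le_card (Finset.filter_subset_filter _ (hY.trans hX₁))
    rw [inv_mul_eq_div, le_div_iff₀ hn]
    set q : ℝ := ((Y.filter (fun y => f y = x)).card : ℝ)
    have hq : 0 ≤ q := by positivity
    have h3 : n ^ 4 * q ≤ n * n * Y.card := by
      calc n ^ 4 * q ≤ n ^ 4 * ((X.filter (fun y => f y = x)).card : ℝ) := by gcongr
        _ ≤ (X.card : ℝ) := h1
        _ ≤ _ := by linarith [Nat.cast_nonneg (α := ℝ) X.card]
    have h4 : n ^ 2 * q ≤ Y.card := by
      refine le_of_mul_le_mul_left ?_ (show 0 < n * n by positivity)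
      calc n * n * (n ^ 2 * q) = n ^ 4 * q := by ring
        _ ≤ _ := h3
    have h5 : n ≤ n ^ 2 := by nlinarith
    nlinarith
  · intro Z hZ hZc
    have h1 : (Y.card : ℝ) ≤ 2 * n * Z.card := by
      rw [inv_mul_eq_div, div_le_iff₀ hn] at hZc
      linarith
    obtain ⟨v, hv, h⟩ := hX.degree O hO Z (hZ.trans (hY.trans hX₁)) (by
      have h2 : n * n * (Y.card : ℝ) ≤ n * n * (2 * n * Z.card) := by gcongr
      have h3 : n ^ 3 * (Z.card : ℝ) ≤ n ^ 4 * Z.card := by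
        gcongr
        norm_num
      nlinarith)
    refine ⟨v, hv, ?_⟩
    have h2 : (n⁻¹ : ℝ) ^ (4 * K) = ((n ^ 4) ^ K)⁻¹ := by
      rw [Real.inv_rpow hn.le, Real.rpow_mul hn.le]
      norm_num
    rw [h2, inv_mul_eq_div, div_le_iff₀ (by positivity)]
    linarith

/-- A critical set in a graph with a forbidden induced subgraph has a linear sized subset which is
sparse or dense, and critical for a larger exponent. -/
lemma exists_sparse_crit {U : Type*} [Fintype U] (F : SimpleGraph U) {ε σ₁ : ℝ} (hε : 0 < ε)
    (hσ₁ : 0 < σ₁) : ∃ D ≥ 1, ∃ σ > 0, ∀ {V : Type*} (G : SimpleGraph V), ¬ Nonempty (F ↪g G) →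
      ∀ X, Crit G σ X → ∃ X₁ ⊆ X, Crit G σ₁ X₁ ∧ (X.card : ℝ) ≤ D * X₁.card ∧
        ∃ O, (O = G ∨ O = Gᶜ) ∧ ∀ v ∈ X₁, ((nb O X₁ v).card : ℝ) ≤ ε * X₁.card := by
  obtain ⟨δ, hδ, H⟩ := exists_sparse_subset F (half_pos hε)
  set δ' : ℝ := min δ 1
  have hδ' : 0 < δ' := by positivity
  have hδ1 : δ' ≤ 1 := min_le_right _ _
  obtain ⟨r, hr0, hr1, hr⟩ : ∃ r : ℝ, 0 < r ∧ r ≤ 1 ∧ 1 / 2 ≤ δ' ^ r := by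
    have h1 : Filter.Tendsto (fun r : ℝ => δ' ^ r) (nhds 0) (nhds (δ' ^ (0 : ℝ))) :=
      (Real.continuousAt_const_rpow hδ'.ne').tendsto
    rw [Real.rpow_zero] at h1
    have h2 := (h1.eventually (lt_mem_nhds (show (1 / 2 : ℝ) < 1 by norm_num)))
    obtain ⟨s, hs, h3⟩ := Metric.eventually_nhds_iff.1 h2
    refine ⟨min (s / 2) 1, by positivity, min_le_right _ _, (h3 ?_).le⟩
    rw [Real.dist_eq, sub_zero, abs_of_pos (by positivity)]
    exact (min_le_left _ _).trans_lt (by linarith)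
  refine ⟨2 / δ', by rw [ge_iff_le, le_div_iff₀ hδ']; linarith, r * σ₁ / 2, by positivity, ?_⟩
  intro V G hG X hX
  obtain ⟨Y, hYX, hYn, hYc, O, hO, hdeg⟩ := H G hG X hX.1
  have hX0 : (0 : ℝ) < X.card := by exact_mod_cast hX.1.card_pos
  have hY0 : (0 : ℝ) < Y.card := by exact_mod_cast hYn.card_pos
  obtain ⟨X₁, hX₁, hc, hle⟩ := hX.exists_crit hYX hYn (σ' := σ₁) (r := r) (by positivity)
    (by nlinarith) (by nlinarith [mul_pos hr0 hσ₁])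
  have hYc' : δ' * X.card ≤ Y.card := by
    refine le_trans ?_ hYc
    gcongr
    exact min_le_left _ _
  have h1 : (Y.card : ℝ) ≤ 2 * X₁.card := by
    have h2 : 1 / 2 ≤ ((Y.card : ℝ) / X.card) ^ r := by
      refine hr.trans ?_
      gcongr
      rwa [le_div_iff₀ hX0]
    nlinarith
  refine ⟨X₁, hX₁.trans hYX, hc, ?_, O, hO, fun v hv => ?_⟩
  · rw [div_mul_eq_mul_div, le_div_iff₀ hδ']
    linarith
  · have h2 := hdeg v (hX₁ hv)
    have h3 : ((nb O X₁ v).card : ℝ) ≤ (nb O Y v).card := by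
      exact_mod_cast Finset.card_le_card (nb_mono O hX₁ v)
    nlinarith

/-- The union of the blocks of a wide star-comb has a large critical subset. -/
lemma StarComb.exists_crit_subset {G O : SimpleGraph V} {C : Finset (V → V)} {X T : Finset V}
    {P : V → Finset V} {v : V} {k : ℕ} (h : StarComb O C X T P v k) {c σ σ' : ℝ}
    (hX : Crit G σ X) (hσ : 0 < σ) (hσ' : 2 * σ ≤ σ') (hT : T.Nonempty)
    (hw : (X.card : ℝ) ≤ k * (T.card : ℝ) ^ (1 + c)) :
    ∃ X' ⊆ X, ∃ f : V → V, (∀ b ∈ X', f b ∈ T ∧ b ∈ P (f b)) ∧ Crit G σ' X' ∧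
      (X.card : ℝ) ≤ (T.card : ℝ) ^ (2 * c) * X'.card ∧
      (k * T.card : ℝ) ≤ (T.card : ℝ) ^ c * X'.card := by
  have ht : (0 : ℝ) < T.card := by exact_mod_cast hT.card_pos
  have hX0 : (0 : ℝ) < X.card := by exact_mod_cast hX.1.card_pos
  set U := T.biUnion P with hU
  have hUX : U ⊆ X := Finset.biUnion_subset.2 h.block_subset
  have hUc : U.card = T.card * k := by
    rw [hU, Finset.card_biUnion]
    · rw [Finset.sum_congr rfl h.block_card, Finset.sum_const, smul_eq_mul]
    · intro a ha a' ha' hne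
      rw [Function.onFun, Finset.disjoint_left]
      intro b hb hb'
      exact h.not_adj_block a ha b hb a' ha' hne.symm (h.adj_block a' ha' b hb')
  have htc : 0 < (T.card : ℝ) ^ c := by positivity
  have hw' : (X.card : ℝ) ≤ (T.card : ℝ) ^ c * U.card := by
    rw [hUc]
    push_cast
    rw [Real.rpow_add ht, Real.rpow_one] at hw
    linarith
  have hU0 : (0 : ℝ) < U.card := by
    by_contra hneg
    nlinarith
  obtain ⟨X', hX', hc, hle⟩ := hX.exists_crit hUX (r := 1) (σ' := σ')
    (Finset.card_pos.1 (by exact_mod_cast hU0)) hσ (by linarith) (by linarith)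
  rw [Real.rpow_one] at hle
  have hXX' : (U.card : ℝ) ≤ (T.card : ℝ) ^ c * X'.card := by
    have h1 : 1 ≤ (T.card : ℝ) ^ c * ((U.card : ℝ) / X.card) := by
      rw [mul_div_assoc', le_div_iff₀ hX0, one_mul]
      exact hw'
    calc (U.card : ℝ) ≤ U.card * ((T.card : ℝ) ^ c * ((U.card : ℝ) / X.card)) :=
          le_mul_of_one_le_right hU0.le h1
      _ = (T.card : ℝ) ^ c * (U.card * ((U.card : ℝ) / X.card)) := by ring
      _ ≤ _ := by gcongr
  have hmem : ∀ b ∈ U, ∃ a, a ∈ T ∧ b ∈ P a := fun b hb => by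
    simpa [hU] using hb
  refine ⟨X', hX'.trans hUX, fun b => if hb : b ∈ U then (hmem b hb).choose else b, ?_, hc, ?_, ?_⟩
  · intro b hb
    simp only [dif_pos (hX' hb)]
    exact (hmem b (hX' hb)).choose_spec
  · calc (X.card : ℝ) ≤ (T.card : ℝ) ^ c * U.card := hw'
      _ ≤ (T.card : ℝ) ^ c * ((T.card : ℝ) ^ c * X'.card) := by gcongr
      _ = _ := by rw [two_mul, Real.rpow_add ht]; ring
  · rw [hUc] at hXX'
    push_cast at hXX'
    linarith

set_option maxHeartbeats 1000000 in
/-- A widest star-comb inside a tame set yields a tame subset of the union of its blocks, with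
respect to the additional colouring given by the blocks. -/
lemma Tame.descend {c K : ℝ} (hc : 0 < c) (hcK : 8 * K * c ≤ 1) (hK : 1 ≤ K) (j : ℕ) :
    ∃ ε₀ : ℝ, 0 < ε₀ ∧ ∃ σ₀ : ℝ, 0 < σ₀ ∧ ∀ {V : Type*} (G O : SimpleGraph V) (C : Finset (V → V))
      (X X₁ T : Finset V) (P : V → Finset V) (v : V) (k : ℕ) (σ σ₁ σ' c₀ n D : ℝ),
      C.card ≤ j → Tame G C X (n ^ 4) σ c₀ K → X₁ ⊆ X → Crit G σ₁ X₁ → 0 < σ₁ → σ₁ ≤ σ₀ →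
      2 * σ₁ ≤ σ' → 1 ≤ D → 2 * D ≤ n → (X.card : ℝ) ≤ D * X₁.card → StarComb O C X₁ T P v k →
      (X₁.card : ℝ) ≤ k * (T.card : ℝ) ^ (1 + c) → (∀ t, HasComb G C c X₁ t → t ≤ T.card) →
      (T.card : ℝ) ≤ (n ^ 4) ^ K → 2 ≤ T.card → 1 ≤ ε₀ * T.card →
      ∃ X' ⊆ X₁, ∃ f : V → V, (∀ b ∈ X', f b ∈ T ∧ b ∈ P (f b)) ∧
        Tame G (insert f C) X' (√(min (n ^ 4) T.card)) σ' (c / 2) (32 / c * K) := by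
  have hc8 : 8 * c ≤ 1 := by nlinarith
  obtain ⟨ε₀, hε₀, σ₀, hσ₀, H⟩ := Tame.exists_starComb (half_pos hc) (by linarith) hK j
  refine ⟨ε₀, hε₀, σ₀, hσ₀, ?_⟩
  intro V G O C X X₁ T P v k σ σ₁ σ' c₀ n D hCj hX hX₁ hcrit hσ₁ hσ₁' hσ' hD hDn hXD hcomb hw hmax
    htN ht2 htε
  have hTn : T.Nonempty := Finset.card_pos.1 (by omega)
  obtain ⟨X', hX', f, hf, hc', hA, hk⟩ := hcomb.exists_crit_subset hcrit hσ₁ hσ' hTn hw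
  refine ⟨X', hX', f, hf, ?_⟩
  have hXn : (X₁.card : ℝ) ≤ X.card := by exact_mod_cast Finset.card_le_card hX₁
  have hX'0 : (0 : ℝ) < X'.card := by exact_mod_cast hc'.1.card_pos
  have hX'1 : (X'.card : ℝ) ≤ X₁.card := by exact_mod_cast Finset.card_le_card hX'
  have ht2' : (2 : ℝ) ≤ T.card := by exact_mod_cast ht2
  set t : ℝ := (T.card : ℝ) with ht
  have ht0 : 0 < t := by linarith
  have ht1 : 1 ≤ t := by linarith
  have hn2 : 2 ≤ n := by linarith
  have hn0 : 0 < n := by linarith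
  have htpow : ∀ {a b : ℝ}, a ≤ b → t ^ a ≤ t ^ b := fun h =>
    Real.rpow_le_rpow_of_exponent_le ht1 h
  set A : ℝ := t ^ (2 * c) with hAdef
  have hA0 : 0 < A := by positivity
  have hAn : A ≤ n := by
    calc A ≤ ((n ^ 4) ^ K) ^ (2 * c) := by rw [hAdef]; gcongr
      _ = n ^ (8 * K * c) := by
        rw [← Real.rpow_natCast, ← Real.rpow_mul hn0.le, ← Real.rpow_mul hn0.le]
        congr 1
        push_cast
        ring
      _ ≤ n ^ (1 : ℝ) := Real.rpow_le_rpow_of_exponent_le (by linarith) hcK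
      _ = n := Real.rpow_one n
  have hAt : A ≤ √t := by
    rw [Real.sqrt_eq_rpow]
    exact htpow (by linarith)
  set N' : ℝ := √(min (n ^ 4) t) with hN'
  have hn4 : 1 ≤ n ^ 4 := one_le_pow₀ (by linarith)
  have hmin1 : 1 ≤ min (n ^ 4) t := le_min hn4 ht1
  have hN'1 : 1 ≤ N' := Real.one_le_sqrt.2 hmin1
  have hN'n : N' ≤ n ^ 2 := by
    refine Real.sqrt_le_iff.2 ⟨by positivity, (min_le_left _ _).trans (le_of_eq (by ring))⟩
  have hN't : N' ≤ √t := Real.sqrt_le_sqrt (min_le_right _ _)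
  have hts : √t * √t = t := Real.mul_self_sqrt ht0.le
  have hE : 32 ≤ 4 / c := by
    rw [le_div_iff₀ hc]
    linarith
  have hK' : 32 / c * K = 2 * (16 / c * K) := by ring
  have hN'K : ∀ a : ℝ, N' ^ (2 * a) = (min (n ^ 4) t) ^ a := by
    intro a
    rw [Real.rpow_mul (by positivity), Real.rpow_two, hN', Real.sq_sqrt (by linarith)]
  refine ⟨hc', ?_, ?_, ?_⟩
  · intro g hg x
    rcases Finset.mem_insert.1 hg with rfl | hg
    · have h1 : ((X'.filter (fun y => g y = x)).card : ℝ) ≤ k := by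
        rcases (X'.filter (fun y => g y = x)).eq_empty_or_nonempty with h | ⟨y, hy⟩
        · rw [h]
          simp
        · rw [Finset.mem_filter] at hy
          have hxT : x ∈ T := hy.2 ▸ (hf y hy.1).1
          rw [← hcomb.block_card x hxT]
          have : X'.filter (fun y => g y = x) ⊆ P x := by
            intro y' hy'
            rw [Finset.mem_filter] at hy'
            exact hy'.2 ▸ (hf y' hy'.1).2
          exact_mod_cast Finset.card_le_card this
      have h2 : t ^ c ≤ √t := by
        rw [Real.sqrt_eq_rpow]
        exact htpow (by linarith)
      have hst : 0 < √t := Real.sqrt_pos.2 ht0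
      refine le_trans (mul_le_mul hN't h1 (by positivity) hst.le) ?_
      refine le_of_mul_le_mul_left ?_ hst
      calc √t * (√t * k) = k * (√t * √t) := by ring
        _ = k * t := by rw [hts]
        _ ≤ t ^ c * X'.card := hk
        _ ≤ √t * X'.card := by gcongr
    · have h1 := hX.colour g hg x
      have h2 : ((X'.filter (fun y => g y = x)).card : ℝ) ≤ (X.filter (fun y => g y = x)).card := by
        exact_mod_cast Finset.card_le_card (Finset.filter_subset_filter _ (hX'.trans hX₁))
      set q : ℝ := ((X'.filter (fun y => g y = x)).card : ℝ)
      have hq : 0 ≤ q := by positivity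
      have h3 : n ^ 4 * q ≤ n ^ 2 * X'.card := by
        calc n ^ 4 * q ≤ n ^ 4 * ((X.filter (fun y => g y = x)).card : ℝ) := by gcongr
          _ ≤ (X.card : ℝ) := h1
          _ ≤ D * X₁.card := hXD
          _ ≤ n * (n * X'.card) := by
            refine mul_le_mul (by linarith) (hA.trans ?_) (by positivity) hn0.le
            gcongr
          _ = _ := by ring
      refine le_trans (mul_le_mul_of_nonneg_right hN'n hq) ?_
      refine le_of_mul_le_mul_left ?_ (show 0 < n ^ 2 by positivity)
      calc n ^ 2 * (n ^ 2 * q) = n ^ 4 * q := by ring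
        _ ≤ _ := h3
  · intro O' hO' Y hY hYc
    have hY0 : (0 : ℝ) < Y.card := by
      by_contra h
      nlinarith
    have hYn : Y.Nonempty := Finset.card_pos.1 (by exact_mod_cast hY0)
    by_cases hnt : n ≤ t ^ (4 / c)
    · obtain ⟨u, hu, h⟩ := hX.degree O' hO' Y (hY.trans (hX'.trans hX₁)) (by
        calc (X.card : ℝ) ≤ D * X₁.card := hXD
          _ ≤ D * (A * (N' * Y.card)) := by
            gcongr
            exact hA.trans (by gcongr)
          _ ≤ n * (n * (n ^ 2 * Y.card)) := by
            gcongr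
            linarith
          _ = _ := by ring)
      refine ⟨u, hu, (hX'1.trans (hXn.trans h)).trans ?_⟩
      gcongr
      have h16 : (n ^ 4 : ℝ) ≤ (min (n ^ 4) t) ^ (16 / c) := by
        have h1 : 1 ≤ 16 / c := by
          rw [le_div_iff₀ hc]
          linarith
        rcases le_total (n ^ 4) t with h2 | h2
        · rw [min_eq_left h2]
          calc n ^ 4 = (n ^ 4) ^ (1 : ℝ) := (Real.rpow_one _).symm
            _ ≤ _ := Real.rpow_le_rpow_of_exponent_le hn4 h1
        · rw [min_eq_right h2]
          calc n ^ 4 ≤ (t ^ (4 / c)) ^ 4 := by gcongr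
            _ = t ^ (16 / c) := by
              rw [← Real.rpow_natCast, ← Real.rpow_mul ht0.le]
              congr 1
              push_cast
              ring
      rw [hK', hN'K, Real.rpow_mul (by positivity)]
      gcongr
    · push Not at hnt
      have htE : t ≤ t ^ (4 / c) := by
        conv_lhs => rw [← Real.rpow_one t]
        exact htpow (by linarith)
      have htn4 : t ≤ n ^ 4 := by
        have : n ≤ n ^ 4 := le_self_pow₀ (by linarith) (by norm_num)
        linarith
      have hN't' : N' = √t := by rw [hN', min_eq_right htn4]
      by_contra hneg
      push Not at hneg
      have hX₁Y : (X₁.card : ℝ) ≤ t * Y.card := by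
        calc (X₁.card : ℝ) ≤ A * X'.card := hA
          _ ≤ √t * (√t * Y.card) := by
            rw [← hN't']
            refine mul_le_mul (hN't' ▸ hAt) hYc (by positivity) (by positivity)
          _ = t * Y.card := by rw [← mul_assoc, hts]
      have hsmall : ∀ u ∈ Y, ((nb O' Y u).card : ℝ) ≤ t ^ (-(4 / c)) * Y.card := by
        intro u hu
        have h1 := hneg u hu
        rw [hK', hN'K, min_eq_right htn4] at h1
        have h2 : t ^ (4 / c) * t ≤ t ^ (16 / c * K) := by
          calc t ^ (4 / c) * t = t ^ (4 / c + 1) := by rw [Real.rpow_add ht0, Real.rpow_one]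
            _ ≤ _ := by
              refine htpow ?_
              have h3 : 16 / c = 4 * (4 / c) := by ring
              rw [h3]
              nlinarith
        rw [Real.rpow_neg ht0.le, inv_mul_eq_div, le_div_iff₀ (by positivity)]
        have h4 : (X'.card : ℝ) ≤ t * Y.card := hX'1.trans hX₁Y
        refine le_of_mul_le_mul_right ?_ ht0
        calc ((nb O' Y u).card : ℝ) * t ^ (4 / c) * t = (nb O' Y u).card * (t ^ (4 / c) * t) := by
              ring
          _ ≤ (nb O' Y u).card * t ^ (16 / c * K) := by gcongr
          _ ≤ t * Y.card := by linarith
          _ = _ := mul_comm _ _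
      have hnε : t ^ (-(4 / c)) ≤ t⁻¹ := by
        rw [← Real.rpow_neg_one]
        exact htpow (by linarith)
      obtain ⟨T₂, P₂, v₂, k₂, hcomb₂, hT₂, hw₂⟩ := H G O' C X X₁ Y σ σ₁ c₀ n D t (t ^ (-(4 / c)))
        hCj hX hO' hX₁ hcrit hσ₁ hσ₁' ht1 (by linarith) hD hDn hXD (hY.trans hX') hYn hX₁Y
        (by
          rw [Real.rpow_neg ht0.le, ← div_eq_mul_inv, le_div_iff₀ (by positivity)]
          linarith)
        (hnε.trans (by
          rw [inv_le_iff_one_le_mul₀ ht0]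
          linarith))
        (by
          calc t ^ (-(4 / c)) * t ≤ t⁻¹ * t := by gcongr
            _ = 1 := inv_mul_cancel₀ ht0.ne')
        hsmall
      set s : ℝ := (T₂.card : ℝ) with hs
      have hs0 : 0 ≤ s := by positivity
      have hst : t ^ (4 / c) ≤ s ^ 2 := by
        rw [Real.rpow_neg ht0.le, inv_mul_eq_div, le_div_iff₀ (by positivity)] at hT₂
        linarith
      have hts' : t ≤ s ^ (c / 2) := by
        calc t = (t ^ (4 / c)) ^ (c / 4) := by
              rw [← Real.rpow_mul ht0.le, show 4 / c * (c / 4) = 1 by field_simp, Real.rpow_one]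
          _ ≤ (s ^ 2) ^ (c / 4) := by gcongr
          _ = s ^ (c / 2) := by
            rw [← Real.rpow_two, ← Real.rpow_mul hs0]
            congr 1
            ring
      have hs1 : t < s := by
        have h1 : t ^ (4 : ℝ) ≤ s ^ 2 := (htpow (by linarith)).trans hst
        have h2 : t ^ (4 : ℝ) = t ^ 4 := by exact_mod_cast Real.rpow_natCast t 4
        rw [h2] at h1
        by_contra h
        push Not at h
        have : s ^ 2 ≤ t ^ 2 := by gcongr
        nlinarith [sq_nonneg t]
      have := hmax T₂.card ⟨O', hO', T₂, P₂, v₂, k₂, hcomb₂.mono (hY.trans hX') subset_rfl, rfl, by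
        calc (X₁.card : ℝ) ≤ t * Y.card := hX₁Y
          _ ≤ s ^ (c / 2) * (k₂ * s ^ (1 + c / 2)) := by gcongr
          _ = k₂ * s ^ (1 + c) := by
            rw [show 1 + c = c / 2 + (1 + c / 2) by ring, Real.rpow_add (by linarith) (c / 2)]
            ring⟩
      have : s ≤ t := by rw [hs, ht]; exact_mod_cast this
      linarith
  · rintro t' ⟨O', hO', T₂, P₂, v₂, k₂, hcomb₂, hT₂, hw₂⟩
    have ht4 : (t' : ℝ) ≤ t ^ (4 : ℝ) := by
      by_contra hneg
      push Not at hneg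
      have h1 : t ≤ t ^ (4 : ℝ) := by
        conv_lhs => rw [← Real.rpow_one t]
        exact htpow (by norm_num)
      have h2 : A ≤ (t' : ℝ) ^ (c / 2) := by
        calc A = (t ^ (4 : ℝ)) ^ (c / 2) := by
              rw [← Real.rpow_mul ht0.le, hAdef]
              congr 1
              ring
          _ ≤ _ := by gcongr
      have := hmax t' ⟨O', hO', T₂, P₂, v₂, k₂,
        hcomb₂.mono hX' (Finset.subset_insert _ _), hT₂, by
        calc (X₁.card : ℝ) ≤ A * X'.card := hA
          _ ≤ (t' : ℝ) ^ (c / 2) * (k₂ * (t' : ℝ) ^ (1 + c / 2)) := by gcongr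
          _ = k₂ * (t' : ℝ) ^ (1 + c) := by
            rw [show 1 + c = c / 2 + (1 + c / 2) by ring, Real.rpow_add (by linarith) (c / 2)]
            ring⟩
      have : (t' : ℝ) ≤ t := by rw [ht]; exact_mod_cast this
      linarith
    refine ht4.trans ?_
    rw [hK', hN'K]
    have h16 : 4 * K ≤ 16 / c * K := by
      have h3 : 16 / c = 4 * (4 / c) := by ring
      rw [h3]
      nlinarith
    rcases le_total (n ^ 4) t with h2 | h2
    · rw [min_eq_left h2]
      calc t ^ (4 : ℝ) ≤ ((n ^ 4) ^ K) ^ (4 : ℝ) := by gcongr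
        _ = (n ^ 4) ^ (4 * K) := by rw [← Real.rpow_mul (by positivity), mul_comm]
        _ ≤ _ := Real.rpow_le_rpow_of_exponent_le hn4 h16
    · rw [min_eq_right h2]
      exact htpow (by linarith)

lemma HasComb.le_card {G : SimpleGraph V} {C : Finset (V → V)} {c : ℝ} {X : Finset V} {t : ℕ}
    (h : HasComb G C c X t) : t ≤ X.card := by
  obtain ⟨O, -, T, P, v, k, h, rfl, -⟩ := h
  exact Finset.card_le_card h.subset

set_option maxHeartbeats 1000000 in
/-- A tame set in a graph with a forbidden induced subgraph contains a large star-comb together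
with a tame subset of the union of its blocks. -/
lemma Tame.exists_tame {U : Type*} [Fintype U] (F : SimpleGraph U) {c₀ K : ℝ} (hc₀ : 0 < c₀)
    (hK : 1 ≤ K) (j : ℕ) : ∃ c : ℝ, 0 < c ∧ ∃ K' : ℝ, 1 ≤ K' ∧
      ∀ σ' T₀ : ℝ, 0 < σ' → 1 ≤ T₀ → ∃ σ : ℝ, 0 < σ ∧ ∃ N₀ : ℝ, 1 ≤ N₀ ∧ ∀ {V : Type*}
        (G : SimpleGraph V), ¬ Nonempty (F ↪g G) → ∀ (C : Finset (V → V)) (X : Finset V) (N : ℝ),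
        C.card ≤ j → N₀ ≤ N → Tame G C X N σ c₀ K →
        ∃ O, (O = G ∨ O = Gᶜ) ∧ ∃ T P v k, StarComb O C X T P v k ∧ T₀ ≤ T.card ∧
          ∃ X' ⊆ X, ∃ f : V → V, (∀ b ∈ X', f b ∈ T ∧ b ∈ P (f b)) ∧
            ∃ N', T₀ ≤ N' ∧ Tame G (insert f C) X' N' σ' c K' := by
  set c₁ : ℝ := min (c₀ / 2) (1 / (8 * K)) with hc₁
  have hc₁0 : 0 < c₁ := by positivity
  have hc₁c : c₁ ≤ c₀ / 2 := min_le_left _ _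
  have hc₁K : 8 * K * c₁ ≤ 1 := by
    have : c₁ ≤ 1 / (8 * K) := min_le_right _ _
    rw [le_div_iff₀ (by positivity)] at this
    linarith
  have hc₁1 : c₁ ≤ 1 := by nlinarith
  obtain ⟨ε₁, hε₁, σ₁, hσ₁, H₁⟩ := Tame.exists_starComb hc₁0 hc₁1 hK j
  obtain ⟨ε₂, hε₂, σ₂, hσ₂, H₂⟩ := Tame.descend hc₁0 hc₁K hK j
  refine ⟨c₁ / 2, by positivity, 32 / c₁ * K, ?_, ?_⟩
  · have : 1 ≤ 32 / c₁ := by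
      rw [le_div_iff₀ hc₁0]
      linarith
    nlinarith
  intro σ' T₀ hσ' hT₀
  set T₁ : ℝ := 2 + T₀ ^ 2 + 1 / ε₂ with hT₁
  have hε₂' : 0 < 1 / ε₂ := by positivity
  have hT₁1 : 1 ≤ T₁ := by nlinarith
  set ε : ℝ := min ε₁ (1 / T₁ ^ 2) with hε
  have hε0 : 0 < ε := by positivity
  have hεT : ε * T₁ ^ 2 ≤ 1 := by
    have : ε ≤ 1 / T₁ ^ 2 := min_le_right _ _
    rwa [le_div_iff₀ (by positivity)] at this
  have hε1 : ε ≤ 1 := by nlinarith [one_le_pow₀ (n := 2) hT₁1]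
  set σ₃ : ℝ := min (σ' / 2) (min σ₁ σ₂) with hσ₃
  have hσ₃0 : 0 < σ₃ := by positivity
  have hσ₃' : 2 * σ₃ ≤ σ' := by
    have : σ₃ ≤ σ' / 2 := min_le_left _ _
    linarith
  have hσ₃₁ : σ₃ ≤ σ₁ := (min_le_right _ _).trans (min_le_left _ _)
  have hσ₃₂ : σ₃ ≤ σ₂ := (min_le_right _ _).trans (min_le_right _ _)
  obtain ⟨D, hD, σ, hσ, H₃⟩ := exists_sparse_crit F hε0 hσ₃0
  have hD0 : 0 < D := by linarith
  set B : ℝ := 2 * D + 1 / ε + T₀ ^ 2 + D ^ (2 / c₀) with hB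
  have hB1 : 0 < 1 / ε := by positivity
  have hB2 : 0 < D ^ (2 / c₀) := by positivity
  have hB3 : 1 ≤ B := by nlinarith
  refine ⟨σ, hσ, B ^ 4, one_le_pow₀ hB3, ?_⟩
  intro V G hG C X N hCj hN hX
  obtain ⟨n, hn0, rfl⟩ : ∃ n : ℝ, 0 ≤ n ∧ n ^ 4 = N := by
    have hN0 : 0 ≤ N := le_trans (by positivity) hN
    refine ⟨N ^ (1 / 4 : ℝ), by positivity, ?_⟩
    rw [← Real.rpow_natCast, ← Real.rpow_mul hN0]
    norm_num
  have hBn : B ≤ n := le_of_pow_le_pow_left₀ (by norm_num) hn0 hN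
  have hT₀2 : 1 ≤ T₀ ^ 2 := one_le_pow₀ hT₀
  have hnn : n ≤ n ^ 4 := le_self_pow₀ (by linarith) (by norm_num)
  obtain ⟨X₁, hX₁, hcrit, hXD, O, hO, hdeg⟩ := H₃ G hG X hX.crit
  have hDn : 2 * D ≤ n := by linarith
  obtain ⟨T, P, v, k, hcomb, hT, hw⟩ := H₁ G O C X X₁ X₁ σ σ₃ c₀ n D 1 ε hCj hX hO hX₁ hcrit hσ₃0
    hσ₃₁ le_rfl (by linarith) hD hDn hXD subset_rfl hcrit.1 (by rw [one_mul])
    (by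
      rw [← div_le_iff₀ hε0]
      linarith)
    (min_le_left _ _) (by linarith) hdeg
  have hcombT : HasComb G C c₁ X₁ T.card := ⟨O, hO, T, P, v, k, hcomb, rfl, hw⟩
  obtain ⟨t, ht, hmax⟩ := Finset.exists_max_image
    ((Finset.range (X₁.card + 1)).filter (HasComb G C c₁ X₁)) id
    ⟨T.card, Finset.mem_filter.2 ⟨Finset.mem_range.2 (Nat.lt_succ_of_le hcombT.le_card), hcombT⟩⟩
  have hmax' : ∀ t', HasComb G C c₁ X₁ t' → t' ≤ t := fun t' ht' =>
    hmax t' (Finset.mem_filter.2 ⟨Finset.mem_range.2 (Nat.lt_succ_of_le ht'.le_card), ht'⟩)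
  have hTt : T₁ ≤ t := by
    have h1 : (T.card : ℝ) ≤ t := by exact_mod_cast hmax' _ hcombT
    refine le_trans ?_ h1
    refine le_of_pow_le_pow_left₀ (n := 2) (by norm_num) (by positivity) ?_
    exact le_of_mul_le_mul_left (hεT.trans hT) hε0
  have ht1 : (1 : ℝ) ≤ t := hT₁1.trans hTt
  obtain ⟨O₂, hO₂, T₂, P₂, v₂, k₂, hcomb₂, rfl, hw₂⟩ := (Finset.mem_filter.1 ht).2
  have htN : (T₂.card : ℝ) ≤ (n ^ 4) ^ K := by
    by_cases hDt : D ≤ (T₂.card : ℝ) ^ (c₀ / 2)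
    · refine hX.comb _ ⟨O₂, hO₂, T₂, P₂, v₂, k₂, hcomb₂.mono hX₁ subset_rfl, rfl, ?_⟩
      calc (X.card : ℝ) ≤ D * X₁.card := hXD
        _ ≤ (T₂.card : ℝ) ^ (c₀ / 2) * (k₂ * (T₂.card : ℝ) ^ (1 + c₁)) := by gcongr
        _ = k₂ * (T₂.card : ℝ) ^ (c₀ / 2 + (1 + c₁)) := by
          rw [Real.rpow_add (by linarith) (c₀ / 2)]
          ring
        _ ≤ k₂ * (T₂.card : ℝ) ^ (1 + c₀) := by
          refine mul_le_mul_of_nonneg_left ?_ (by positivity)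
          exact Real.rpow_le_rpow_of_exponent_le ht1 (by linarith)
    · push Not at hDt
      calc (T₂.card : ℝ) = ((T₂.card : ℝ) ^ (c₀ / 2)) ^ (2 / c₀) := by
            rw [← Real.rpow_mul (by positivity), show c₀ / 2 * (2 / c₀) = 1 by field_simp,
              Real.rpow_one]
        _ ≤ D ^ (2 / c₀) := by gcongr
        _ ≤ n ^ 4 := by linarith
        _ = (n ^ 4) ^ (1 : ℝ) := (Real.rpow_one _).symm
        _ ≤ (n ^ 4) ^ K := Real.rpow_le_rpow_of_exponent_le (by linarith) hK
  obtain ⟨X', hX', f, hf, htame⟩ := H₂ G O₂ C X X₁ T₂ P₂ v₂ k₂ σ σ₃ σ' c₀ n D hCj hX hX₁ hcrit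
    hσ₃0 hσ₃₂ hσ₃' hD hDn hXD hcomb₂ hw₂ hmax' htN
    (by
      have : (2 : ℝ) ≤ T₂.card := by linarith
      exact_mod_cast this)
    (by
      rw [mul_comm, ← div_le_iff₀ hε₂]
      linarith)
  refine ⟨O₂, hO₂, T₂, P₂, v₂, k₂, hcomb₂.mono hX₁ subset_rfl, by nlinarith, X', hX'.trans hX₁, f,
    hf, _, ?_, htame⟩
  refine Real.le_sqrt_of_sq_le (le_min ?_ ?_) <;> linarith

lemma Crit.mono {G : SimpleGraph V} {σ σ' : ℝ} {X : Finset V} (h : Crit G σ X) (hσ : 0 < σ)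
    (hσ' : σ ≤ σ') : Crit G σ' X := by
  refine ⟨h.1, fun Z hZ => ?_⟩
  rcases Z.eq_empty_or_nonempty with rfl | hZ0
  · rw [Finset.card_empty, Nat.cast_zero, Real.zero_rpow (by linarith), zero_mul]
    positivity
  have hz : (0 : ℝ) < Z.card := by exact_mod_cast hZ0.card_pos
  have hx : (0 : ℝ) < X.card := by exact_mod_cast h.1.card_pos
  have hzx : (Z.card : ℝ) ≤ X.card := by exact_mod_cast Finset.card_le_card hZ
  have hsplit : ∀ a : ℝ, 0 < a → a ^ σ' = a ^ (σ' - σ) * a ^ σ := fun a ha => by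
    rw [← Real.rpow_add ha, sub_add_cancel]
  rw [hsplit _ hz, hsplit _ hx, mul_assoc, mul_assoc]
  exact mul_le_mul (Real.rpow_le_rpow hz.le hzx (by linarith)) (h.2 Z hZ) (by positivity)
    (by positivity)

lemma Tame.mono {G : SimpleGraph V} {C : Finset (V → V)} {X : Finset V} {N σ σ' c K : ℝ}
    (h : Tame G C X N σ c K) (hσ : 0 < σ) (hσ' : σ ≤ σ') : Tame G C X N σ' c K :=
  ⟨h.crit.mono hσ hσ', h.colour, h.degree, h.comb⟩

/-- The map `φ` embeds `H[S]` into `G[X]` as an induced subgraph whose vertices have distinct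
colours, for every colouring in `C`. -/
structure Rainbow {W : Type*} (G : SimpleGraph V) (H : SimpleGraph W) (C : Finset (V → V))
    (X : Finset V) (S : Finset W) (φ : W → V) : Prop where
  mem : ∀ w ∈ S, φ w ∈ X
  inj : Set.InjOn φ S
  adj : ∀ w ∈ S, ∀ w' ∈ S, G.Adj (φ w) (φ w') ↔ H.Adj w w'
  colour : ∀ c ∈ C, Set.InjOn (c ∘ φ) S

section

variable {W : Type*} {G : SimpleGraph V} {H : SimpleGraph W} {C C' : Finset (V → V)}
  {X X' T : Finset V} {S : Finset W} {φ : W → V}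

lemma Rainbow.mono (h : Rainbow G H C X S φ) (hX : X ⊆ X') (hC : C' ⊆ C) :
    Rainbow G H C' X' S φ :=
  ⟨fun w hw => hX (h.mem w hw), h.inj, h.adj, fun c hc => h.colour c (hC hc)⟩

lemma Rainbow.compl (h : Rainbow G H C X S φ) : Rainbow Gᶜ Hᶜ C X S φ := by
  refine ⟨h.mem, h.inj, fun w hw w' hw' => ?_, h.colour⟩
  rw [compl_adj, compl_adj, h.adj w hw w' hw', ne_eq, ne_eq, h.inj.eq_iff hw hw']

lemma StarComb.adj_iff {P : V → Finset V} {v a b a' : V} {k : ℕ} (h : StarComb G C X T P v k)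
    (ha : a ∈ T) (ha' : a' ∈ T) (hb : b ∈ P a') : G.Adj a b ↔ a' = a := by
  constructor
  · intro hab
    by_contra hne
    exact h.not_adj_block a' ha' b hb a ha (fun h => hne h.symm) hab
  · rintro rfl
    exact h.adj_block _ ha b hb

lemma StarComb.ne_block {P : V → Finset V} {v a b a' : V} {k : ℕ} (h : StarComb G C X T P v k)
    (ha : a ∈ T) (ha' : a' ∈ T) (hb : b ∈ P a') : a ≠ b := by
  rintro rfl
  exact (h.center_block a' ha' a hb).2 (h.adj_center a ha)

/-- A rainbow copy of a forest in the blocks of a star-comb extends to one more leaf. -/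
lemma Rainbow.extend {P : V → Finset V} {v : V} {k : ℕ} (hcomb : StarComb G C X T P v k)
    (hX' : X' ⊆ X) {f : V → V} (hf : ∀ b ∈ X', f b ∈ T ∧ b ∈ P (f b)) {u : W} (hu : u ∈ S)
    (hleaf : ∀ w ∈ S, ∀ w' ∈ S, H.Adj u w → H.Adj u w' → w = w')
    (h : Rainbow G H (insert f C) X' (S.erase u) φ) (hST : S.card ≤ T.card) :
    ∃ φ', Rainbow G H C X S φ' := by
  obtain ⟨a, haT, ha⟩ : ∃ a ∈ T, ∀ w ∈ S.erase u, f (φ w) = a ↔ H.Adj u w := by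
    by_cases hex : ∃ w ∈ S.erase u, H.Adj u w
    · obtain ⟨w, hw, huw⟩ := hex
      refine ⟨f (φ w), (hf _ (h.mem w hw)).1, fun w' hw' => ⟨fun heq => ?_, fun huw' => ?_⟩⟩
      · have := h.colour f (Finset.mem_insert_self _ _) hw' hw heq
        exact this ▸ huw
      · rw [hleaf w (Finset.mem_of_mem_erase hw) w' (Finset.mem_of_mem_erase hw') huw huw']
    · push Not at hex
      have hlt : ((S.erase u).image (fun w => f (φ w))).card < T.card := by
        refine lt_of_le_of_lt Finset.card_image_le (lt_of_lt_of_le ?_ hST)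
        exact Finset.card_erase_lt_of_mem hu
      obtain ⟨a, haT, ha⟩ := Finset.exists_mem_notMem_of_card_lt_card hlt
      refine ⟨a, haT, fun w hw => ⟨fun heq => ?_, fun huw => absurd huw (hex w hw)⟩⟩
      exact absurd (Finset.mem_image.2 ⟨w, hw, heq⟩) ha
  have hadj : ∀ w ∈ S.erase u, G.Adj a (φ w) ↔ H.Adj u w := fun w hw => by
    have := hf _ (h.mem w hw)
    rw [hcomb.adj_iff haT this.1 this.2, ha w hw]
  have hne : ∀ w ∈ S.erase u, a ≠ φ w := fun w hw => by
    have := hf _ (h.mem w hw)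
    exact hcomb.ne_block haT this.1 this.2
  have hcol : ∀ c ∈ C, ∀ w ∈ S.erase u, c a ≠ c (φ w) := fun c hc w hw => by
    have := hf _ (h.mem w hw)
    exact hcomb.colour c hc a haT _ this.1 _ this.2
  have hupd : ∀ w ∈ S.erase u, Function.update φ u a w = φ w := fun w hw =>
    Function.update_of_ne (Finset.ne_of_mem_erase hw) _ _
  have hcases : ∀ w ∈ S, w = u ∨ w ∈ S.erase u := fun w hw => by
    by_cases hwu : w = u
    · exact Or.inl hwu
    · exact Or.inr (Finset.mem_erase.2 ⟨hwu, hw⟩)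
  have hinj : ∀ (g : V → V), (∀ w ∈ S.erase u, g a ≠ g (φ w)) → Set.InjOn (g ∘ φ) (S.erase u) →
      Set.InjOn (g ∘ Function.update φ u a) S := by
    intro g h1 h2 w hw w' hw' heq
    simp only [Function.comp_apply] at heq
    rcases hcases w hw with rfl | hw1 <;> rcases hcases w' hw' with rfl | hw1'
    · rfl
    · rw [Function.update_self, hupd _ hw1'] at heq
      exact absurd heq (h1 _ hw1')
    · rw [Function.update_self, hupd _ hw1] at heq
      exact absurd heq.symm (h1 _ hw1)
    · rw [hupd _ hw1, hupd _ hw1'] at heq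
      exact h2 hw1 hw1' heq
  refine ⟨Function.update φ u a, ?_, hinj id hne h.inj, ?_, fun c hc =>
    hinj c (hcol c hc) (h.colour c (Finset.mem_insert_of_mem hc))⟩
  · intro w hw
    rcases hcases w hw with rfl | hw1
    · rw [Function.update_self]
      exact hcomb.subset haT
    · rw [hupd _ hw1]
      exact hX' (h.mem w hw1)
  · intro w hw w' hw'
    rcases hcases w hw with rfl | hw1 <;> rcases hcases w' hw' with rfl | hw1'
    · simp
    · rw [Function.update_self, hupd _ hw1', hadj _ hw1']
    · rw [Function.update_self, hupd _ hw1, G.adj_comm, H.adj_comm, hadj _ hw1]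
    · rw [hupd _ hw1, hupd _ hw1', h.adj _ hw1 _ hw1']

lemma exists_leaf [Finite W] (hH : H.IsAcyclic) (hS : S.Nonempty) :
    ∃ u ∈ S, ∀ w ∈ S, ∀ w' ∈ S, H.Adj u w → H.Adj u w' → w = w' := by
  have hac := hH.induce (S : Set W)
  have : Nonempty (S : Set W) := hS.to_subtype
  obtain ⟨u, v, p, hp, hmax⟩ := Walk.exists_isPath_forall_isPath_length_le_length
    (H.induce (S : Set W))
  have key : ∀ w : (S : Set W), (H.induce (S : Set W)).Adj u w → w = p.snd := by
    intro w huw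
    by_cases hw : w ∈ p.support
    · exact hac.eq_snd_of_adj_start hp huw hw
    · have := hmax _ _ (Walk.cons huw.symm p) (hp.cons hw)
      simp at this
  refine ⟨u, u.2, fun w hw w' hw' h h' => ?_⟩
  have h1 := key ⟨w, hw⟩ h
  have h2 := key ⟨w', hw'⟩ h'
  exact congrArg Subtype.val (h1.trans h2.symm)

end

/-- A sufficiently tame set contains a rainbow copy of each forest, in the graph or its
complement. -/
lemma Tame.exists_rainbow {W U : Type*} [Finite W] [Fintype U] {H : SimpleGraph W}
    (hH : H.IsAcyclic) (F : SimpleGraph U) (m : ℕ) : ∀ (S S' : Finset W), S.card + S'.card = m →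
      ∀ (c K : ℝ) (j : ℕ), 0 < c → 1 ≤ K → ∃ σ : ℝ, 0 < σ ∧ ∃ N₀ : ℝ, 1 ≤ N₀ ∧ ∀ {V : Type*}
        (G : SimpleGraph V), ¬ Nonempty (F ↪g G) → ∀ (C : Finset (V → V)) (X : Finset V) (N : ℝ),
        C.card ≤ j → N₀ ≤ N → Tame G C X N σ c K →
        (∃ φ, Rainbow G H C X S φ) ∨ ∃ φ, Rainbow Gᶜ H C X S' φ := by
  induction m with
  | zero =>
    intro S S' hm c K j hc hK
    obtain rfl : S = ∅ := Finset.card_eq_zero.1 (by omega)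
    refine ⟨1, one_pos, 1, le_rfl, fun G _ C X N _ _ hX => Or.inl ?_⟩
    obtain ⟨x, -⟩ := hX.crit.1
    exact ⟨fun _ => x, by simp, by simp, by simp, by simp⟩
  | succ m ih =>
    intro S S' hm c K j hc hK
    rcases S.eq_empty_or_nonempty with rfl | hS
    · refine ⟨1, one_pos, 1, le_rfl, fun G _ C X N _ _ hX => Or.inl ?_⟩
      obtain ⟨x, -⟩ := hX.crit.1
      exact ⟨fun _ => x, by simp, by simp, by simp, by simp⟩
    rcases S'.eq_empty_or_nonempty with rfl | hS'
    · refine ⟨1, one_pos, 1, le_rfl, fun G _ C X N _ _ hX => Or.inr ?_⟩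
      obtain ⟨x, -⟩ := hX.crit.1
      exact ⟨fun _ => x, by simp, by simp, by simp, by simp⟩
    obtain ⟨u, hu, hleaf⟩ := exists_leaf hH hS
    obtain ⟨u', hu', hleaf'⟩ := exists_leaf hH hS'
    obtain ⟨c', hc', K', hK', hstep⟩ := Tame.exists_tame F hc hK j
    obtain ⟨σ₁, hσ₁, N₁, hN₁, h₁⟩ := ih (S.erase u) S'
      (by rw [Finset.card_erase_of_mem hu]; have := hS.card_pos; omega) c' K' (j + 1) hc' hK'
    obtain ⟨σ₂, hσ₂, N₂, hN₂, h₂⟩ := ih S (S'.erase u')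
      (by rw [Finset.card_erase_of_mem hu']; have := hS'.card_pos; omega) c' K' (j + 1) hc' hK'
    obtain ⟨σ, hσ, N₀, hN₀, H₀⟩ := hstep (min σ₁ σ₂) (N₁ + N₂ + S.card + S'.card) (by positivity)
      (by
        have h3 : (0 : ℝ) ≤ S.card := by positivity
        have h4 : (0 : ℝ) ≤ S'.card := by positivity
        linarith)
    refine ⟨σ, hσ, N₀, hN₀, fun G hG C X N hC hN hX => ?_⟩
    obtain ⟨O, hO, T, P, v, k, hcomb, hT, X', hX', f, hf, N', hN', htame⟩ := H₀ G hG C X N hC hN hX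
    have hsc : (0 : ℝ) ≤ S.card := by positivity
    have hsc' : (0 : ℝ) ≤ S'.card := by positivity
    have hC' : (insert f C).card ≤ j + 1 := (Finset.card_insert_le _ _).trans (by omega)
    have hST : S.card ≤ T.card := by
      have : (S.card : ℝ) ≤ T.card := by linarith
      exact_mod_cast this
    have hST' : S'.card ≤ T.card := by
      have : (S'.card : ℝ) ≤ T.card := by linarith
      exact_mod_cast this
    have hpos : 0 < min σ₁ σ₂ := by positivity
    rcases hO with rfl | rfl
    · rcases h₁ O hG (insert f C) X' N' hC' (by linarith) (htame.mono hpos (min_le_left _ _)) with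
        ⟨φ, hφ⟩ | ⟨φ, hφ⟩
      · exact Or.inl (hφ.extend hcomb hX' hf hu hleaf hST)
      · exact Or.inr ⟨φ, hφ.mono hX' (Finset.subset_insert _ _)⟩
    · rcases h₂ G hG (insert f C) X' N' hC' (by linarith) (htame.mono hpos (min_le_right _ _)) with
        ⟨φ, hφ⟩ | ⟨φ, hφ⟩
      · exact Or.inl ⟨φ, hφ.mono hX' (Finset.subset_insert _ _)⟩
      · exact Or.inr (hφ.extend hcomb hX' hf hu' hleaf' hST')

section

variable {W : Type*} {G : SimpleGraph V} {H : SimpleGraph W} {C : Finset (V → V)}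
  {X X' T : Finset V} {φ : W → V}

/-- A rainbow copy of `H` in the blocks of a star-comb gives an induced star-expansion of `H`. -/
lemma StarComb.nonempty_starExpansion [Fintype W] {P : V → Finset V} {v : V} {k : ℕ}
    (hcomb : StarComb G C X T P v k) {f : V → V} (hf : ∀ b ∈ X', f b ∈ T ∧ b ∈ P (f b))
    (h : Rainbow G H (insert f C) X' Finset.univ φ) : Nonempty (starExpansion H ↪g G) := by
  have hT : ∀ w, f (φ w) ∈ T := fun w => (hf _ (h.mem w (Finset.mem_univ w))).1
  have hP : ∀ w, φ w ∈ P (f (φ w)) := fun w => (hf _ (h.mem w (Finset.mem_univ w))).2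
  have hfinj : ∀ w w', f (φ w) = f (φ w') ↔ w = w' := fun w w' =>
    (h.colour f (Finset.mem_insert_self _ _)).eq_iff (by simp) (by simp)
  have hinj : ∀ w w', φ w = φ w' ↔ w = w' := fun w w' => h.inj.eq_iff (by simp) (by simp)
  have hne : ∀ w w', f (φ w) ≠ φ w' := fun w w' => hcomb.ne_block (hT w) (hT w') (hP w')
  have hvb : ∀ w, v ≠ φ w := fun w => (hcomb.center_block _ (hT w) _ (hP w)).1
  have hva : ∀ w, v ≠ f (φ w) := fun w => (hcomb.adj_center _ (hT w)).ne
  have hadjv : ∀ w, G.Adj v (f (φ w)) := fun w => hcomb.adj_center _ (hT w)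
  have hnadjv : ∀ w, ¬ G.Adj v (φ w) := fun w => (hcomb.center_block _ (hT w) _ (hP w)).2
  have hnadj : ∀ w w', ¬ G.Adj (f (φ w)) (f (φ w')) := fun w w' hadj =>
    hcomb.stable (hT w) (hT w') hadj.ne hadj
  have hadj : ∀ w w', G.Adj (f (φ w)) (φ w') ↔ w' = w := fun w w' => by
    rw [hcomb.adj_iff (hT w) (hT w') (hP w'), hfinj]
  have hadjH : ∀ w w', G.Adj (φ w) (φ w') ↔ H.Adj w w' := fun w w' =>
    h.adj w (Finset.mem_univ w) w' (Finset.mem_univ w')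
  set ψ : W ⊕ W ⊕ Unit → V := Sum.elim φ (Sum.elim (fun w => f (φ w)) fun _ => v) with hψ
  have hinjective : Function.Injective ψ := by
    rintro (a | a | a) (b | b | b) hab
    all_goals simp only [hψ, Sum.elim_inl, Sum.elim_inr] at hab
    · rw [(hinj a b).1 hab]
    · exact absurd hab.symm (hne b a)
    · exact absurd hab.symm (hvb a)
    · exact absurd hab (hne a b)
    · rw [(hfinj a b).1 hab]
    · exact absurd hab.symm (hva a)
    · exact absurd hab (hvb b)
    · exact absurd hab (hva b)
    · rfl
  have hadjacency : ∀ x y, G.Adj (ψ x) (ψ y) ↔ (starExpansion H).Adj x y := by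
    rintro (a | a | a) (b | b | b)
    all_goals simp only [hψ, Sum.elim_inl, Sum.elim_inr, starExpansion,
      fromRel_adj]
    · rw [hadjH, H.adj_comm b a, or_self]
      exact ⟨fun hab => ⟨fun heq => hab.ne (Sum.inl_injective heq), hab⟩, fun hab => hab.2⟩
    · rw [G.adj_comm, hadj]
      simp
    · rw [G.adj_comm]
      simp [hnadjv]
    · rw [hadj]
      simp
    · simp [hnadj]
    · rw [G.adj_comm]
      simp [hadjv]
    · simp [hnadjv]
    · simp [hadjv]
    · simp
  exact ⟨⟨⟨ψ, hinjective⟩, fun {x y} => hadjacency x y⟩⟩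

end

lemma stab_le_alphaNum [Fintype V] (G : SimpleGraph V) (X : Finset V) : stab G X ≤ alphaNum G := by
  obtain ⟨I, -, hI, hc⟩ := exists_stab G X
  rw [← hc]
  exact IsClique.card_le_cliqueNum (tc := by rwa [isClique_compl])

lemma stab_compl_le_omegaNum [Fintype V] (G : SimpleGraph V) (X : Finset V) :
    stab Gᶜ X ≤ omegaNum G := by
  have := stab_le_alphaNum Gᶜ X
  rwa [alphaNum, compl_compl] at this

lemma two_le_mu (G : SimpleGraph V) {X : Finset V} (h : 2 ≤ X.card) : 2 ≤ mu G X := by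
  obtain ⟨a, ha, b, hb, hab⟩ := Finset.one_lt_card.1 h
  have hsub : ({a, b} : Finset V) ⊆ X := by
    intro x hx
    rcases Finset.mem_insert.1 hx with rfl | hx
    · exact ha
    · exact Finset.mem_singleton.1 hx ▸ hb
  have hpos : ∀ O : SimpleGraph V, 0 < stab O X := fun O => stab_pos O ⟨a, ha⟩
  have key : ∀ O : SimpleGraph V, ¬ O.Adj a b → 2 ≤ stab O X := by
    intro O hO
    rw [← Finset.card_pair hab]
    refine le_stab hsub ?_
    simp [IsIndepSet, Set.pairwise_insert, hO, O.adj_comm b a]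
  by_cases hadj : G.Adj a b
  · have := key Gᶜ (by simp [hadj])
    have := hpos G
    unfold mu
    nlinarith
  · have := key G hadj
    have := hpos Gᶜ
    unfold mu
    nlinarith

/-- A large set with few vertices in stable sets and cliques is tame. -/
lemma Crit.tame {G : SimpleGraph V} {X : Finset V} {σ s : ℝ} (hX : Crit G s X) (hs : 0 < s)
    (hsσ : s ≤ σ) (hs1 : s ≤ 3 / 4) (hmu : (mu G X : ℝ) < (X.card : ℝ) ^ s) :
    Tame G ∅ X ((X.card : ℝ) ^ (1 / 4 : ℝ)) σ 1 4 := by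
  have hx : (0 : ℝ) < X.card := by exact_mod_cast hX.1.card_pos
  have hx1 : (1 : ℝ) ≤ X.card := by exact_mod_cast hX.1.card_pos
  have hN4 : ((X.card : ℝ) ^ (1 / 4 : ℝ)) ^ (4 : ℝ) = X.card := by
    rw [← Real.rpow_mul hx.le]
    norm_num
  refine ⟨hX.mono hs hsσ, by simp, ?_, ?_⟩
  · intro O hO Y hY hYc
    have hYc' : (X.card : ℝ) ^ (3 / 4 : ℝ) ≤ Y.card := by
      refine le_of_mul_le_mul_left ?_ (show 0 < (X.card : ℝ) ^ (1 / 4 : ℝ) by positivity)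
      rw [← Real.rpow_add hx]
      norm_num at hYc ⊢
      exact hYc
    have hOmu : stab O X ≤ mu G X := by
      rcases hO with rfl | rfl
      · exact Nat.le_mul_of_pos_right _ (stab_pos _ hX.1)
      · exact Nat.le_mul_of_pos_left _ (stab_pos _ hX.1)
    have hlt : stab O X < Y.card := by
      have h1 : (X.card : ℝ) ^ s ≤ (X.card : ℝ) ^ (3 / 4 : ℝ) :=
        Real.rpow_le_rpow_of_exponent_le hx1 hs1
      have h2 : (stab O X : ℝ) ≤ mu G X := by exact_mod_cast hOmu
      have : (stab O X : ℝ) < Y.card := by linarith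
      exact_mod_cast this
    have hnot : ¬ O.IsIndepSet (Y : Set V) := fun h => by
      have := le_stab hY h
      omega
    rw [IsIndepSet, Set.Pairwise] at hnot
    push Not at hnot
    obtain ⟨a, ha, b, hb, -, hab⟩ := hnot
    refine ⟨a, ha, ?_⟩
    rw [hN4]
    have : 0 < (nb O Y a).card := Finset.card_pos.2 ⟨b, mem_nb.2 ⟨hb, hab⟩⟩
    have : (1 : ℝ) ≤ (nb O Y a).card := by exact_mod_cast this
    nlinarith
  · intro t ht
    rw [hN4]
    exact_mod_cast ht.le_card

end ErdosHajnal

/-- For a forest `H`, with `H₁` the star-expansion of `H` and `H₂` the star-expansion of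
`H̄`, the set `{H₁, H₂, H̄₁, H̄₂}` has the Erdős–Hajnal property. -/
theorem stmt_12 {W : Type*} [Fintype W] (H : SimpleGraph W) (hH : H.IsAcyclic) :
    ∃ τ : ℝ, 0 < τ ∧
      ∀ (V : Type) [Fintype V] (G : SimpleGraph V),
        ¬ Nonempty (starExpansion H ↪g G) →
        ¬ Nonempty (starExpansion Hᶜ ↪g G) →
        ¬ Nonempty ((starExpansion H)ᶜ ↪g G) →
        ¬ Nonempty ((starExpansion Hᶜ)ᶜ ↪g G) →
        (Fintype.card V : ℝ) ^ τ ≤ ((max (alphaNum G) (omegaNum G) : ℕ) : ℝ) := by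
  classical
  obtain ⟨c, hc, K, hK, hstep⟩ := Tame.exists_tame (starExpansion H) (c₀ := 1) (K := 4) one_pos
    (by norm_num) 0
  obtain ⟨σ', hσ', N', hN', hrain⟩ := Tame.exists_rainbow hH (starExpansion H) _ Finset.univ
    Finset.univ rfl c K 1 hc hK
  obtain ⟨σ, hσ, N₀, hN₀, htame⟩ := hstep σ' N' hσ' hN'
  obtain ⟨m, hm⟩ := pow_unbounded_of_one_lt (N₀ ^ 4) (one_lt_two (α := ℝ))
  set s : ℝ := min (min σ (3 / 4)) (1 / (m + 1)) with hs
  have hs0 : 0 < s := by positivity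
  have hsσ : s ≤ σ := (min_le_left _ _).trans (min_le_left _ _)
  have hs1 : s ≤ 3 / 4 := (min_le_left _ _).trans (min_le_right _ _)
  have hN₀s : (N₀ ^ 4) ^ s ≤ 2 := by
    have h1 : N₀ ^ 4 ≤ 2 ^ (m + 1) := hm.le.trans (pow_le_pow_right₀ one_le_two (by omega))
    calc (N₀ ^ 4) ^ s ≤ (N₀ ^ 4) ^ (1 / (m + 1) : ℝ) :=
          Real.rpow_le_rpow_of_exponent_le (one_le_pow₀ hN₀) (min_le_right _ _)
      _ ≤ (2 ^ (m + 1)) ^ (1 / (m + 1) : ℝ) := by gcongr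
      _ = 2 := by
        rw [← Real.rpow_natCast, ← Real.rpow_mul (by norm_num)]
        push_cast
        rw [mul_one_div_cancel (by positivity), Real.rpow_one]
  refine ⟨s / 2, by positivity, fun V _ G hG₁ hG₂ hG₃ hG₄ => ?_⟩
  by_contra hlt
  push Not at hlt
  have hVn : (Finset.univ : Finset V).Nonempty := by
    by_contra hne
    rw [Finset.not_nonempty_iff_eq_empty, ← Finset.card_eq_zero, Finset.card_univ] at hne
    rw [hne, Nat.cast_zero, Real.zero_rpow (by positivity)] at hlt
    exact absurd hlt (not_lt.2 (Nat.cast_nonneg _))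
  obtain ⟨X, -, hX, hmu⟩ := exists_crit G hs0 hVn
  have hV0 : (0 : ℝ) < Fintype.card V := by
    exact_mod_cast Finset.card_univ (α := V) ▸ hVn.card_pos
  rw [Finset.card_univ] at hmu
  have hmuV : (mu G Finset.univ : ℝ) < (Fintype.card V : ℝ) ^ s := by
    have h1 : (stab G Finset.univ : ℝ) ≤ ((max (alphaNum G) (omegaNum G) : ℕ) : ℝ) := by
      exact_mod_cast (stab_le_alphaNum G _).trans (le_max_left _ _)
    have h2 : (stab Gᶜ Finset.univ : ℝ) ≤ ((max (alphaNum G) (omegaNum G) : ℕ) : ℝ) := by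
      exact_mod_cast (stab_compl_le_omegaNum G _).trans (le_max_right _ _)
    have h3 : (Fintype.card V : ℝ) ^ s
        = (Fintype.card V : ℝ) ^ (s / 2) * (Fintype.card V : ℝ) ^ (s / 2) := by
      rw [← Real.rpow_add hV0, add_halves]
    rw [h3, mu, Nat.cast_mul]
    exact mul_lt_mul'' (h1.trans_lt hlt) (h2.trans_lt hlt) (by positivity) (by positivity)
  have hVs : 0 < (Fintype.card V : ℝ) ^ s := by positivity
  have hX0 : (0 : ℝ) < X.card := by exact_mod_cast hX.1.card_pos
  have hmuX : (mu G X : ℝ) < (X.card : ℝ) ^ s := by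
    refine lt_of_mul_lt_mul_left (hmu.trans_lt ?_) hVs.le
    rw [mul_comm ((Fintype.card V : ℝ) ^ s)]
    have hXs : 0 < (X.card : ℝ) ^ s := by positivity
    gcongr
  have hX2 : 2 ≤ X.card := by
    by_contra hlt2
    have h1 : X.card = 1 := by
      have := hX.1.card_pos
      omega
    have h2 := mu_pos G hX.1
    rw [h1, Nat.cast_one, Real.one_rpow] at hmuX
    have h3 : mu G X < 1 := by exact_mod_cast hmuX
    omega
  have hNX : N₀ ≤ (X.card : ℝ) ^ (1 / 4 : ℝ) := by
    have h1 : N₀ ^ 4 ≤ X.card := by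
      by_contra hneg
      push Not at hneg
      have h2 : (X.card : ℝ) ^ s ≤ (N₀ ^ 4) ^ s := by gcongr
      have h3 : (2 : ℝ) ≤ mu G X := by exact_mod_cast two_le_mu G hX2
      linarith
    calc N₀ = (N₀ ^ 4) ^ (1 / 4 : ℝ) := by
          rw [← Real.rpow_natCast, ← Real.rpow_mul (by linarith)]
          norm_num
      _ ≤ _ := by gcongr
  obtain ⟨O, hO, T, P, v, k, hcomb, -, X', -, f, hf, N, hN, hX'⟩ := htame G hG₁ ∅ X _ (by simp) hNX
    (hX.tame hs0 hsσ hs1 hmuX)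
  have hr := hrain G hG₁ (insert f ∅) X' N (by simp) hN hX'
  rcases hO with rfl | rfl
  · rcases hr with ⟨φ, hφ⟩ | ⟨φ, hφ⟩
    · exact hG₁ (hcomb.nonempty_starExpansion hf hφ)
    · have hφ' := hφ.compl
      rw [compl_compl] at hφ'
      exact hG₂ (hcomb.nonempty_starExpansion hf hφ')
  · rcases hr with ⟨φ, hφ⟩ | ⟨φ, hφ⟩
    · obtain ⟨e⟩ := hcomb.nonempty_starExpansion hf hφ.compl
      have e' := Embedding.complEquiv e
      rw [compl_compl] at e'
      exact hG₄ ⟨e'⟩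
    · obtain ⟨e⟩ := hcomb.nonempty_starExpansion hf hφ
      have e' := Embedding.complEquiv e
      rw [compl_compl] at e'
      exact hG₃ ⟨e'⟩
end
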